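/- Bound for the quantile of the test statistic under the alternative: Assume the multiplicative measurement error model with M_c[φ](t) ≠ 0 for all t, ess sup_t |1_{[−k,k]}(t) w(t)/M_c[φ](t)| < ∞ for every k > 0, φ ∈ L^∞(x^{2c−1}) ∩ L¹(x^{4(c−1)}) and f₀ ∈ L¹(x^{4(c−1)}). Let β ∈ (0,1), n ≥ 2 and k ∈ ℕ. If the density f of X lies in L¹(x^{4(c−1)}) and for some τ > 0 the separation condition q_k²(f − f₀) ≥ 2τ + 2(18 c_φ V⁽²⁾_{f|φ} + 138986 (L_{β/4}/β)(√(2k)/n)) L_{β/4}^{1/2} √(Δ₄(k))/n + 112 c_φ V_{f|φ} (L_{β/4}/β) √(Δ∞(k))/n holds, then P(q̂_k² < τ) ≤ β. -/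

import Mathlib

open MeasureTheory Set Filter
open scoped ENNReal

noncomputable section

namespace MultErr

/-- The complex power `x ↦ x^(c-1+2πit)`. -/
def cpw (c t x : ℝ) : ℂ := (x : ℂ) ^ ((c : ℂ) - 1 + 2 * Real.pi * Complex.I * (t : ℂ))

/-- The Mellin transform `M_c[g](t) = ∫₀^∞ x^(c-1+2πit) g(x) dx` of a real-valued `g`. -/
def mellinT (c : ℝ) (g : ℝ → ℝ) (t : ℝ) : ℂ := ∫ x in Ioi (0 : ℝ), cpw c t x * (g x : ℂ)

/-- The multiplicative convolution `(f*g)(y) = ∫₀^∞ f(x) g(y/x) x⁻¹ dx`. -/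
def mconv (f g : ℝ → ℝ) (y : ℝ) : ℝ := ∫ x in Ioi (0 : ℝ), f x * g (y / x) / x

/-- The weighted `L¹`-norm `‖h‖_{L¹(xᵃ)} = ∫₀^∞ |h(x)| xᵃ dx`. -/
def wnorm1 (a : ℝ) (h : ℝ → ℝ) : ℝ := ∫ x in Ioi (0 : ℝ), |h x| * x ^ a

/-- Membership in `L¹((0,∞), xᵃ dx)`. -/
def MemW1 (a : ℝ) (h : ℝ → ℝ) : Prop := IntegrableOn (fun x => |h x| * x ^ a) (Ioi 0)

/-- Membership in `L²((0,∞), xᵃ dx)`. -/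
def MemW2 (a : ℝ) (h : ℝ → ℝ) : Prop := IntegrableOn (fun x => h x ^ 2 * x ^ a) (Ioi 0)

/-- The weighted `L^∞`-norm `ess sup_{x>0} |h(x)| xᵃ`, valued in `ℝ≥0∞`. -/
def wnormInf (a : ℝ) (h : ℝ → ℝ) : ℝ≥0∞ :=
  essSup (fun x => ENNReal.ofReal (|h x| * x ^ a)) (volume.restrict (Ioi 0))

/-- Real-valued weighted `L^∞`-norm. -/
def wnormInfR (a : ℝ) (h : ℝ → ℝ) : ℝ := (wnormInf a h).toReal

/-- A Lebesgue probability density on `(0,∞)`. -/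
def IsDensity (h : ℝ → ℝ) : Prop :=
  (∀ x, 0 ≤ h x) ∧ (∀ x ≤ (0 : ℝ), h x = 0) ∧ IntegrableOn h (Ioi 0) ∧
    (∫ x in Ioi (0 : ℝ), h x) = 1

/-- The class `𝔻`: densities on `(0,∞)` lying in `L¹(x^(c-1)) ∩ L²(x^(2c-1))`. -/
def regD (c : ℝ) (h : ℝ → ℝ) : Prop := IsDensity h ∧ MemW1 (c - 1) h ∧ MemW2 (2 * c - 1) h

/-- A measurable symmetric probability density on `ℝ`. -/
def IsSymmDensity (w : ℝ → ℝ) : Prop :=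
  Measurable w ∧ (∀ t, 0 ≤ w t) ∧ (∀ t, w (-t) = w t) ∧ Integrable w ∧ (∫ t : ℝ, w t) = 1

/-- `ess sup_t 1_{[-k,k]}(t) w(t)/|M_c[φ](t)|`, valued in `ℝ≥0∞`. -/
def winf (c k : ℝ) (w φ : ℝ → ℝ) : ℝ≥0∞ :=
  essSup (fun t => ENNReal.ofReal ((Icc (-k) k).indicator
    (fun t => w t / ‖mellinT c φ t‖) t)) volume

/-- `L_γ = 1 - log γ`. -/
def Lq (γ : ℝ) : ℝ := 1 - Real.log γ

/-- `Δ₄(k) = ∫_{-k}^k w⁴(t)/|M_c[φ](t)|⁴ dt`. -/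
def Δ4 (c k : ℝ) (w φ : ℝ → ℝ) : ℝ :=
  ∫ t in Icc (-k) k, w t ^ 4 / ‖mellinT c φ t‖ ^ 4

/-- `Δ∞(k) = ‖1_{[-k,k]} w/M_c[φ]‖_∞⁴`. -/
def Δinf (c k : ℝ) (w φ : ℝ → ℝ) : ℝ := (winf c k w φ).toReal ^ 4

/-- `c_φ = (‖φ‖_{L^∞(x^{2c-1})}/‖φ‖_{L¹(x^{2(c-1)})}) ∨ 1`. -/
def cphi (c : ℝ) (φ : ℝ → ℝ) : ℝ := max (wnormInfR (2 * c - 1) φ / wnorm1 (2 * (c - 1)) φ) 1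

/-- `V_{h|φ} = ‖h*φ‖_{L¹(x^{2(c-1)})} ∨ 1`. -/
def Vc (c : ℝ) (h φ : ℝ → ℝ) : ℝ := max (wnorm1 (2 * (c - 1)) (mconv h φ)) 1

/-- `V⁽²⁾_{h|φ} = ‖h*φ‖_{L¹(x^{4(c-1)})} ∨ 1`. -/
def V2c (c : ℝ) (h φ : ℝ → ℝ) : ℝ := max (wnorm1 (4 * (c - 1)) (mconv h φ)) 1

/-- `V_{h|φ}(p) = ‖h*φ‖_{L¹(x^{2p(c-1)})} ∨ 1`. -/
def Vpc (c p : ℝ) (h φ : ℝ → ℝ) : ℝ := max (wnorm1 (2 * p * (c - 1)) (mconv h φ)) 1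

/-- `q_k²(h) = ∫_{-k}^k |M_c[h](t)|² w²(t) dt`. -/
def qk2 (c k : ℝ) (w h : ℝ → ℝ) : ℝ :=
  ∫ t in Icc (-k) k, ‖mellinT c h t‖ ^ 2 * w t ^ 2

/-- `q²(h) = ∫_ℝ |M_c[h](t)|² w²(t) dt`. -/
def q2 (c : ℝ) (w h : ℝ → ℝ) : ℝ :=
  ∫ t : ℝ, ‖mellinT c h t‖ ^ 2 * w t ^ 2

/-- The weight `w²(t)/|M_c[φ](t)|²`. -/
def wgt (c : ℝ) (w φ : ℝ → ℝ) (t : ℝ) : ℝ := w t ^ 2 / ‖mellinT c φ t‖ ^ 2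

variable {Ω : Type*} [MeasurableSpace Ω]

/-- The U-part `T̂_k` of the test statistic. -/
def That (c k : ℝ) (w φ : ℝ → ℝ) {n : ℕ} (Y : Fin n → Ω → ℝ) (ω : Ω) : ℂ :=
  ((n : ℂ) * ((n : ℂ) - 1))⁻¹ *
    ∑ j : Fin n, ∑ l : Fin n,
      if j ≠ l then
        ∫ t in Icc (-k) k, cpw c t (Y j ω) * cpw c (-t) (Y l ω) * (wgt c w φ t : ℂ)
      else 0

/-- The linear part `Ŝ_k` of the test statistic. -/
def Shat (c k : ℝ) (w φ f₀ : ℝ → ℝ) {n : ℕ} (Y : Fin n → Ω → ℝ) (ω : Ω) : ℂ :=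
  (n : ℂ)⁻¹ * ∑ j : Fin n,
    ∫ t in Icc (-k) k,
      cpw c t (Y j ω) * (starRingEnd ℂ) (mellinT c (mconv f₀ φ) t) * (wgt c w φ t : ℂ)

/-- The test statistic `q̂_k² = T̂_k - 2Ŝ_k + q_k²(f₀)`. -/
def qhat (c k : ℝ) (w φ f₀ : ℝ → ℝ) {n : ℕ} (Y : Fin n → Ω → ℝ) (ω : Ω) : ℝ :=
  (That c k w φ Y ω - 2 * Shat c k w φ f₀ Y ω).re + qk2 c k w f₀

/-- The critical value `τ_k(α)`. -/
def τcrit (c k α : ℝ) (w φ f₀ : ℝ → ℝ) (n : ℕ) : ℝ :=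
  (18 * cphi c φ * V2c c f₀ φ
      + 69493 * (Real.sqrt (2 * k) / (n : ℝ)) * (Lq (α / 2) / α)) *
    Real.sqrt (Lq (α / 2)) * Real.sqrt (Δ4 c k w φ) / (n : ℝ)
  + 52 * Vc c f₀ φ * cphi c φ * Lq (α / 2) * Real.sqrt (Δinf c k w φ) / (n : ℝ)

/-- `Y₁,…,Y_n` are i.i.d. with Lebesgue density `g`. -/
def IID (P : Measure Ω) {n : ℕ} (Y : Fin n → Ω → ℝ) (g : ℝ → ℝ) : Prop :=
  ProbabilityTheory.iIndepFun (m := fun _ : Fin n => (inferInstance : MeasurableSpace ℝ)) Y P ∧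
  ∀ j, Measurable (Y j) ∧
    Measure.map (Y j) P = (volume : Measure ℝ).withDensity (fun y => ENNReal.ofReal (g y))


/-- Regularity-function assumptions: `s ≥ 1` symmetric non-decreasing with `s(t) → ∞`,
and `w/s` symmetric non-increasing with `w(t)/s(t) → 0` as `|t| → ∞`. -/
def RegFun (w s : ℝ → ℝ) : Prop :=
  (∀ t, 1 ≤ s t) ∧ (∀ t, s (-t) = s t) ∧ MonotoneOn s (Ici 0) ∧
    Tendsto s atTop atTop ∧
    (∀ t, w (-t) / s (-t) = w t / s t) ∧ AntitoneOn (fun t => w t / s t) (Ici 0) ∧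
    Tendsto (fun t => w t / s t) atTop (nhds 0)

/-- Membership in the regularity class `E_s^R`. -/
def inEs (c R : ℝ) (s h : ℝ → ℝ) : Prop :=
  MemW1 (c - 1) h ∧ MemW2 (2 * c - 1) h ∧
    (∫ t : ℝ, s t ^ 2 * ‖mellinT c h t‖ ^ 2) ≤ R ^ 2

/-- Membership in the class `D_v` of densities with uniformly bounded moment constant. -/
def inDv (c v : ℝ) (φ h : ℝ → ℝ) : Prop :=
  regD c h ∧ MemW1 (4 * (c - 1)) h ∧ V2c c h φ ≤ v

/-- `ρ_{k,s}² = (w²(k)/s²(k)) ∨ (1/n)(√Δ₄(k) ∨ √Δ∞(k))`. -/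
def ρks2 (c : ℝ) (w φ s : ℝ → ℝ) (k : ℝ) (n : ℕ) : ℝ :=
  max (w k ^ 2 / s k ^ 2)
    ((1 / (n : ℝ)) * max (Real.sqrt (Δ4 c k w φ)) (Real.sqrt (Δinf c k w φ)))

/-- `η_k² = 1 ∨ √(2k)/(dn)`. -/
def ηk2 (k d : ℝ) (n : ℕ) : ℝ := max 1 (Real.sqrt (2 * k) / (d * (n : ℝ)))

/-- The Bonferroni-corrected critical value `τ_{k|α}` for a collection of cardinality `m`. -/
def τbon (c k α : ℝ) (m : ℕ) (p : ℝ) (w φ f₀ : ℝ → ℝ) (n : ℕ) : ℝ :=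
  (18 * cphi c φ * Vpc c p f₀ φ
      + 69493 * (Real.sqrt (2 * k) * (m : ℝ) ^ ((1 : ℝ) / (p - 1)) / (n : ℝ))
          * (Lq (α / (2 * (m : ℝ))) ^ 2 / α)) *
    Real.sqrt (Lq (α / (2 * (m : ℝ)))) * Real.sqrt (Δ4 c k w φ) / (n : ℝ)
  + 52 * Vc c f₀ φ * cphi c φ * Lq (α / (2 * (m : ℝ))) * Real.sqrt (Δinf c k w φ) / (n : ℝ)

/-- The adaptive factor `δ_𝒦 = (1 + log |𝒦|)^{-1/2}`. -/
def δK (m : ℕ) : ℝ := (1 + Real.log (m : ℝ)) ^ (-(1 : ℝ) / 2)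

/-- `r_{k,s}² = (w²(k)/s²(k)) ∨ (1/n)(δ_𝒦⁻¹ √Δ₄(k) ∨ δ_𝒦⁻² √Δ∞(k))`. -/
def rks2 (c : ℝ) (w φ s : ℝ → ℝ) (k : ℝ) (m n : ℕ) : ℝ :=
  max (w k ^ 2 / s k ^ 2)
    ((1 / (n : ℝ)) * max ((δK m)⁻¹ * Real.sqrt (Δ4 c k w φ))
        (((δK m)⁻¹) ^ 2 * Real.sqrt (Δinf c k w φ)))

/-- `η_{𝒦,s}² = 1 ∨ √(2k₀)|𝒦|^{1/(p-1)}/(dn δ_𝒦⁴)`. -/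
def ηKs2 (k₀ : ℝ) (m : ℕ) (p d : ℝ) (n : ℕ) : ℝ :=
  max 1 (Real.sqrt (2 * k₀) * (m : ℝ) ^ ((1 : ℝ) / (p - 1)) / (d * (n : ℝ) * δK m ^ 4))

/-- The truncated complex power `b(y,t) = 1_{[0,δ]}(y^{c-1}) y^{c-1+2πit}`. -/
def bfun (c δ : ℝ) (y t : ℝ) : ℂ := if y ^ (c - 1) ∈ Icc (0 : ℝ) δ then cpw c t y else 0

/-- `E[b(Y,t)]` for `Y` with density `g` on `(0,∞)`. -/
def Ebfun (c δ : ℝ) (g : ℝ → ℝ) (t : ℝ) : ℂ := ∫ y in Ioi (0 : ℝ), bfun c δ y t * (g y : ℂ)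

/-- The bounded kernel `h_k^b`. -/
def hkb (c δ k : ℝ) (w φ g : ℝ → ℝ) (x y : ℝ) : ℂ :=
  ∫ t in Icc (-k) k,
    (bfun c δ y t - Ebfun c δ g t) * (bfun c δ x (-t) - Ebfun c δ g (-t)) * (wgt c w φ t : ℂ)

/-- `ṽ(x,t) = x^{c-1+2πit} - E[Y^{c-1+2πit}]` for `Y` with density `g`. -/
def vtil (c : ℝ) (g : ℝ → ℝ) (x t : ℝ) : ℂ := cpw c t x - mellinT c g t

/-- The full (unbounded) kernel `h_k` of the canonical U-statistic. -/
def hkfull (c k : ℝ) (w φ g : ℝ → ℝ) (x y : ℝ) : ℂ :=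
  ∫ t in Icc (-k) k, vtil c g x t * vtil c g y (-t) * (wgt c w φ t : ℂ)

variable {Ω' : Type*} [MeasurableSpace Ω']

/-- The U-statistic with kernel `h` built from the sample `Y`. -/
def Ustat (h : ℝ → ℝ → ℂ) {n : ℕ} (Y : Fin n → Ω' → ℝ) (ω : Ω') : ℂ :=
  ((n : ℂ) * ((n : ℂ) - 1))⁻¹ *
    ∑ j : Fin n, ∑ l : Fin n, if j ≠ l then h (Y j ω) (Y l ω) else 0

/-- The centred linear statistic `W_k` (with `g = f*φ` and `g₀ = f₀*φ`). -/
def Wstat (c k : ℝ) (w φ g g₀ : ℝ → ℝ) {n : ℕ} (Y : Fin n → Ω' → ℝ) (ω : Ω') : ℂ :=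
  (n : ℂ)⁻¹ * ∑ j : Fin n,
    ∫ t in Icc (-k) k,
      vtil c g (Y j ω) t * (starRingEnd ℂ) (mellinT c g t - mellinT c g₀ t) * (wgt c w φ t : ℂ)

/-- Mellin transform of a complex-valued function. -/
def mellinTC (c : ℝ) (g : ℝ → ℂ) (t : ℝ) : ℂ := ∫ x in Ioi (0 : ℝ), cpw c t x * g x

/-- Multiplicative convolution of complex-valued functions. -/
def mconvC (f g : ℝ → ℂ) (y : ℝ) : ℂ := ∫ x in Ioi (0 : ℝ), f x * g (y / x) / (x : ℂ)

/-- Weighted `L¹`-norm of a complex-valued function. -/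
def wnorm1C (a : ℝ) (h : ℝ → ℂ) : ℝ := ∫ x in Ioi (0 : ℝ), ‖h x‖ * x ^ a

/-- Membership in `L¹((0,∞), xᵃ dx)` for complex-valued functions. -/
def MemW1C (a : ℝ) (h : ℝ → ℂ) : Prop :=
  AEStronglyMeasurable h (volume.restrict (Ioi 0)) ∧
    IntegrableOn (fun x => ‖h x‖ * x ^ a) (Ioi 0)

/-- Weighted `L²`-norm of a complex-valued function. -/
def wnorm2C (a : ℝ) (h : ℝ → ℂ) : ℝ :=
  Real.sqrt (∫ x in Ioi (0 : ℝ), ‖h x‖ ^ 2 * x ^ a)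

/-- Membership in `L²((0,∞), xᵃ dx)` for complex-valued functions. -/
def MemW2C (a : ℝ) (h : ℝ → ℂ) : Prop :=
  AEStronglyMeasurable h (volume.restrict (Ioi 0)) ∧
    IntegrableOn (fun x => ‖h x‖ ^ 2 * x ^ a) (Ioi 0)

/-- Weighted `L^∞`-norm of a complex-valued function, valued in `ℝ≥0∞`. -/
def wnormInfC (a : ℝ) (h : ℝ → ℂ) : ℝ≥0∞ :=
  essSup (fun x => ENNReal.ofReal (‖h x‖ * x ^ a)) (volume.restrict (Ioi 0))


set_option linter.unusedSectionVars false
set_option linter.unusedVariables false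


section AbstractU
variable {E : Type*} [MeasurableSpace E]

/-- Product measure. -/
abbrev nuP (μ : Measure E) (m : ℕ) : Measure (Fin m → E) := Measure.pi fun _ => μ

/-- snoc as a map on pairs. -/
def snc {m : ℕ} (p : (Fin m → E) × E) : Fin (m+1) → E :=
  Fin.snoc (α := fun _ => E) p.1 p.2

/-- Recursive accumulation of increments. -/
def acc (D : ∀ m : ℕ, (Fin m → E) → E → ℝ) : ∀ m : ℕ, (Fin m → E) → ℝ
  | 0, _ => 0
  | m+1, y => acc D m (Fin.init (α := fun _ => E) y) + D m (Fin.init (α := fun _ => E) y) (y (Fin.last m))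

lemma acc_snc (D : ∀ m : ℕ, (Fin m → E) → E → ℝ) {m : ℕ} (p : (Fin m → E) × E) :
    acc D (m+1) (snc p) = acc D m p.1 + D m p.1 p.2 := by
  simp [acc, snc]

lemma mp_snc (μ : Measure E) [IsProbabilityMeasure μ] (m : ℕ) :
    MeasurePreserving (snc (m := m)) ((nuP μ m).prod μ) (nuP μ (m+1)) := by
  have h1 := (measurePreserving_piFinSuccAbove (fun _ : Fin (m+1) => μ) (Fin.last m)).symm
  have h2 := h1.comp (Measure.measurePreserving_swap (μ := nuP μ m) (ν := μ))
  convert h2 using 1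
  ext p i
  simp [snc, MeasurableEquiv.piFinSuccAbove_symm_apply, Fin.insertNthEquiv, Fin.insertNth_last']

lemma exists_snc {m : ℕ} (y : Fin (m+1) → E) :
    ∃ p : (Fin m → E) × E, snc p = y :=
  ⟨(Fin.init (α := fun _ => E) y, y (Fin.last m)), by simp [snc]⟩

lemma measurable_acc {D : ∀ m : ℕ, (Fin m → E) → E → ℝ}
    (hD : ∀ m, Measurable (fun p : (Fin m → E) × E => D m p.1 p.2)) (n : ℕ) :
    Measurable (acc D n) := by
  induction n with
  | zero => exact measurable_const
  | succ m ih =>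
    have hi : Measurable (fun y : Fin (m+1) → E => Fin.init (α := fun _ => E) y) := by
      refine measurable_pi_lambda _ fun i => ?_
      exact measurable_pi_apply _
    have h2 : Measurable (fun y : Fin (m+1) → E => (Fin.init (α := fun _ => E) y, y (Fin.last m))) :=
      hi.prodMk (measurable_pi_apply _)
    exact (ih.comp hi).add ((hD m).comp h2)

lemma acc_add (D D' : ∀ m : ℕ, (Fin m → E) → E → ℝ) (n : ℕ) (y : Fin n → E) :
    acc (fun m y x => D m y x + D' m y x) n y = acc D n y + acc D' n y := by
  induction n with
  | zero => simp [acc]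
  | succ m ih => simp only [acc, ih]; ring

lemma acc_smul (a : ℝ) (D : ∀ m : ℕ, (Fin m → E) → E → ℝ) (n : ℕ) (y : Fin n → E) :
    acc (fun m y x => a * D m y x) n y = a * acc D n y := by
  induction n with
  | zero => simp [acc]
  | succ m ih => simp only [acc, ih]; ring

lemma acc_mono {D D' : ∀ m : ℕ, (Fin m → E) → E → ℝ} (h : ∀ m y x, D m y x ≤ D' m y x)
    (n : ℕ) (y : Fin n → E) : acc D n y ≤ acc D' n y := by
  induction n with
  | zero => simp [acc]
  | succ m ih => simp only [acc]; exact add_le_add (ih _) (h _ _ _)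

lemma acc_const (f : E → ℝ) (n : ℕ) (y : Fin n → E) :
    acc (fun _ _ x => f x) n y = ∑ j, f (y j) := by
  induction n with
  | zero => simp [acc]
  | succ m ih => simp only [acc, ih, Fin.sum_univ_castSucc]; rfl

/-- symmetric double sum -/
lemma sum_sum_eq_acc (A : E → E → ℝ) (hA : ∀ x y, A x y = A y x) (n : ℕ) (y : Fin n → E) :
    ∑ i, ∑ j, A (y i) (y j) = ∑ i, A (y i) (y i)
      + 2 * acc (fun m y x => ∑ j : Fin m, A (y j) x) n y := by
  induction n with
  | zero => simp [acc]
  | succ m ih =>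
    obtain ⟨⟨y', x⟩, rfl⟩ := exists_snc y
    have := ih y'
    rw [acc_snc]
    simp only [Fin.sum_univ_castSucc, snc, Fin.snoc_castSucc, Fin.snoc_last, Finset.sum_add_distrib]
    rw [this]
    simp only [hA x]
    ring

lemma acc_sum_le (f : E → ℝ) (hf : ∀ x, 0 ≤ f x) (n : ℕ) (y : Fin n → E) :
    acc (fun m y _ => ∑ j : Fin m, f (y j)) n y ≤ n * ∑ j, f (y j) := by
  induction n with
  | zero => simp [acc]
  | succ m ih =>
    obtain ⟨⟨y', x⟩, rfl⟩ := exists_snc y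
    have := ih y'
    rw [acc_snc]
    simp only [Fin.sum_univ_castSucc, snc, Fin.snoc_castSucc, Fin.snoc_last]
    push_cast
    have := hf x
    have h3 : (0:ℝ) ≤ m := Nat.cast_nonneg m
    nlinarith

lemma lint_succ (μ : Measure E) [IsProbabilityMeasure μ] {m : ℕ} {F : (Fin (m+1) → E) → ℝ≥0∞}
    (hF : Measurable F) :
    ∫⁻ y, F y ∂(nuP μ (m+1)) = ∫⁻ y, ∫⁻ x, F (snc (y, x)) ∂μ ∂(nuP μ m) := by
  rw [← (mp_snc μ m).lintegral_comp hF, lintegral_prod]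
  exact (hF.comp (mp_snc μ m).measurable).aemeasurable

lemma exp_ineq (x : ℝ) : Real.exp (x - x^2/2) ≤ 1 + x + x^2/2 := by
  rcases le_total 0 x with hx | hx
  · have h1 : x - x^2/2 ≤ Real.log (1 + x) := by
      have hd : ∀ y ∈ Ioi (0:ℝ), True := by simp
      have key : MonotoneOn (fun y : ℝ => Real.log (1+y) - (y - y^2/2)) (Ici 0) := by
        apply monotoneOn_of_deriv_nonneg (convex_Ici 0)
        · apply ContinuousOn.sub
          · apply ContinuousOn.log (by fun_prop)
            intro y hy; have : (0:ℝ) ≤ y := hy; positivity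
          · fun_prop
        · intro y hy
          simp only [interior_Ici, mem_Ioi] at hy
          have : (1 + y) ≠ 0 := by positivity
          exact (DifferentiableAt.sub (DifferentiableAt.log (by fun_prop) this) (by fun_prop)).differentiableWithinAt
        · intro y hy
          simp only [interior_Ici, mem_Ioi] at hy
          have h0 : (1 + y) ≠ 0 := by positivity
          have : HasDerivAt (fun y : ℝ => Real.log (1+y) - (y - y^2/2)) (1/(1+y) - (1 - (2*y)/2)) y := by
            apply HasDerivAt.sub
            · exact HasDerivAt.log ((hasDerivAt_id y).const_add 1) h0
            · apply HasDerivAt.sub (hasDerivAt_id y)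
              simpa using (hasDerivAt_pow 2 y).div_const 2
          rw [this.deriv]
          have : 1/(1+y) - (1 - (2*y)/2) = y^2/(1+y) := by field_simp; ring
          rw [this]; positivity
      have := key (mem_Ici.2 le_rfl) (mem_Ici.2 hx) hx
      simp at this
      linarith
    calc Real.exp (x - x^2/2) ≤ Real.exp (Real.log (1+x)) := Real.exp_le_exp.2 h1
      _ = 1 + x := Real.exp_log (by positivity)
      _ ≤ _ := by nlinarith [sq_nonneg x]
  · have h2 : Real.exp x ≤ 1 + x + x^2/2 := by
      have key : MonotoneOn (fun y : ℝ => Real.exp y - (1 + y + y^2/2)) univ := by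
        apply monotoneOn_of_deriv_nonneg convex_univ
        · fun_prop
        · exact fun y _ => (Real.differentiable_exp.sub (by fun_prop)).differentiableAt.differentiableWithinAt
        · intro y _
          have : HasDerivAt (fun y : ℝ => Real.exp y - (1 + y + y^2/2)) (Real.exp y - (1 + (2*y)/2)) y := by
            apply HasDerivAt.sub (Real.hasDerivAt_exp y)
            apply HasDerivAt.add ((hasDerivAt_id y).const_add 1)
            simpa using (hasDerivAt_pow 2 y).div_const 2
          rw [this.deriv]
          have := Real.add_one_le_exp y
          linarith
      have := key (mem_univ x) (mem_univ 0) hx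
      simp at this
      linarith
    refine le_trans (Real.exp_le_exp.2 ?_) h2
    nlinarith [sq_nonneg x]

lemma exp_step (μ : Measure E) [IsProbabilityMeasure μ] (g : E → ℝ) (hg : MemLp g 2 μ)
    (h0 : ∫ x, g x ∂μ = 0) (l : ℝ) :
    ∫⁻ x, ENNReal.ofReal (Real.exp (l * g x - l^2/2 * (g x)^2 - l^2/2 * ∫ x, (g x)^2 ∂μ)) ∂μ ≤ 1 := by
  set b := l^2/2 * ∫ x, (g x)^2 ∂μ
  have hb : 0 ≤ b := mul_nonneg (by positivity) (integral_nonneg fun x => sq_nonneg _)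
  have i1 : Integrable g μ := hg.integrable (by norm_num)
  have i2 : Integrable (fun x => (g x)^2) μ := hg.integrable_sq
  have hIntg : Integrable (fun x => (1 + l * g x + l^2/2 * (g x)^2) * Real.exp (-b)) μ :=
    (((integrable_const 1).add (i1.const_mul l)).add (i2.const_mul _)).mul_const _
  calc _ ≤ ∫⁻ x, ENNReal.ofReal ((1 + l * g x + l^2/2 * (g x)^2) * Real.exp (-b)) ∂μ := by
        apply lintegral_mono
        intro x
        apply ENNReal.ofReal_le_ofReal
        have := exp_ineq (l * g x)
        have e : l * g x - l^2/2 * (g x)^2 - b = (l * g x - (l * g x)^2/2) + (-b) := by ring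
        rw [e, Real.exp_add]
        apply mul_le_mul_of_nonneg_right _ (Real.exp_pos _).le
        calc _ ≤ _ := this
          _ = _ := by ring
    _ = ENNReal.ofReal ((1 + b) * Real.exp (-b)) := by
        rw [← ofReal_integral_eq_lintegral_ofReal hIntg]
        · congr 1
          rw [integral_mul_const]
          congr 1
          have i3 : Integrable (fun x => 1 + l * g x) μ := (integrable_const 1).add (i1.const_mul l)
          rw [integral_add i3 (i2.const_mul _),
            integral_add (integrable_const 1) (i1.const_mul l), integral_const_mul, integral_const_mul, h0]
          simp [b]
        · refine Eventually.of_forall fun x => ?_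
          have : (1 + l * g x + l^2/2 * (g x)^2) = ((1 + l * g x)^2 + 1)/2 := by ring
          simp only [Pi.zero_apply]
          rw [this]; positivity
    _ ≤ 1 := by
        rw [← ENNReal.ofReal_one]
        apply ENNReal.ofReal_le_ofReal
        rw [Real.exp_neg, mul_inv_le_iff₀ (Real.exp_pos _)]
        linarith [Real.add_one_le_exp b]

lemma supermart (μ : Measure E) [IsProbabilityMeasure μ] (ξ : ∀ m : ℕ, (Fin m → E) → E → ℝ)
    (hm : ∀ m, Measurable (fun p : (Fin m → E) × E => ξ m p.1 p.2))
    (hL : ∀ m y, MemLp (ξ m y) 2 μ) (h0 : ∀ m y, ∫ x, ξ m y x ∂μ = 0) (l : ℝ) (n : ℕ) :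
    ∫⁻ y, ENNReal.ofReal (Real.exp (acc (fun m y x => l * ξ m y x - l^2/2 * (ξ m y x)^2
      - l^2/2 * ∫ x, (ξ m y x)^2 ∂μ) n y)) ∂(nuP μ n) ≤ 1 := by
  have hD : ∀ m, Measurable (fun p : (Fin m → E) × E => l * ξ m p.1 p.2 - l^2/2 * (ξ m p.1 p.2)^2
      - l^2/2 * ∫ x, (ξ m p.1 x)^2 ∂μ) := by
    intro m
    have h1 : Measurable (fun y : Fin m → E => ∫ x, (ξ m y x)^2 ∂μ) := by
      have : StronglyMeasurable (fun p : (Fin m → E) × E => (ξ m p.1 p.2)^2) :=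
        ((hm m).pow_const 2).stronglyMeasurable
      exact (this.integral_prod_right' (ν := μ)).measurable
    exact (((hm m).const_mul l).sub (((hm m).pow_const 2).const_mul _)).sub
      ((h1.comp measurable_fst).const_mul _)
  induction n with
  | zero => simp [acc]
  | succ m ih =>
    rw [lint_succ μ]
    · refine le_trans (lintegral_mono fun y => ?_) ih
      simp only [acc_snc, Real.exp_add]
      simp_rw [ENNReal.ofReal_mul (Real.exp_pos _).le]
      rw [lintegral_const_mul]
      · refine le_trans (mul_le_mul_right (exp_step μ (ξ m y) (hL m y) (h0 m y) l) _) (by simp)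
      · refine (Real.measurable_exp.comp ?_).ennreal_ofReal
        exact (hD m).comp (measurable_prodMk_left)
    · exact (Real.measurable_exp.comp (measurable_acc hD _)).ennreal_ofReal

end AbstractU

section AbstractU2
variable {E : Type*} [MeasurableSpace E]

lemma memLp_snc (μ : Measure E) [IsProbabilityMeasure μ] {m : ℕ} {F : (Fin (m+1) → E) → ℝ}
    (hF : Measurable F) (h : MemLp (fun p => F (snc p)) 2 ((nuP μ m).prod μ)) :
    MemLp F 2 (nuP μ (m+1)) := by
  rw [← (mp_snc μ m).map_eq]
  exact (memLp_map_measure_iff hF.aestronglyMeasurable (mp_snc μ m).measurable.aemeasurable).2 h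

lemma integral_snc (μ : Measure E) [IsProbabilityMeasure μ] {m : ℕ} {F : (Fin (m+1) → E) → ℝ}
    (hF : Measurable F) :
    ∫ y, F y ∂(nuP μ (m+1)) = ∫ p, F (snc p) ∂((nuP μ m).prod μ) := by
  rw [← (mp_snc μ m).map_eq, integral_map (mp_snc μ m).measurable.aemeasurable
    hF.aestronglyMeasurable]

lemma orth (μ : Measure E) [IsProbabilityMeasure μ] (D : ∀ m : ℕ, (Fin m → E) → E → ℝ)
    (hm : ∀ m, Measurable (fun p : (Fin m → E) × E => D m p.1 p.2))
    (hL : ∀ m, MemLp (fun p : (Fin m → E) × E => D m p.1 p.2) 2 ((nuP μ m).prod μ))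
    (h0 : ∀ m y, ∫ x, D m y x ∂μ = 0) (n : ℕ) :
    MemLp (acc D n) 2 (nuP μ n) ∧ ∫ y, (acc D n y)^2 ∂(nuP μ n)
      = ∑ m ∈ Finset.range n, ∫ p, (D m p.1 p.2)^2 ∂((nuP μ m).prod μ) := by
  induction n with
  | zero =>
    constructor
    · exact MemLp.zero
    · simp [acc]
  | succ m ih =>
    obtain ⟨ih1, ih2⟩ := ih
    have hA : MemLp (fun p : (Fin m → E) × E => acc D m p.1) 2 ((nuP μ m).prod μ) :=
      ih1.comp_measurePreserving measurePreserving_fst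
    constructor
    · apply memLp_snc μ (measurable_acc hm _)
      simp_rw [acc_snc]
      exact hA.add (hL m)
    · rw [integral_snc μ ((measurable_acc hm _).pow_const 2), Finset.sum_range_succ, ← ih2]
      have e : ∀ p : (Fin m → E) × E, (acc D (m+1) (snc p))^2
          = (acc D m p.1)^2 + (2 * (acc D m p.1 * D m p.1 p.2) + (D m p.1 p.2)^2) := by
        intro p; rw [acc_snc]; ring
      simp_rw [e]
      have iAD : Integrable (fun p : (Fin m → E) × E => acc D m p.1 * D m p.1 p.2) ((nuP μ m).prod μ) :=
        hA.integrable_mul (hL m)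
      have i2 : Integrable (fun p : (Fin m → E) × E => 2 * (acc D m p.1 * D m p.1 p.2) + (D m p.1 p.2)^2)
          ((nuP μ m).prod μ) := (iAD.const_mul 2).add (hL m).integrable_sq
      rw [integral_add hA.integrable_sq i2, integral_add (iAD.const_mul 2) (hL m).integrable_sq,
        integral_const_mul]
      have z : ∫ p : (Fin m → E) × E, acc D m p.1 * D m p.1 p.2 ∂((nuP μ m).prod μ) = 0 := by
        rw [integral_prod _ iAD]
        simp [integral_const_mul, h0]
      have z2 : ∫ p : (Fin m → E) × E, (acc D m p.1)^2 ∂((nuP μ m).prod μ)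
          = ∫ y, (acc D m y)^2 ∂(nuP μ m) := by
        rw [integral_prod _ hA.integrable_sq]
        simp
      rw [z, z2]; ring

lemma sum_iid (μ : Measure E) [IsProbabilityMeasure μ] (f : E → ℝ) (hm : Measurable f)
    (hf : MemLp f 2 μ) (h0 : ∫ x, f x ∂μ = 0) (n : ℕ) :
    MemLp (fun y : Fin n → E => ∑ j, f (y j)) 2 (nuP μ n) ∧
    ∫ y, (∑ j, f (y j))^2 ∂(nuP μ n) = n * ∫ x, (f x)^2 ∂μ := by
  have hL : ∀ m, MemLp (fun p : (Fin m → E) × E => f p.2) 2 ((nuP μ m).prod μ) := fun m =>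
    hf.comp_measurePreserving measurePreserving_snd
  have := orth μ (fun _ _ x => f x) (fun m => hm.comp measurable_snd) hL (fun _ _ => h0) n
  rw [funext (acc_const f n)] at this
  refine ⟨this.1, ?_⟩
  rw [this.2]
  have : ∀ m, ∫ p : (Fin m → E) × E, (f p.2)^2 ∂((nuP μ m).prod μ) = ∫ x, (f x)^2 ∂μ := by
    intro m
    rw [integral_prod _ (hL m).integrable_sq]; simp
  simp [this]

lemma memLp_eval (μ : Measure E) [IsProbabilityMeasure μ] (A : E → E → ℝ)
    (hL : MemLp (fun p : E × E => A p.1 p.2) 2 (μ.prod μ)) (m : ℕ) (j : Fin m) :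
    MemLp (fun p : (Fin m → E) × E => A (p.1 j) p.2) 2 ((nuP μ m).prod μ) := by
  have h1 := (measurePreserving_eval (fun _ : Fin m => μ) j).prod (MeasurePreserving.id μ)
  exact hL.comp_measurePreserving h1

lemma meas_sumA (A : E → E → ℝ) (hm : Measurable (fun p : E × E => A p.1 p.2)) (m : ℕ) :
    Measurable (fun p : (Fin m → E) × E => ∑ j, A (p.1 j) p.2) := by
  refine Finset.measurable_sum _ fun j _ => ?_
  have : Measurable (fun p : (Fin m → E) × E => (p.1 j, p.2)) :=
    ((measurable_pi_apply j).comp measurable_fst).prodMk measurable_snd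
  exact hm.comp this

/-- second moment of a sum over the past, with fresh argument -/
lemma past_sum (μ : Measure E) [IsProbabilityMeasure μ] (A : E → E → ℝ)
    (hm : Measurable (fun p : E × E => A p.1 p.2))
    (hL : MemLp (fun p : E × E => A p.1 p.2) 2 (μ.prod μ))
    (hL1 : ∀ x, MemLp (fun u => A u x) 2 μ)
    (h1 : ∀ x, ∫ u, A u x ∂μ = 0) (m : ℕ) :
    MemLp (fun p : (Fin m → E) × E => ∑ j, A (p.1 j) p.2) 2 ((nuP μ m).prod μ) ∧
    ∫ p : (Fin m → E) × E, (∑ j, A (p.1 j) p.2)^2 ∂((nuP μ m).prod μ)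
      = m * ∫ p, (A p.1 p.2)^2 ∂(μ.prod μ) := by
  have hM : MemLp (fun p : (Fin m → E) × E => ∑ j, A (p.1 j) p.2) 2 ((nuP μ m).prod μ) :=
    memLp_finsetSum _ fun j _ => memLp_eval μ A hL m j
  refine ⟨hM, ?_⟩
  rw [integral_prod_symm _ hM.integrable_sq, integral_prod_symm _ hL.integrable_sq,
    ← integral_const_mul]
  congr 1
  ext x
  have hmx : Measurable (fun u => A u x) := hm.comp measurable_prodMk_right
  exact (sum_iid μ (fun u => A u x) hmx (hL1 x) (h1 x) m).2

/-- degenerate pair sums -/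
lemma pair_sum (μ : Measure E) [IsProbabilityMeasure μ] (A : E → E → ℝ)
    (hm : Measurable (fun p : E × E => A p.1 p.2))
    (hL : MemLp (fun p : E × E => A p.1 p.2) 2 (μ.prod μ))
    (hL1 : ∀ x, MemLp (fun u => A u x) 2 μ) (hL2 : ∀ u, MemLp (fun x => A u x) 2 μ)
    (h1 : ∀ x, ∫ u, A u x ∂μ = 0) (h2 : ∀ u, ∫ x, A u x ∂μ = 0) (n : ℕ) :
    MemLp (acc (fun m y x => ∑ j : Fin m, A (y j) x) n) 2 (nuP μ n) ∧
    ∫ y, (acc (fun m y x => ∑ j : Fin m, A (y j) x) n y)^2 ∂(nuP μ n)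
      ≤ n^2 * ∫ p, (A p.1 p.2)^2 ∂(μ.prod μ) := by
  have hp := fun m => past_sum μ A hm hL hL1 h1 m
  have := orth μ (fun m y x => ∑ j : Fin m, A (y j) x) (meas_sumA A hm) (fun m => (hp m).1)
    (fun m y => by
      rw [integral_finsetSum _ (fun j _ => (hL2 (y j)).integrable (by norm_num))]
      simp [h2]) n
  refine ⟨this.1, ?_⟩
  rw [this.2]
  have hnn : 0 ≤ ∫ p, (A p.1 p.2)^2 ∂(μ.prod μ) := integral_nonneg fun _ => sq_nonneg _
  calc _ ≤ ∑ m ∈ Finset.range n, (n:ℝ) * ∫ p, (A p.1 p.2)^2 ∂(μ.prod μ) := by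
        refine Finset.sum_le_sum fun m hmn => ?_
        rw [(hp m).2]
        refine mul_le_mul_of_nonneg_right ?_ hnn
        exact_mod_cast (Finset.mem_range.1 hmn).le
    _ = _ := by simp; ring

lemma memLp_two_iff_eLp {X : Type*} [MeasurableSpace X] {ν : Measure X} {f : X → ℝ} (hf : MemLp f 2 ν) :
    eLpNorm f 2 ν = ENNReal.ofReal (Real.sqrt (∫ x, (f x)^2 ∂ν)) := by
  rw [hf.eLpNorm_eq_integral_rpow_norm (by norm_num) (by norm_num)]
  congr 1
  simp [Real.sqrt_eq_rpow]

lemma acc_past (μ : Measure E) [IsProbabilityMeasure μ] (C : ∀ m : ℕ, (Fin m → E) → ℝ)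
    (hm : ∀ m, Measurable (C m)) (hL : ∀ m, MemLp (C m) 2 (nuP μ m)) (K : ℝ) (hK : 0 ≤ K) (n : ℕ)
    (hC : ∀ m < n, ∫ y, (C m y)^2 ∂(nuP μ m) ≤ K^2) :
    MemLp (acc (fun m y _ => C m y) n) 2 (nuP μ n) ∧
    ∫ y, (acc (fun m y _ => C m y) n y)^2 ∂(nuP μ n) ≤ (n * K)^2 := by
  have hmm : ∀ m, Measurable (fun p : (Fin m → E) × E => C m p.1) :=
    fun m => (hm m).comp measurable_fst
  have key : ∀ m ≤ n, MemLp (acc (fun m y _ => C m y) m) 2 (nuP μ m) ∧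
      eLpNorm (acc (fun m y _ => C m y) m) 2 (nuP μ m) ≤ ENNReal.ofReal (m * K) := by
    intro m
    induction m with
    | zero => intro _; exact ⟨MemLp.zero, by
        have : acc (fun m y (_ : E) => C m y) 0 = 0 := rfl
        rw [this]; simp⟩
    | succ m ih =>
      intro hmn
      obtain ⟨ih1, ih2⟩ := ih (by omega)
      have hA : MemLp (fun p : (Fin m → E) × E => acc (fun m y (_ : E) => C m y) m p.1) 2 ((nuP μ m).prod μ) :=
        ih1.comp_measurePreserving measurePreserving_fst
      have hB : MemLp (fun p : (Fin m → E) × E => C m p.1) 2 ((nuP μ m).prod μ) :=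
        (hL m).comp_measurePreserving measurePreserving_fst
      constructor
      · apply memLp_snc μ (measurable_acc hmm _)
        simp_rw [acc_snc]
        exact hA.add hB
      · rw [← (mp_snc μ m).map_eq, eLpNorm_map_measure (measurable_acc hmm _).aestronglyMeasurable
          (mp_snc μ m).measurable.aemeasurable]
        have e : (acc (fun m y (_ : E) => C m y) (m+1) ∘ snc) =
          (fun p : (Fin m → E) × E => acc (fun m y (_ : E) => C m y) m p.1) + (fun p : (Fin m → E) × E => C m p.1) := by
          ext p; simp only [Function.comp, acc_snc]; rfl
        rw [e]
        refine (eLpNorm_add_le hA.1 hB.1 (by norm_num)).trans ?_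
        have e1 : eLpNorm (fun p : (Fin m → E) × E => acc (fun m y (_ : E) => C m y) m p.1) 2 ((nuP μ m).prod μ)
          = eLpNorm (acc (fun m y (_ : E) => C m y) m) 2 (nuP μ m) :=
          eLpNorm_comp_measurePreserving ih1.1 measurePreserving_fst
        have e2 : eLpNorm (fun p : (Fin m → E) × E => C m p.1) 2 ((nuP μ m).prod μ)
          = eLpNorm (C m) 2 (nuP μ m) :=
          eLpNorm_comp_measurePreserving (hL m).1 measurePreserving_fst
        rw [e1, e2]
        have e3 : eLpNorm (C m) 2 (nuP μ m) ≤ ENNReal.ofReal K := by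
          rw [memLp_two_iff_eLp (hL m)]
          apply ENNReal.ofReal_le_ofReal
          rw [Real.sqrt_le_left hK]
          exact hC m (by omega)
        refine (add_le_add ih2 e3).trans ?_
        rw [← ENNReal.ofReal_add (by positivity) hK]
        apply ENNReal.ofReal_le_ofReal
        push_cast; linarith
  obtain ⟨k1, k2⟩ := key n le_rfl
  refine ⟨k1, ?_⟩
  rw [memLp_two_iff_eLp k1, ENNReal.ofReal_le_ofReal_iff (by positivity)] at k2
  exact (Real.sqrt_le_left (by positivity)).1 k2

lemma cheb {X : Type*} [MeasurableSpace X] {ν : Measure X} {f : X → ℝ}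
    (hL : MemLp f 2 ν) {K t : ℝ} (ht : 0 < t) (hK : ∫ x, (f x)^2 ∂ν ≤ K) :
    ν {x | t < |f x|} ≤ ENNReal.ofReal (K / t^2) := by
  have h1 := mul_meas_ge_le_lintegral₀ (μ := ν) (f := fun x => ENNReal.ofReal ((f x)^2))
    (hL.integrable_sq.1.aemeasurable.ennreal_ofReal) (ENNReal.ofReal (t^2))
  rw [← ofReal_integral_eq_lintegral_ofReal hL.integrable_sq (Eventually.of_forall fun x => sq_nonneg _)] at h1
  have ht2 : 0 < t^2 := by positivity
  have h2 : ν {x | t < |f x|} ≤ ν {x | ENNReal.ofReal (t^2) ≤ ENNReal.ofReal ((f x)^2)} := by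
    apply measure_mono
    intro x hx
    simp only [mem_setOf_eq] at hx ⊢
    apply ENNReal.ofReal_le_ofReal
    rw [← sq_abs (f x)]
    exact pow_le_pow_left₀ ht.le hx.le 2
  refine h2.trans ?_
  rw [ENNReal.ofReal_div_of_pos ht2, ENNReal.le_div_iff_mul_le (by left; positivity) (by left; simp)]
  rw [mul_comm]
  exact h1.trans (ENNReal.ofReal_le_ofReal hK)

lemma markov {X : Type*} [MeasurableSpace X] {ν : Measure X} {f : X → ℝ} (hf0 : ∀ x, 0 ≤ f x)
    (hL : Integrable f ν) {K t : ℝ} (ht : 0 < t) (hK : ∫ x, f x ∂ν ≤ K) :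
    ν {x | t < f x} ≤ ENNReal.ofReal (K / t) := by
  have h1 := mul_meas_ge_le_lintegral₀ (μ := ν) (f := fun x => ENNReal.ofReal (f x))
    (hL.1.aemeasurable.ennreal_ofReal) (ENNReal.ofReal t)
  rw [← ofReal_integral_eq_lintegral_ofReal hL (Eventually.of_forall hf0)] at h1
  have h2 : ν {x | t < f x} ≤ ν {x | ENNReal.ofReal t ≤ ENNReal.ofReal (f x)} := by
    apply measure_mono
    intro x hx
    exact ENNReal.ofReal_le_ofReal (le_of_lt hx)
  refine h2.trans ?_
  rw [ENNReal.ofReal_div_of_pos ht, ENNReal.le_div_iff_mul_le (by left; positivity) (by left; simp)]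
  rw [mul_comm]
  exact h1.trans (ENNReal.ofReal_le_ofReal hK)

end AbstractU2

section AbstractU3
variable {E : Type*} [MeasurableSpace E]

/-- Hypotheses on a canonical kernel. -/
structure KerHyp (μ : Measure E) (h : E → E → ℝ) (ρ : E → ℝ) (B a R s2 b2 : ℝ) : Prop where
  hm : Measurable (fun p : E × E => h p.1 p.2)
  sym : ∀ x y, h x y = h y x
  ρm : Measurable ρ
  ρ0 : ∀ x, 0 ≤ ρ x
  ρ4 : Integrable (fun x => ρ x ^ 4) μ
  ρR : ∫ x, ρ x ^ 4 ∂μ ≤ R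
  B0 : 0 ≤ B
  a0 : 0 ≤ a
  bd : ∀ x y, |h x y| ≤ B * ρ x * ρ y
  can : ∀ x, ∫ y, h x y ∂μ = 0
  ηb : ∀ x, ∫ y, h x y ^ 2 ∂μ ≤ a * ρ x ^ 2
  hs2 : ∫ x, ∫ y, h x y ^ 2 ∂μ ∂μ ≤ s2
  hb2 : ∫ p : E × E, (∫ y, h p.1 y * h p.2 y ∂μ) ^ 2 ∂(μ.prod μ) ≤ b2

lemma int_sq_center {X : Type*} [MeasurableSpace X] (μ : Measure X) [IsProbabilityMeasure μ] {f : X → ℝ}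
    (hf : MemLp f 2 μ) : ∫ x, (f x - ∫ z, f z ∂μ)^2 ∂μ ≤ ∫ x, (f x)^2 ∂μ := by
  have i1 : Integrable f μ := hf.integrable (by norm_num)
  set c := ∫ z, f z ∂μ with hc
  have e : ∀ x, (f x - c)^2 = (f x)^2 - (2 * c * f x - c^2) := by intro x; ring
  simp_rw [e]
  have i2 : Integrable (fun x => 2 * c * f x - c^2) μ := (i1.const_mul _).sub (integrable_const _)
  rw [integral_sub hf.integrable_sq i2, integral_sub (i1.const_mul _) (integrable_const _),
    integral_const_mul, ← hc]
  simp
  nlinarith [sq_nonneg c]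

namespace KerHyp
variable {μ : Measure E} [IsProbabilityMeasure μ] {h : E → E → ℝ} {ρ : E → ℝ} {B a R s2 b2 : ℝ}

lemma mh1 (K : KerHyp μ h ρ B a R s2 b2) (x : E) : Measurable (fun y => h x y) :=
  K.hm.comp measurable_prodMk_left
lemma mh2 (K : KerHyp μ h ρ B a R s2 b2) (x : E) : Measurable (fun y => h y x) :=
  K.hm.comp measurable_prodMk_right

lemma ρ2L (K : KerHyp μ h ρ B a R s2 b2) : MemLp (fun x => ρ x ^ 2) 2 μ := by
  rw [memLp_two_iff_integrable_sq (K.ρm.pow_const 2).aestronglyMeasurable]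
  convert K.ρ4 using 2 with x; ring

lemma ρ2I (K : KerHyp μ h ρ B a R s2 b2) : Integrable (fun x => ρ x ^ 2) μ :=
  K.ρ2L.integrable (by norm_num)

lemma ρL (K : KerHyp μ h ρ B a R s2 b2) : MemLp ρ 2 μ :=
  (memLp_two_iff_integrable_sq K.ρm.aestronglyMeasurable).2 K.ρ2I

lemma h1L (K : KerHyp μ h ρ B a R s2 b2) (x : E) : MemLp (fun y => h x y) 2 μ := by
  refine (K.ρL.const_mul (B * ρ x)).mono' (K.mh1 x).aestronglyMeasurable (Eventually.of_forall fun y => ?_)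
  exact K.bd x y

lemma h2L (K : KerHyp μ h ρ B a R s2 b2) (x : E) : MemLp (fun y => h y x) 2 μ := by
  have := K.h1L x
  simpa only [K.sym x] using this

lemma can2 (K : KerHyp μ h ρ B a R s2 b2) (x : E) : ∫ y, h y x ∂μ = 0 := by
  rw [← K.can x]; congr 1; ext y; exact K.sym y x

lemma hsq (K : KerHyp μ h ρ B a R s2 b2) (x y : E) : h x y ^ 2 ≤ B^2 * ρ x ^2 * ρ y ^ 2 := by
  have := pow_le_pow_left₀ (abs_nonneg _) (K.bd x y) 2
  rw [sq_abs] at this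
  calc _ ≤ _ := this
    _ = _ := by ring

lemma hhI (K : KerHyp μ h ρ B a R s2 b2) (x x' : E) : Integrable (fun y => h x y * h x' y) μ :=
  (K.h1L x).integrable_mul (K.h1L x')

lemma mH (K : KerHyp μ h ρ B a R s2 b2) :
    Measurable (fun p : E × E => ∫ y, h p.1 y * h p.2 y ∂μ) := by
  have : StronglyMeasurable (fun q : (E × E) × E => h q.1.1 q.2 * h q.1.2 q.2) := by
    apply Measurable.stronglyMeasurable
    exact (K.hm.comp ((measurable_fst.comp measurable_fst).prodMk measurable_snd)).mul
      (K.hm.comp ((measurable_snd.comp measurable_fst).prodMk measurable_snd))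
  exact (this.integral_prod_right' (ν := μ)).measurable

lemma mη (K : KerHyp μ h ρ B a R s2 b2) :
    Measurable (fun x : E => ∫ y, h x y ^ 2 ∂μ) := by
  exact ((K.hm.pow_const 2).stronglyMeasurable.integral_prod_right' (ν := μ)).measurable

lemma Hbd (K : KerHyp μ h ρ B a R s2 b2) (x x' : E) :
    |∫ y, h x y * h x' y ∂μ| ≤ (B^2 * ∫ y, ρ y ^2 ∂μ) * ρ x * ρ x' := by
  have : (B^2 * ∫ y, ρ y ^2 ∂μ) * ρ x * ρ x' = ∫ y, (B^2 * ρ x * ρ x') * ρ y^2 ∂μ := by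
    rw [integral_const_mul]; ring
  rw [this, ← Real.norm_eq_abs]
  refine norm_integral_le_of_norm_le (K.ρ2I.const_mul _) (Eventually.of_forall fun y => ?_)
  rw [Real.norm_eq_abs, abs_mul]
  calc |h x y| * |h x' y| ≤ (B * ρ x * ρ y) * (B * ρ x' * ρ y) :=
        mul_le_mul (K.bd x y) (K.bd x' y) (abs_nonneg _)
          (mul_nonneg (mul_nonneg K.B0 (K.ρ0 x)) (K.ρ0 y))
    _ = _ := by ring

lemma η0 (x : E) : 0 ≤ ∫ y, h x y ^ 2 ∂μ := integral_nonneg fun _ => sq_nonneg _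

lemma ρρL (K : KerHyp μ h ρ B a R s2 b2) :
    MemLp (fun p : E × E => ρ p.1 * ρ p.2) 2 (μ.prod μ) := by
  refine (memLp_two_iff_integrable_sq (f := fun p : E × E => ρ p.1 * ρ p.2)
    ((K.ρm.comp measurable_fst).mul (K.ρm.comp measurable_snd)).aestronglyMeasurable).2 ?_
  have := K.ρ2I.mul_prod K.ρ2I
  convert this using 2 with p; ring

lemma hL (K : KerHyp μ h ρ B a R s2 b2) : MemLp (fun p : E × E => h p.1 p.2) 2 (μ.prod μ) := by
  refine (K.ρρL.const_mul B).mono' K.hm.aestronglyMeasurable (Eventually.of_forall fun p => ?_)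
  have := K.bd p.1 p.2
  rw [Real.norm_eq_abs]; linarith

lemma HL (K : KerHyp μ h ρ B a R s2 b2) :
    MemLp (fun p : E × E => ∫ y, h p.1 y * h p.2 y ∂μ) 2 (μ.prod μ) := by
  refine (K.ρρL.const_mul (B^2 * ∫ y, ρ y ^2 ∂μ)).mono' K.mH.aestronglyMeasurable
    (Eventually.of_forall fun p => ?_)
  have := K.Hbd p.1 p.2
  rw [Real.norm_eq_abs]; linarith

lemma H1L (K : KerHyp μ h ρ B a R s2 b2) (x : E) :
    MemLp (fun x' => ∫ y, h x y * h x' y ∂μ) 2 μ := by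
  refine (K.ρL.const_mul ((B^2 * ∫ y, ρ y ^2 ∂μ) * ρ x)).mono'
    (K.mH.comp measurable_prodMk_left).aestronglyMeasurable (Eventually.of_forall fun y => ?_)
  exact K.Hbd x y

lemma Hsym (x x' : E) : ∫ y, h x y * h x' y ∂μ = ∫ y, h x' y * h x y ∂μ := by
  congr 1; ext y; ring

lemma Hcan (K : KerHyp μ h ρ B a R s2 b2) (x : E) : ∫ x', ∫ y, h x y * h x' y ∂μ ∂μ = 0 := by
  rw [integral_integral_swap]
  · simp [integral_const_mul, K.can2]
  · have hg : Integrable (fun p : E × E => (B^2 * ρ x) * (ρ p.1 * ρ p.2^2)) (μ.prod μ) :=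
      ((K.ρL.integrable (by norm_num)).mul_prod K.ρ2I).const_mul _
    refine hg.mono' ?_ (Eventually.of_forall fun p => ?_)
    · exact (((K.mh1 x).comp measurable_snd).mul K.hm).aestronglyMeasurable
    · simp only [Function.uncurry]
      rw [Real.norm_eq_abs, abs_mul]
      calc |h x p.2| * |h p.1 p.2| ≤ (B * ρ x * ρ p.2) * (B * ρ p.1 * ρ p.2) :=
          mul_le_mul (K.bd _ _) (K.bd _ _) (abs_nonneg _)
            (mul_nonneg (mul_nonneg K.B0 (K.ρ0 x)) (K.ρ0 _))
        _ = _ := by ring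

lemma ηL (K : KerHyp μ h ρ B a R s2 b2) : MemLp (fun x => ∫ y, h x y ^ 2 ∂μ) 2 μ := by
  refine (K.ρ2L.const_mul a).mono' K.mη.aestronglyMeasurable (Eventually.of_forall fun x => ?_)
  rw [Real.norm_of_nonneg (η0 x)]; exact K.ηb x

lemma η2 (K : KerHyp μ h ρ B a R s2 b2) : ∫ x, (∫ y, h x y ^ 2 ∂μ)^2 ∂μ ≤ a^2 * R := by
  calc _ ≤ ∫ x, a^2 * ρ x^4 ∂μ := by
        refine integral_mono K.ηL.integrable_sq (K.ρ4.const_mul _) fun x => ?_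
        calc _ ≤ (a * ρ x^2)^2 := pow_le_pow_left₀ (η0 x) (K.ηb x) 2
          _ = _ := by ring
    _ ≤ _ := by rw [integral_const_mul]; exact mul_le_mul_of_nonneg_left K.ρR (sq_nonneg a)

/-- third moment -/
lemma h3 (K : KerHyp μ h ρ B a R s2 b2) :
    Integrable (fun p : E × E => |h p.1 p.2|^3) (μ.prod μ) ∧
    ∫ p : E × E, |h p.1 p.2|^3 ∂(μ.prod μ) ≤ B * a * R := by
  have iA : Integrable (fun p : E × E => ρ p.1^2 * h p.1 p.2^2) (μ.prod μ) := by
    refine ((K.ρ4.mul_prod K.ρ2I).const_mul (B^2)).mono' ?_ (Eventually.of_forall fun p => ?_)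
    · exact (((K.ρm.comp measurable_fst).pow_const 2).mul (K.hm.pow_const 2)).aestronglyMeasurable
    · rw [Real.norm_of_nonneg (by positivity)]
      calc _ ≤ ρ p.1^2 * (B^2 * ρ p.1 ^2 * ρ p.2 ^ 2) :=
            mul_le_mul_of_nonneg_left (K.hsq _ _) (sq_nonneg _)
        _ = _ := by ring
  have iA' : Integrable (fun p : E × E => ρ p.2^2 * h p.1 p.2^2) (μ.prod μ) := by
    have := iA.swap
    convert this using 2 with p
    simp [K.sym p.1 p.2]
  have eA : ∫ p : E × E, ρ p.1^2 * h p.1 p.2^2 ∂(μ.prod μ) ≤ a * R := by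
    rw [integral_prod _ iA]
    simp_rw [integral_const_mul]
    calc _ ≤ ∫ x, a * ρ x^4 ∂μ := by
          refine integral_mono_of_nonneg (Eventually.of_forall fun x => mul_nonneg (sq_nonneg _) (η0 x))
            (K.ρ4.const_mul _) (Eventually.of_forall fun x => ?_)
          calc _ ≤ ρ x^2 * (a * ρ x^2) := mul_le_mul_of_nonneg_left (K.ηb x) (sq_nonneg _)
            _ = _ := by ring
      _ ≤ _ := by rw [integral_const_mul]; exact mul_le_mul_of_nonneg_left K.ρR K.a0
  have eA' : ∫ p : E × E, ρ p.2^2 * h p.1 p.2^2 ∂(μ.prod μ) ≤ a * R := by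
    rw [← integral_prod_swap]
    simp only [Prod.fst_swap, Prod.snd_swap]
    simpa only [K.sym] using (by simpa only [K.sym] using eA :
      ∫ p : E × E, ρ p.1^2 * h p.2 p.1^2 ∂(μ.prod μ) ≤ a * R)
  have bnd : ∀ p : E × E, |h p.1 p.2|^3 ≤ B/2 * (ρ p.1^2 * h p.1 p.2^2 + ρ p.2^2 * h p.1 p.2^2) := by
    intro p
    have h1 := K.bd p.1 p.2
    have e : |h p.1 p.2|^3 = |h p.1 p.2| * h p.1 p.2^2 := by rw [← sq_abs (h p.1 p.2)]; ring
    rw [e]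
    have h2 : |h p.1 p.2| ≤ B/2 * (ρ p.1^2 + ρ p.2^2) := by
      have := mul_nonneg K.B0 (sq_nonneg (ρ p.1 - ρ p.2))
      nlinarith
    calc _ ≤ B/2 * (ρ p.1^2 + ρ p.2^2) * h p.1 p.2^2 := mul_le_mul_of_nonneg_right h2 (sq_nonneg _)
      _ = _ := by ring
  have iS := (iA.add iA').const_mul (B/2)
  have i3 : Integrable (fun p : E × E => |h p.1 p.2|^3) (μ.prod μ) := by
    refine iS.mono' ?_ (Eventually.of_forall fun p => ?_)
    · have hab : Measurable (fun p : E × E => |h p.1 p.2|) := continuous_abs.measurable.comp K.hm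
      exact (hab.pow_const 3).aestronglyMeasurable
    · rw [Real.norm_of_nonneg (by positivity)]; exact bnd p
  refine ⟨i3, ?_⟩
  refine (integral_mono i3 iS bnd).trans ?_
  simp only [Pi.add_apply]
  rw [integral_const_mul, integral_add iA iA']
  have := K.B0
  nlinarith

end KerHyp
end AbstractU3

section AbstractU4
variable {E : Type*} [MeasurableSpace E]

/-- truncated square -/
def chiT (T z : ℝ) : ℝ := if |z| ≤ T then z^2 else 0
/-- remainder -/
def zetT (T z : ℝ) : ℝ := if |z| ≤ T then 0 else z^2

lemma chi_add_zet (T z : ℝ) : chiT T z + zetT T z = z^2 := by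
  unfold chiT zetT; split_ifs <;> simp
lemma chi_nonneg (T z : ℝ) : 0 ≤ chiT T z := by
  unfold chiT; split_ifs <;> positivity
lemma zet_nonneg (T z : ℝ) : 0 ≤ zetT T z := by
  unfold zetT; split_ifs <;> positivity
lemma chi_le (T z : ℝ) : chiT T z ≤ z^2 := by
  linarith [chi_add_zet T z, zet_nonneg T z]
lemma chi_le_T (T z : ℝ) : chiT T z ≤ T^2 := by
  unfold chiT; split_ifs with h
  · rw [← sq_abs]; exact pow_le_pow_left₀ (abs_nonneg _) h 2
  · positivity
lemma chi_sq_le (T z : ℝ) (hT : 0 < T) : chiT T z ^2 ≤ T * |z|^3 := by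
  unfold chiT; split_ifs with h
  · have : (z^2)^2 = |z| * |z|^3 := by rw [← sq_abs z]; ring
    rw [this]; exact mul_le_mul_of_nonneg_right h (by positivity)
  · simp; positivity
lemma zet_le (T z : ℝ) (hT : 0 < T) : zetT T z ≤ |z|^3 / T := by
  unfold zetT; split_ifs with h
  · positivity
  · rw [le_div_iff₀ hT]
    have : |z|^3 = z^2 * |z| := by rw [← sq_abs z]; ring
    rw [this]; exact mul_le_mul_of_nonneg_left (not_le.1 h).le (sq_nonneg _)
lemma meas_chi (T : ℝ) : Measurable (chiT T) := by
  unfold chiT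
  exact Measurable.ite (measurableSet_le continuous_abs.measurable measurable_const)
    (measurable_id.pow_const 2) measurable_const
lemma meas_zet (T : ℝ) : Measurable (zetT T) := by
  unfold zetT
  exact Measurable.ite (measurableSet_le continuous_abs.measurable measurable_const)
    measurable_const (measurable_id.pow_const 2)

/-- cross term -/
def Cterm (h : E → E → ℝ) (m : ℕ) (y : Fin m → E) (x : E) : ℝ :=
  (∑ j, h (y j) x)^2 - ∑ j, h (y j) x ^2

lemma Cterm_eq (h : E → E → ℝ) (m : ℕ) (y : Fin m → E) (x : E) :
    Cterm h m y x = 2 * acc (fun m y v => ∑ j : Fin m, h (y j) x * h v x) m y := by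
  have := sum_sum_eq_acc (fun u v => h u x * h v x) (fun u v => mul_comm _ _) m y
  unfold Cterm
  rw [pow_two, Finset.sum_mul_sum, this]
  simp [pow_two]

/-- conditional mean of the cross term -/
def Cbar (μ : Measure E) (h : E → E → ℝ) (m : ℕ) (y : Fin m → E) : ℝ :=
  2 * acc (fun m y v => ∑ j : Fin m, ∫ z, h (y j) z * h v z ∂μ) m y

namespace KerHyp
variable {μ : Measure E} [IsProbabilityMeasure μ] {h : E → E → ℝ} {ρ : E → ℝ} {B a R s2 b2 : ℝ}

lemma sq_int (K : KerHyp μ h ρ B a R s2 b2) (m : ℕ) (y : Fin m → E) :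
    ∫ x, (∑ j, h (y j) x)^2 ∂μ = (∑ j, ∫ x, h (y j) x ^2 ∂μ) + Cbar μ h m y := by
  have := sum_sum_eq_acc (fun u v => ∫ z, h u z * h v z ∂μ) (fun u v => Hsym u v) m y
  unfold Cbar
  have e : ∀ u, ∫ x, h u x ^2 ∂μ = ∫ z, h u z * h u z ∂μ := by
    intro u; congr 1; ext z; ring
  simp_rw [e]
  rw [← this]
  have e2 : ∀ x, (∑ j, h (y j) x)^2 = ∑ i, ∑ j, h (y i) x * h (y j) x := by
    intro x; rw [pow_two, Finset.sum_mul_sum]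
  simp_rw [e2]
  rw [integral_finsetSum _ (fun i _ => integrable_finsetSum _ fun j _ => K.hhI _ _)]
  refine Finset.sum_congr rfl fun i _ => ?_
  rw [integral_finsetSum _ (fun j _ => K.hhI _ _)]

lemma sumL (K : KerHyp μ h ρ B a R s2 b2) (m : ℕ) (y : Fin m → E) :
    MemLp (fun x => ∑ j, h (y j) x) 2 μ := memLp_finsetSum _ fun j _ => K.h1L _

lemma C_int (K : KerHyp μ h ρ B a R s2 b2) (m : ℕ) (y : Fin m → E) :
    Integrable (Cterm h m y) μ ∧ ∫ x, Cterm h m y x ∂μ = Cbar μ h m y := by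
  have i1 := (K.sumL m y).integrable_sq
  have i2 : Integrable (fun x => ∑ j, h (y j) x ^2) μ :=
    integrable_finsetSum _ fun j _ => (K.h1L (y j)).integrable_sq
  refine ⟨i1.sub i2, ?_⟩
  unfold Cterm
  rw [integral_sub i1 i2, K.sq_int, integral_finsetSum _ fun j _ => (K.h1L (y j)).integrable_sq]
  ring

lemma mC (K : KerHyp μ h ρ B a R s2 b2) (m : ℕ) :
    Measurable (fun p : (Fin m → E) × E => Cterm h m p.1 p.2) := by
  unfold Cterm
  exact ((meas_sumA h K.hm m).pow_const 2).sub
    (meas_sumA (fun u v => h u v ^2) (K.hm.pow_const 2) m)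

lemma C_slice (K : KerHyp μ h ρ B a R s2 b2) (m : ℕ) (x : E) :
    MemLp (fun y => Cterm h m y x) 2 (nuP μ m) ∧
    ∫ y, (Cterm h m y x)^2 ∂(nuP μ m) ≤ 4 * m^2 * (∫ z, h x z ^2 ∂μ)^2 := by
  have mA : Measurable (fun p : E × E => h p.1 x * h p.2 x) :=
    ((K.mh2 x).comp measurable_fst).mul ((K.mh2 x).comp measurable_snd)
  have iA := (K.h2L x).integrable_sq.mul_prod (K.h2L x).integrable_sq
  have LA : MemLp (fun p : E × E => h p.1 x * h p.2 x) 2 (μ.prod μ) := by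
    refine (memLp_two_iff_integrable_sq (f := fun p : E × E => h p.1 x * h p.2 x)
      mA.aestronglyMeasurable).2 ?_
    convert iA using 2 with p; ring
  have := pair_sum μ (fun u v => h u x * h v x) mA LA (fun v => (K.h2L x).mul_const _)
    (fun v => (K.h2L x).const_mul _) (fun v => by rw [integral_mul_const, K.can2, zero_mul])
    (fun v => by rw [integral_const_mul, K.can2, mul_zero]) m
  simp_rw [Cterm_eq]
  refine ⟨this.1.const_mul 2, ?_⟩
  simp_rw [mul_pow]
  rw [integral_const_mul]
  have e : ∫ p : E × E, h p.1 x^2 * h p.2 x^2 ∂(μ.prod μ) = (∫ z, h x z ^2 ∂μ)^2 := by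
    rw [integral_prod_mul (fun u => h u x^2) (fun u => h u x^2), pow_two]
    simp only [K.sym x]
  have t := this.2
  simp_rw [mul_pow] at t
  rw [e] at t
  nlinarith

lemma C_L (K : KerHyp μ h ρ B a R s2 b2) (m : ℕ) :
    MemLp (fun p : (Fin m → E) × E => Cterm h m p.1 p.2) 2 ((nuP μ m).prod μ) ∧
    ∫ p : (Fin m → E) × E, (Cterm h m p.1 p.2)^2 ∂((nuP μ m).prod μ) ≤ 4 * m^2 * (a^2 * R) := by
  have hmsq := ((K.mC m).pow_const 2).aestronglyMeasurable (μ := (nuP μ m).prod μ)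
  have iη : Integrable (fun x => 4 * (m:ℝ)^2 * (∫ z, h x z ^2 ∂μ)^2) μ := K.ηL.integrable_sq.const_mul _
  have i : Integrable (fun p : (Fin m → E) × E => (Cterm h m p.1 p.2)^2) ((nuP μ m).prod μ) := by
    rw [integrable_prod_iff' hmsq]
    refine ⟨Eventually.of_forall fun x => (K.C_slice m x).1.integrable_sq, ?_⟩
    refine iη.mono' ?_ (Eventually.of_forall fun x => ?_)
    · exact hmsq.norm.integral_prod_right'.comp_measurePreserving (f := id) (MeasurePreserving.id _) |> fun _ => by
        have := (((K.mC m).pow_const 2).norm.stronglyMeasurable.integral_prod_left' (μ := nuP μ m))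
        exact this.aestronglyMeasurable
    · rw [Real.norm_of_nonneg (integral_nonneg fun _ => norm_nonneg _)]
      simp only [Real.norm_eq_abs, abs_sq]
      exact (K.C_slice m x).2
  refine ⟨(memLp_two_iff_integrable_sq (K.mC m).aestronglyMeasurable).2 i, ?_⟩
  rw [integral_prod_symm _ i]
  refine (integral_mono_of_nonneg (Eventually.of_forall fun x => integral_nonneg fun _ => sq_nonneg _)
    iη (Eventually.of_forall fun x => (K.C_slice m x).2)).trans ?_
  rw [integral_const_mul]
  exact mul_le_mul_of_nonneg_left K.η2 (by positivity)

lemma mchi (K : KerHyp μ h ρ B a R s2 b2) (T : ℝ) : Measurable (fun p : E × E => chiT T (h p.1 p.2)) :=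
  (meas_chi T).comp K.hm

lemma chi_bd (T z : ℝ) : ‖chiT T z‖ ≤ T^2 := by
  rw [Real.norm_of_nonneg (chi_nonneg T z)]; exact chi_le_T T z

lemma chi_slice (K : KerHyp μ h ρ B a R s2 b2) (T : ℝ) (m : ℕ) (x : E) :
    ∫ y : Fin m → E, (∑ j, chiT T (h (y j) x))^2 ∂(nuP μ m)
      ≤ 2 * m * (∫ u, chiT T (h u x)^2 ∂μ) + 2 * m^2 * (∫ z, h x z ^2 ∂μ)^2 := by
  have mf : Measurable (fun u => chiT T (h u x)) := (meas_chi T).comp (K.mh2 x)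
  have Lf : MemLp (fun u => chiT T (h u x)) 2 μ :=
    MemLp.of_bound mf.aestronglyMeasurable (T^2) (Eventually.of_forall fun u => chi_bd T _)
  set c := ∫ u, chiT T (h u x) ∂μ with hc
  have c0 : 0 ≤ c := integral_nonneg fun u => chi_nonneg _ _
  have cη : c ≤ ∫ z, h x z ^2 ∂μ := by
    simp only [K.sym x]
    exact integral_mono (Lf.integrable (by norm_num)) (K.h2L x).integrable_sq fun u => chi_le _ _
  have Lg : MemLp (fun u => chiT T (h u x) - c) 2 μ := Lf.sub (memLp_const c)
  have := sum_iid μ (fun u => chiT T (h u x) - c) (mf.sub_const c) Lg (by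
    rw [integral_sub (Lf.integrable (by norm_num)) (integrable_const _)]; simp [hc]) m
  have v := int_sq_center μ Lf
  rw [← hc] at v
  have i1 := (this.1.integrable_sq).const_mul 2
  calc _ ≤ ∫ y : Fin m → E, (2 * (∑ j, (chiT T (h (y j) x) - c))^2 + 2 * (m * c)^2) ∂(nuP μ m) := by
        refine integral_mono_of_nonneg (Eventually.of_forall fun y => sq_nonneg _)
          (i1.add (integrable_const _)) (Eventually.of_forall fun y => ?_)
        have e : ∑ j, (chiT T (h (y j) x) - c) = ∑ j, chiT T (h (y j) x) - m * c := by
          rw [Finset.sum_sub_distrib]; simp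
        simp only [e]
        nlinarith [sq_nonneg (∑ j, chiT T (h (y j) x) - 2 * (m * c))]
    _ = 2 * (m * ∫ u, (chiT T (h u x) - c)^2 ∂μ) + 2 * (m*c)^2 := by
        rw [integral_add i1 (integrable_const _), integral_const_mul, this.2]; simp
    _ ≤ _ := by
        have h1 : c^2 ≤ (∫ z, h x z ^2 ∂μ)^2 := pow_le_pow_left₀ c0 cη 2
        have h2 : (m:ℝ) * ∫ u, (chiT T (h u x) - c)^2 ∂μ ≤ m * ∫ u, (chiT T (h u x))^2 ∂μ :=
          mul_le_mul_of_nonneg_left v (by positivity)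
        have h3 := mul_le_mul_of_nonneg_left h1 (sq_nonneg (m:ℝ))
        nlinarith

lemma chi_L (K : KerHyp μ h ρ B a R s2 b2) (T : ℝ) :
    MemLp (fun p : E × E => chiT T (h p.1 p.2)) 2 (μ.prod μ) :=
  MemLp.of_bound (K.mchi T).aestronglyMeasurable (T^2) (Eventually.of_forall fun u => chi_bd T _)

lemma chi_past (K : KerHyp μ h ρ B a R s2 b2) (T : ℝ) (hT : 0 < T) (m : ℕ) :
    MemLp (fun p : (Fin m → E) × E => ∑ j, chiT T (h (p.1 j) p.2)) 2 ((nuP μ m).prod μ) ∧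
    ∫ p : (Fin m → E) × E, (∑ j, chiT T (h (p.1 j) p.2))^2 ∂((nuP μ m).prod μ)
      ≤ 2 * m * (T * (B * a * R)) + 2 * m^2 * (a^2 * R) := by
  have hM : MemLp (fun p : (Fin m → E) × E => ∑ j, chiT T (h (p.1 j) p.2)) 2 ((nuP μ m).prod μ) :=
    memLp_finsetSum _ fun j _ => memLp_eval μ (fun u v => chiT T (h u v)) (K.chi_L T) m j
  refine ⟨hM, ?_⟩
  have c2 : ∫ p : E × E, (chiT T (h p.1 p.2))^2 ∂(μ.prod μ) ≤ T * (B * a * R) := by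
    calc _ ≤ ∫ p : E × E, T * |h p.1 p.2|^3 ∂(μ.prod μ) :=
          integral_mono (K.chi_L T).integrable_sq (K.h3.1.const_mul T) fun p => chi_sq_le T _ hT
      _ ≤ _ := by rw [integral_const_mul]; exact mul_le_mul_of_nonneg_left K.h3.2 hT.le
  rw [integral_prod_symm _ (K.chi_L T).integrable_sq] at c2
  rw [integral_prod_symm _ hM.integrable_sq]
  have i1 : Integrable (fun x => ∫ u, chiT T (h u x)^2 ∂μ) μ :=
    (K.chi_L T).integrable_sq.integral_prod_right
  have i2 := K.ηL.integrable_sq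
  refine (integral_mono_of_nonneg (Eventually.of_forall fun x => integral_nonneg fun _ => sq_nonneg _)
    ((i1.const_mul (2 * m)).add (i2.const_mul (2 * (m:ℝ)^2)))
    (Eventually.of_forall fun x => K.chi_slice T m x)).trans ?_
  simp only [Pi.add_apply]
  rw [integral_add (i1.const_mul (2 * m)) (i2.const_mul (2 * (m:ℝ)^2)), integral_const_mul,
    integral_const_mul]
  have := K.η2
  gcongr

lemma Cbar_L (K : KerHyp μ h ρ B a R s2 b2) (m : ℕ) :
    Measurable (Cbar μ h m) ∧ MemLp (Cbar μ h m) 2 (nuP μ m) ∧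
    ∫ y, (Cbar μ h m y)^2 ∂(nuP μ m) ≤ 4 * m^2 * b2 := by
  have := pair_sum μ (fun u v => ∫ z, h u z * h v z ∂μ) K.mH K.HL
    (fun v => by simpa only [Hsym v] using K.H1L v) K.H1L
    (fun v => by rw [← K.Hcan v]; congr 1; ext u; exact Hsym u v) K.Hcan m
  refine ⟨(measurable_acc (meas_sumA (fun u v => ∫ z, h u z * h v z ∂μ) K.mH) m).const_mul 2, this.1.const_mul 2, ?_⟩
  unfold Cbar
  simp_rw [mul_pow]
  rw [integral_const_mul]
  have h1 := mul_le_mul_of_nonneg_left K.hb2 (sq_nonneg (m:ℝ))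
  nlinarith [this.2]

end KerHyp
end AbstractU4

section AbstractU5
variable {E : Type*} [MeasurableSpace E]

lemma acc_int (μ : Measure E) [IsProbabilityMeasure μ] (A : E → E → ℝ)
    (hm : Measurable (fun p : E × E => A p.1 p.2)) (hI : Integrable (fun p : E × E => A p.1 p.2) (μ.prod μ))
    (h0 : 0 ≤ ∫ p : E × E, A p.1 p.2 ∂(μ.prod μ)) (n : ℕ) :
    Integrable (acc (fun m y x => ∑ j : Fin m, A (y j) x) n) (nuP μ n) ∧
    ∫ y, acc (fun m y x => ∑ j : Fin m, A (y j) x) n y ∂(nuP μ n)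
      ≤ n^2 * ∫ p : E × E, A p.1 p.2 ∂(μ.prod μ) := by
  set I := ∫ p : E × E, A p.1 p.2 ∂(μ.prod μ) with hIdef
  induction n with
  | zero => simp [acc]
  | succ m ih =>
    have mm := measurable_acc (D := fun m (y : Fin m → E) x => ∑ j : Fin m, A (y j) x) (meas_sumA A hm)
    have key : ∀ j : Fin m, Integrable (fun p : (Fin m → E) × E => A (p.1 j) p.2) ((nuP μ m).prod μ) ∧
        ∫ p : (Fin m → E) × E, A (p.1 j) p.2 ∂((nuP μ m).prod μ) = I := by
      intro j
      have h1 := (measurePreserving_eval (fun _ : Fin m => μ) j).prod (MeasurePreserving.id μ)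
      refine ⟨h1.integrable_comp_of_integrable hI, ?_⟩
      rw [hIdef, ← h1.map_eq, integral_map h1.measurable.aemeasurable hm.aestronglyMeasurable]
      rfl
    have i1 : Integrable (fun p : (Fin m → E) × E => acc (fun m y x => ∑ j : Fin m, A (y j) x) m p.1)
        ((nuP μ m).prod μ) := ih.1.comp_fst μ
    have i2 : Integrable (fun p : (Fin m → E) × E => ∑ j, A (p.1 j) p.2) ((nuP μ m).prod μ) :=
      integrable_finsetSum _ fun j _ => (key j).1
    constructor
    · rw [← (mp_snc μ m).integrable_comp (mm (m+1)).aestronglyMeasurable]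
      simp only [Function.comp_def, acc_snc]
      exact i1.add i2
    · rw [integral_snc μ (mm (m+1))]
      simp only [acc_snc]
      rw [integral_add i1 i2, integral_finsetSum _ fun j _ => (key j).1, integral_fun_fst (f := acc (fun m y x => ∑ j : Fin m, A (y j) x) m)]
      simp only [(key _).2]
      have := ih.2
      simp at this ⊢
      nlinarith [mul_nonneg (Nat.cast_nonneg (α := ℝ) m) h0]

namespace KerHyp
variable {μ : Measure E} [IsProbabilityMeasure μ] {h : E → E → ℝ} {ρ : E → ℝ} {B a R s2 b2 : ℝ}

lemma zeta_tail (K : KerHyp μ h ρ B a R s2 b2) {T t : ℝ} (hT : 0 < T) (ht : 0 < t) (n : ℕ) :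
    nuP μ n {y | t < acc (fun m y x => ∑ j : Fin m, zetT T (h (y j) x)) n y}
      ≤ ENNReal.ofReal (n^2 * (B * a * R / T) / t) := by
  have mz : Measurable (fun p : E × E => zetT T (h p.1 p.2)) := (meas_zet T).comp K.hm
  have i3 := K.h3.1.div_const T
  have iz : Integrable (fun p : E × E => zetT T (h p.1 p.2)) (μ.prod μ) := by
    refine i3.mono' mz.aestronglyMeasurable (Eventually.of_forall fun p => ?_)
    rw [Real.norm_of_nonneg (zet_nonneg _ _)]; exact zet_le T _ hT
  have z0 : 0 ≤ ∫ p : E × E, zetT T (h p.1 p.2) ∂(μ.prod μ) := integral_nonneg fun _ => zet_nonneg _ _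
  have zb : ∫ p : E × E, zetT T (h p.1 p.2) ∂(μ.prod μ) ≤ B * a * R / T := by
    refine (integral_mono iz i3 fun p => zet_le T _ hT).trans ?_
    rw [integral_div]
    exact div_le_div_of_nonneg_right K.h3.2 hT.le
  have := acc_int μ (fun u v => zetT T (h u v)) mz iz z0 n
  refine markov (fun y => ?_) this.1 ht (this.2.trans (mul_le_mul_of_nonneg_left zb (by positivity)))
  have := acc_mono (D := fun _ _ _ => 0) (D' := fun m (y : Fin m → E) x => ∑ j : Fin m, zetT T (h (y j) x))
    (fun m y x => Finset.sum_nonneg fun j _ => zet_nonneg _ _) n y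
  have e := acc_const (fun _ : E => (0:ℝ)) n y
  simp at e
  linarith

/-- the martingale part of the truncated quadratic variation -/
def Dm (μ : Measure E) (h : E → E → ℝ) (T : ℝ) (m : ℕ) (y : Fin m → E) (x : E) : ℝ :=
  (∑ j, chiT T (h (y j) x) + Cterm h m y x) - (∑ j, ∫ z, chiT T (h (y j) z) ∂μ + Cbar μ h m y)

lemma D_tail (K : KerHyp μ h ρ B a R s2 b2) {T t : ℝ} (hT : 0 < T) (ht : 0 < t) (n : ℕ)
    (hBaR : 0 ≤ B * a * R) (hR : 0 ≤ R) :
    nuP μ n {y | t < |acc (Dm μ h T) n y|}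
      ≤ ENNReal.ofReal ((4 * n^2 * (T * (B * a * R)) + 12 * n^3 * (a^2 * R)) / t^2) := by
  have mchibar : Measurable (fun u : E => ∫ z, chiT T (h u z) ∂μ) :=
    ((K.mchi T).stronglyMeasurable.integral_prod_right' (ν := μ)).measurable
  have msum : ∀ m, Measurable (fun y : Fin m → E => ∑ j, ∫ z, chiT T (h (y j) z) ∂μ) := fun m =>
    Finset.measurable_sum _ fun j _ => mchibar.comp (measurable_pi_apply j)
  have mJ : ∀ m, Measurable (fun p : (Fin m → E) × E => ∑ j, chiT T (h (p.1 j) p.2) + Cterm h m p.1 p.2) :=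
    fun m => (meas_sumA (fun u v => chiT T (h u v)) (K.mchi T) m).add (K.mC m)
  have mD : ∀ m, Measurable (fun p : (Fin m → E) × E => Dm μ h T m p.1 p.2) := fun m =>
    (mJ m).sub (((msum m).comp measurable_fst).add ((K.Cbar_L m).1.comp measurable_fst))
  have JL : ∀ m, MemLp (fun p : (Fin m → E) × E => ∑ j, chiT T (h (p.1 j) p.2) + Cterm h m p.1 p.2) 2
      ((nuP μ m).prod μ) := fun m => (K.chi_past T hT m).1.add (K.C_L m).1
  have bL : ∀ m, MemLp (fun y : Fin m → E => ∑ j, ∫ z, chiT T (h (y j) z) ∂μ) 2 (nuP μ m) := fun m => by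
    refine memLp_finsetSum _ fun j _ => MemLp.of_bound (mchibar.comp (measurable_pi_apply j)).aestronglyMeasurable
      (T^2) (Eventually.of_forall fun y => ?_)
    refine (norm_integral_le_of_norm_le_const (Eventually.of_forall fun z => chi_bd T _)).trans ?_
    simp
  have DL : ∀ m, MemLp (fun p : (Fin m → E) × E => Dm μ h T m p.1 p.2) 2 ((nuP μ m).prod μ) := fun m =>
    (JL m).sub (((bL m).comp_measurePreserving measurePreserving_fst).add
      ((K.Cbar_L m).2.1.comp_measurePreserving measurePreserving_fst))
  have chiI : ∀ u, Integrable (fun z => chiT T (h u z)) μ := fun u =>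
    (MemLp.of_bound ((meas_chi T).comp (K.mh1 u)).aestronglyMeasurable (T^2)
      (Eventually.of_forall fun z => chi_bd T _) : MemLp _ 1 μ).integrable le_rfl
  have JI : ∀ m (y : Fin m → E), Integrable (fun x => ∑ j, chiT T (h (y j) x) + Cterm h m y x) μ :=
    fun m y => (integrable_finsetSum _ fun j _ => chiI (y j)).add (K.C_int m y).1
  have Jm : ∀ m (y : Fin m → E), ∫ x, (∑ j, chiT T (h (y j) x) + Cterm h m y x) ∂μ
      = ∑ j, ∫ z, chiT T (h (y j) z) ∂μ + Cbar μ h m y := fun m y => by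
    rw [integral_add (integrable_finsetSum _ fun j _ => chiI (y j)) (K.C_int m y).1,
      integral_finsetSum _ fun j _ => chiI (y j), (K.C_int m y).2]
  have D0 : ∀ m y, ∫ x, Dm μ h T m y x ∂μ = 0 := fun m y => by
    unfold Dm
    rw [integral_sub (JI m y) (integrable_const _), Jm]; simp
  have Db : ∀ m, ∫ p : (Fin m → E) × E, (Dm μ h T m p.1 p.2)^2 ∂((nuP μ m).prod μ)
      ≤ 4 * m * (T * (B * a * R)) + 12 * m^2 * (a^2 * R) := fun m => by
    have s1 : ∫ p : (Fin m → E) × E, (Dm μ h T m p.1 p.2)^2 ∂((nuP μ m).prod μ)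
       ≤ ∫ p : (Fin m → E) × E, (∑ j, chiT T (h (p.1 j) p.2) + Cterm h m p.1 p.2)^2 ∂((nuP μ m).prod μ) := by
      rw [integral_prod _ (DL m).integrable_sq, integral_prod _ (JL m).integrable_sq]
      refine integral_mono_ae (DL m).integrable_sq.integral_prod_left (JL m).integrable_sq.integral_prod_left ?_
      filter_upwards [(JL m).integrable_sq.prod_right_ae] with y hy
      have L : MemLp (fun x => ∑ j, chiT T (h (y j) x) + Cterm h m y x) 2 μ :=
        (memLp_two_iff_integrable_sq (JI m y).1).2 hy
      have := int_sq_center μ L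
      rw [Jm] at this
      exact this
    refine s1.trans ?_
    have c1 := K.chi_past T hT m
    have c2 := K.C_L m
    calc _ ≤ ∫ p : (Fin m → E) × E, (2 * (∑ j, chiT T (h (p.1 j) p.2))^2 + 2 * (Cterm h m p.1 p.2)^2) ∂((nuP μ m).prod μ) := by
          refine integral_mono (JL m).integrable_sq ((c1.1.integrable_sq.const_mul 2).add (c2.1.integrable_sq.const_mul 2)) fun p => ?_
          simp only
          nlinarith [sq_nonneg (∑ j, chiT T (h (p.1 j) p.2) - Cterm h m p.1 p.2)]
      _ = 2 * _ + 2 * _ := by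
          rw [integral_add (c1.1.integrable_sq.const_mul 2) (c2.1.integrable_sq.const_mul 2), integral_const_mul, integral_const_mul]
      _ ≤ _ := by linarith [c1.2, c2.2]
  have := orth μ (Dm μ h T) mD DL D0 n
  refine cheb this.1 ht ?_
  rw [this.2]
  calc _ ≤ ∑ m ∈ Finset.range n, (4 * (n:ℝ) * (T * (B * a * R)) + 12 * n^2 * (a^2 * R)) := by
        refine Finset.sum_le_sum fun m hmn => (Db m).trans ?_
        have : (m:ℝ) ≤ n := by exact_mod_cast (Finset.mem_range.1 hmn).le
        gcongr
    _ = _ := by simp; ring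

lemma eta_tail (K : KerHyp μ h ρ B a R s2 b2) {t : ℝ} (ht : 0 < t) (n : ℕ) :
    nuP μ n {y | t < |∑ j, ((∫ z, h (y j) z ^2 ∂μ) - ∫ u, ∫ z, h u z ^2 ∂μ ∂μ)|}
      ≤ ENNReal.ofReal (n * (a^2 * R) / t^2) := by
  have L := K.ηL
  have := sum_iid μ (fun u => (∫ z, h u z ^2 ∂μ) - ∫ u, ∫ z, h u z ^2 ∂μ ∂μ) (K.mη.sub_const _)
    (L.sub (memLp_const _)) (by
      rw [integral_sub (L.integrable (by norm_num)) (integrable_const _)]; simp) n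
  refine cheb this.1 ht ?_
  rw [this.2]
  exact mul_le_mul_of_nonneg_left ((int_sq_center μ L).trans K.η2) (by positivity)

lemma Cbar_tail (K : KerHyp μ h ρ B a R s2 b2) {t : ℝ} (ht : 0 < t) (n : ℕ) :
    nuP μ n {y | t < |acc (fun m y _ => Cbar μ h m y) n y|}
      ≤ ENNReal.ofReal (4 * n^4 * b2 / t^2) := by
  have b0 : 0 ≤ b2 := le_trans (integral_nonneg fun _ => sq_nonneg _) K.hb2
  have := acc_past μ (fun m => Cbar μ h m) (fun m => (K.Cbar_L m).1) (fun m => (K.Cbar_L m).2.1)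
    (2 * n * Real.sqrt b2) (by positivity) n (fun m hmn => (K.Cbar_L m).2.2.trans (by
      rw [mul_pow, mul_pow, Real.sq_sqrt b0]
      have : (m:ℝ) ≤ n := by exact_mod_cast hmn.le
      have h2 : (m:ℝ)^2 ≤ n^2 := pow_le_pow_left₀ (by positivity) this 2
      nlinarith [mul_le_mul_of_nonneg_right h2 b0]))
  refine cheb this.1 ht (this.2.trans (le_of_eq ?_))
  rw [mul_pow, mul_pow, mul_pow, Real.sq_sqrt b0]; ring

/-- quadratic variation -/
def QV (μ : Measure E) (h : E → E → ℝ) : ∀ m : ℕ, (Fin m → E) → E → ℝ :=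
  fun m y x => (∑ j : Fin m, h (y j) x)^2 + ∫ x, (∑ j : Fin m, h (y j) x)^2 ∂μ

lemma mart_tail (K : KerHyp μ h ρ B a R s2 b2) {s z : ℝ} (hs : 0 ≤ s) (hz : 0 < z) (n : ℕ) :
    nuP μ n {y | acc (fun m y x => ∑ j : Fin m, h (y j) x) n y ≤ -s ∧ acc (QV μ h) n y ≤ z}
      ≤ ENNReal.ofReal (Real.exp (-(s^2/(2*z)))) := by
  have mξ : ∀ m, Measurable (fun p : (Fin m → E) × E => -∑ j, h (p.1 j) p.2) := fun m =>
    (meas_sumA h K.hm m).neg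
  have := supermart μ (fun m y x => -∑ j : Fin m, h (y j) x) mξ (fun m y => (K.sumL m y).neg)
    (fun m y => by
      rw [integral_neg, integral_finsetSum _ fun j _ => (K.h1L _).integrable (by norm_num)]
      simp [K.can]) (s/z) n
  have e : ∀ y : Fin n → E, acc (fun m y x => s/z * (-∑ j : Fin m, h (y j) x) - (s/z)^2/2 * (-∑ j : Fin m, h (y j) x)^2
      - (s/z)^2/2 * ∫ x, (-∑ j : Fin m, h (y j) x)^2 ∂μ) n y
      = (-(s/z)) * acc (fun m y x => ∑ j : Fin m, h (y j) x) n y + (-((s/z)^2/2)) * acc (QV μ h) n y := by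
    intro y
    rw [← acc_smul, ← acc_smul, ← acc_add]
    congr 1
    ext m y x
    simp only [QV, neg_sq]; ring
  simp only [e] at this
  have mF : Measurable (fun y : Fin n → E => ENNReal.ofReal (Real.exp ((-(s/z)) * acc (fun m y x => ∑ j : Fin m, h (y j) x) n y + (-((s/z)^2/2)) * acc (QV μ h) n y))) := by
    have m1 := measurable_acc (D := fun m (y : Fin m → E) x => ∑ j : Fin m, h (y j) x) (meas_sumA h K.hm) n
    have m2 : Measurable (acc (QV μ h) n) := by
      refine measurable_acc (fun m => ?_) n
      have q := (meas_sumA h K.hm m).pow_const 2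
      have := (q.stronglyMeasurable.integral_prod_right' (ν := μ)).measurable
      exact q.add (this.comp measurable_fst)
    exact (Real.measurable_exp.comp ((m1.const_mul _).add (m2.const_mul _))).ennreal_ofReal
  have mk := mul_meas_ge_le_lintegral (μ := nuP μ n) mF (ENNReal.ofReal (Real.exp (s^2/(2*z))))
  have hp : 0 < Real.exp (s^2/(2*z)) := Real.exp_pos _
  have sub : {y : Fin n → E | acc (fun m y x => ∑ j : Fin m, h (y j) x) n y ≤ -s ∧ acc (QV μ h) n y ≤ z}
      ⊆ {y | ENNReal.ofReal (Real.exp (s^2/(2*z))) ≤ ENNReal.ofReal (Real.exp ((-(s/z)) * acc (fun m y x => ∑ j : Fin m, h (y j) x) n y + (-((s/z)^2/2)) * acc (QV μ h) n y))} := by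
    rintro y ⟨h1, h2⟩
    refine ENNReal.ofReal_le_ofReal (Real.exp_le_exp.2 ?_)
    have a1 : 0 ≤ s/z := by positivity
    have e1 : s^2/(2*z) = (s/z) * s - (s/z)^2/2 * z := by field_simp; ring
    rw [e1]
    have q1 := mul_le_mul_of_nonneg_left h1 a1
    have q2 := mul_le_mul_of_nonneg_left h2 (show 0 ≤ (s/z)^2/2 by positivity)
    linarith
  refine (measure_mono sub).trans ?_
  rw [Real.exp_neg, ENNReal.ofReal_inv_of_pos hp, ENNReal.le_inv_iff_mul_le, mul_comm]
  exact mk.trans this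

lemma QV_le (K : KerHyp μ h ρ B a R s2 b2) {T : ℝ} (n : ℕ) (y : Fin n → E) :
    acc (QV μ h) n y ≤ acc (fun m y x => ∑ j : Fin m, zetT T (h (y j) x)) n y + acc (Dm μ h T) n y
      + 2 * (n * ∑ j, ∫ z, h (y j) z ^2 ∂μ) + 2 * acc (fun m y _ => Cbar μ h m y) n y := by
  have a1 := acc_sum_le (fun u => ∫ z, h u z ^2 ∂μ) (fun u => η0 u) n y
  have : acc (QV μ h) n y ≤ acc (fun m y x => ((∑ j : Fin m, zetT T (h (y j) x) + Dm μ h T m y x)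
      + 2 * ∑ j : Fin m, ∫ z, h (y j) z ^2 ∂μ) + 2 * Cbar μ h m y) n y := by
    refine acc_mono (fun m y x => ?_) n y
    unfold QV
    rw [K.sq_int]
    have e1 : (∑ j : Fin m, h (y j) x)^2 = Cterm h m y x + ∑ j, h (y j) x ^2 := by unfold Cterm; ring
    have e2 : ∑ j, h (y j) x ^2 = ∑ j, chiT T (h (y j) x) + ∑ j, zetT T (h (y j) x) := by
      rw [← Finset.sum_add_distrib]; simp only [chi_add_zet]
    have e3 : ∑ j, ∫ z, chiT T (h (y j) z) ∂μ ≤ ∑ j, ∫ z, h (y j) z ^2 ∂μ := by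
      refine Finset.sum_le_sum fun j _ => ?_
      exact integral_mono_of_nonneg (Eventually.of_forall fun z => chi_nonneg _ _)
        (K.h1L _).integrable_sq (Eventually.of_forall fun z => chi_le _ _)
    unfold Dm
    rw [e1, e2]
    linarith
  rw [acc_add (fun m y x => ((∑ j : Fin m, zetT T (h (y j) x) + Dm μ h T m y x)
      + 2 * ∑ j : Fin m, ∫ z, h (y j) z ^2 ∂μ)) (fun m y x => 2 * Cbar μ h m y),
    acc_add (fun m y x => (∑ j : Fin m, zetT T (h (y j) x) + Dm μ h T m y x))
      (fun m y x => 2 * ∑ j : Fin m, ∫ z, h (y j) z ^2 ∂μ),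
    acc_add (fun m y x => ∑ j : Fin m, zetT T (h (y j) x)) (fun m y x => Dm μ h T m y x),
    acc_smul 2 (fun m y x => ∑ j : Fin m, ∫ z, h (y j) z ^2 ∂μ), acc_smul 2 (fun m y x => Cbar μ h m y)] at this
  linarith

theorem U_tail (K : KerHyp μ h ρ B a R s2 b2) {T t1 t2 t3 t4 z s : ℝ} (n : ℕ) (hT : 0 < T)
    (h1 : 0 < t1) (h2 : 0 < t2) (h3 : 0 < t3) (h4 : 0 < t4) (hs : 0 ≤ s)
    (hz : t1 + t2 + 2 * (n^2 * s2 + n * t3) + 2 * t4 ≤ z) :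
    nuP μ n {y | acc (fun m y x => ∑ j : Fin m, h (y j) x) n y ≤ -s}
      ≤ ENNReal.ofReal (Real.exp (-(s^2/(2*z)))) + (ENNReal.ofReal (n^2 * (B * a * R / T) / t1)
        + (ENNReal.ofReal ((4 * n^2 * (T * (B * a * R)) + 12 * n^3 * (a^2 * R)) / t2^2)
        + (ENNReal.ofReal (n * (a^2 * R) / t3^2) + ENNReal.ofReal (4 * n^4 * b2 / t4^2)))) := by
  have R0 : 0 ≤ R := le_trans (integral_nonneg fun x => by have := K.ρ0 x; positivity) K.ρR
  have BaR : 0 ≤ B * a * R := mul_nonneg (mul_nonneg K.B0 K.a0) R0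
  have s20 : 0 ≤ s2 := le_trans (integral_nonneg fun x => η0 x) K.hs2
  have z0 : 0 < z := by
    have : 0 ≤ 2 * ((n:ℝ)^2 * s2 + n * t3) := by positivity
    linarith
  have sub : {y : Fin n → E | acc (fun m y x => ∑ j : Fin m, h (y j) x) n y ≤ -s} ⊆
      {y | acc (fun m y x => ∑ j : Fin m, h (y j) x) n y ≤ -s ∧ acc (QV μ h) n y ≤ z} ∪
      ({y | t1 < acc (fun m y x => ∑ j : Fin m, zetT T (h (y j) x)) n y} ∪
      ({y | t2 < |acc (Dm μ h T) n y|} ∪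
      ({y | t3 < |∑ j, ((∫ z, h (y j) z ^2 ∂μ) - ∫ u, ∫ z, h u z ^2 ∂μ ∂μ)|} ∪
      {y | t4 < |acc (fun m y _ => Cbar μ h m y) n y|}))) := by
    intro y hy
    by_contra hc
    simp only [mem_union, mem_setOf_eq, not_or, not_and, not_lt, not_le] at hc hy
    obtain ⟨c0, c1, c2, c3, c4⟩ := hc
    have c0 := c0 hy
    have q := K.QV_le (T := T) n y
    have e : ∑ j, ((∫ z, h (y j) z ^2 ∂μ) - ∫ u, ∫ z, h u z ^2 ∂μ ∂μ)
        = ∑ j, (∫ z, h (y j) z ^2 ∂μ) - n * ∫ u, ∫ z, h u z ^2 ∂μ ∂μ := by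
      rw [Finset.sum_sub_distrib]; simp
    rw [e] at c3
    have c3 := le_of_abs_le c3
    have c2 := le_of_abs_le c2
    have c4 := le_of_abs_le c4
    have n0 : (0:ℝ) ≤ n := by positivity
    have : ∑ j, (∫ z, h (y j) z ^2 ∂μ) ≤ n * s2 + t3 := by
      have := mul_le_mul_of_nonneg_left K.hs2 n0
      linarith
    have := mul_le_mul_of_nonneg_left this n0
    nlinarith
  refine (measure_mono sub).trans ?_
  refine (measure_union_le _ _).trans (add_le_add (K.mart_tail hs z0 n) ?_)
  refine (measure_union_le _ _).trans (add_le_add (K.zeta_tail hT h1 n) ?_)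
  refine (measure_union_le _ _).trans (add_le_add (K.D_tail hT h2 n BaR R0) ?_)
  exact (measure_union_le _ _).trans (add_le_add (K.eta_tail h3 n) (K.Cbar_tail h4 n))

end KerHyp
end AbstractU5

section AbstractU6
variable {E : Type*} [MeasurableSpace E]

lemma num_z {N c V W S d e β l : ℝ} (hN : 2 ≤ N) (hc : 1 ≤ c) (hV : 1 ≤ V) (hW : V^2 ≤ W)
    (hS : 1 ≤ S) (hd : 0 < d) (he : 0 < e) (hβ : 0 < β) (hl : 1 ≤ l) :
    2 * l^2 * (6 * N^2 * c^2 * W^2 * d^2 + 1152 * N * S * c * W * d^2 / β + 12 * N^2 * (c * V) * (c * W) * e * d / β)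
      ≤ (N * (N-1) / 2 * (18 * (c * W) * l * d / N + 138986 * (l^3 / β) * (S / N) * d / N
          + 48 * (c * V) * (l^2/β) * e / N))^2 := by
  set A := c * W * d with hA
  set X := S * d / (β * N) with hX
  set Z := c * V * e / β with hZ
  have V0 : 0 < V := by linarith
  have W0 : 0 < W := lt_of_lt_of_le (by positivity) hW
  have N0 : 0 < N := by linarith
  have A0 : 0 < A := by positivity
  have X0 : 0 < X := by positivity
  have Z0 : 0 < Z := by positivity
  have e1 : N * (N-1) / 2 * (18 * (c * W) * l * d / N + 138986 * (l^3 / β) * (S / N) * d / N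
          + 48 * (c * V) * (l^2/β) * e / N) = (N-1)/2 * (18 * l * A + 138986 * l^3 * X + 48 * l^2 * Z) := by
    simp only [hA, hX, hZ]; field_simp
  have e2 : (6 * N^2 * c^2 * W^2 * d^2 + 1152 * N * S * c * W * d^2 / β + 12 * N^2 * (c * V) * (c * W) * e * d / β)
      = N^2 * (6 * A^2 + 1152 * A * X + 12 * A * Z) := by
    simp only [hA, hX, hZ]; field_simp
  rw [e1, e2]
  have l0 : 0 < l := by linarith
  have b1 : l * (N/4 * (18 * A + 138986 * X + 48 * Z)) ≤ (N-1)/2 * (18 * l * A + 138986 * l^3 * X + 48 * l^2 * Z) := by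
    have h3 : l * X ≤ l^3 * X := by
      have : l ≤ l^3 := by nlinarith [sq_nonneg (l-1), sq_nonneg l, mul_pos l0 l0]
      exact mul_le_mul_of_nonneg_right this X0.le
    have h2 : l * Z ≤ l^2 * Z := mul_le_mul_of_nonneg_right (by nlinarith) Z0.le
    have : l * (18 * A + 138986 * X + 48 * Z) ≤ (18 * l * A + 138986 * l^3 * X + 48 * l^2 * Z) := by linarith
    have p : 0 < l * (18 * A + 138986 * X + 48 * Z) := by positivity
    calc _ = N/4 * (l * (18 * A + 138986 * X + 48 * Z)) := by ring
      _ ≤ (N-1)/2 * (l * (18 * A + 138986 * X + 48 * Z)) := mul_le_mul_of_nonneg_right (by linarith) p.le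
      _ ≤ _ := mul_le_mul_of_nonneg_left this (by linarith)
  refine le_trans ?_ (pow_le_pow_left₀ (by positivity) b1 2)
  have : 2 * (6 * A^2 + 1152 * A * X + 12 * A * Z) ≤ 1/16 * (18 * A + 138986 * X + 48 * Z)^2 := by
    have p1 := mul_pos A0 X0
    have p2 := mul_pos A0 Z0
    have p3 := mul_pos X0 Z0
    nlinarith [sq_nonneg A, sq_nonneg X, sq_nonneg Z]
  have := mul_le_mul_of_nonneg_left this (show 0 ≤ l^2 * N^2 by positivity)
  linarith

namespace KerHyp
variable {μ : Measure E} [IsProbabilityMeasure μ] {h : E → E → ℝ} {ρ : E → ℝ}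

set_option maxHeartbeats 1000000 in
theorem U_final {c V W S d e β l : ℝ} (n : ℕ)
    (K : KerHyp μ h ρ (S*d) (c*V*d^2) (16*W) (c*V*V*d^2) ((c*V)^3*V*e^2*d^2))
    (hn : 2 ≤ n) (hc : 1 ≤ c) (hV : 1 ≤ V) (hW : V^2 ≤ W)
    (hS : 1 ≤ S) (hd : 0 < d) (he : 0 < e) (hβ : 0 < β) (hβ1 : β < 1) (hl : 1 ≤ l)
    (hlβ : Real.log (4/β) ≤ l^2) :
    nuP μ n {y | acc (fun m y x => ∑ j : Fin m, h (y j) x) n y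
      ≤ -((n:ℝ) * (n-1) / 2 * (18 * (c * W) * l * d / n + 138986 * (l^3 / β) * (S / n) * d / n
          + 48 * (c * V) * (l^2/β) * e / n))} ≤ ENNReal.ofReal (3 * β / 4) := by
  have hN : (2:ℝ) ≤ n := by exact_mod_cast hn
  generalize hNN : (n:ℝ) = N at hN
  have V0 : 0 < V := by linarith
  have W0 : 0 < W := lt_of_lt_of_le (by positivity) hW
  have N0 : 0 < N := by linarith
  have N1 : 0 < N - 1 := by linarith
  have VW : V ≤ W := by nlinarith
  have W1 : 1 ≤ W := by linarith
  have hz := num_z hN hc hV hW hS hd he hβ hl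
  set s := (N * (N-1) / 2 * (18 * (c * W) * l * d / N + 138986 * (l^3 / β) * (S / N) * d / N
          + 48 * (c * V) * (l^2/β) * e / N)) with hs
  set z := (6 * N^2 * c^2 * W^2 * d^2 + 1152 * N * S * c * W * d^2 / β + 12 * N^2 * (c * V) * (c * W) * e * d / β) with hzz
  have s0 : 0 ≤ s := by rw [hs]; positivity
  have z0 : 0 < z := by rw [hzz]; positivity
  have key := K.U_tail (T := 128 * S * d / β) (t1 := N^2 * (c*V) * W * d^2)
    (t2 := N^2 * (c * W) * d^2 + 1024 * N * S * (c * W) * d^2 / β)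
    (t3 := N * (c * W) * d^2 + 64 * (c * W) * d^2 / β)
    (t4 := 6 * N^2 * (c*V) * (c*W) * e * d / β) (z := z) (s := s) n (by positivity) (by positivity)
    (by positivity) (by positivity) (by positivity) s0 (by
      rw [hNN, hzz]
      have c1 : c * V * W ≤ c^2 * W^2 := by
        calc c * V * W ≤ c * W * W := by gcongr
          _ = 1 * (c * W^2) := by ring
          _ ≤ c * (c * W^2) := by gcongr
          _ = _ := by ring
      have c2 : c * W ≤ c^2 * W^2 := by
        have : 1 ≤ c * W := by nlinarith
        nlinarith
      have c3 : c * V * V ≤ c^2 * W^2 := by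
        refine le_trans ?_ c1
        gcongr
      have m1 := mul_le_mul_of_nonneg_left c1 (show 0 ≤ N^2 * d^2 by positivity)
      have m2 := mul_le_mul_of_nonneg_left c2 (show 0 ≤ N^2 * d^2 by positivity)
      have m3 := mul_le_mul_of_nonneg_left c3 (show 0 ≤ N^2 * d^2 by positivity)
      have m4 : 128 * N * (c * W) * d^2 / β ≤ 128 * N * S * (c * W) * d^2 / β := by
        have := le_mul_of_one_le_right (show 0 ≤ 128 * N * (c * W) * d^2 / β by positivity) hS
        refine this.trans (le_of_eq ?_)
        ring
      have x1 : 2 * (N * (64 * (c * W) * d^2 / β)) = 128 * N * (c * W) * d^2 / β := by ring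
      have x2 : 1152 * N * S * c * W * d^2 / β = 1024 * N * S * (c * W) * d^2 / β + 128 * N * S * (c * W) * d^2 / β := by ring
      have x3 : 12 * N^2 * (c * V) * (c * W) * e * d / β = 2 * (6 * N^2 * (c*V) * (c*W) * e * d / β) := by ring
      rw [x2, x3]
      linarith)
  rw [hNN] at key
  refine key.trans ?_
  have b0 : Real.exp (-(s^2/(2*z))) ≤ β/4 := by
    have : l^2 ≤ s^2/(2*z) := by
      rw [le_div_iff₀ (by positivity)]; linarith
    have e1 : β/4 = Real.exp (-Real.log (4/β)) := by
      rw [Real.exp_neg, Real.exp_log (by positivity)]; field_simp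
    rw [e1]; exact Real.exp_le_exp.2 (by linarith)
  have b1 : N^2 * (S*d * (c*V*d^2) * (16*W) / (128 * S * d / β)) / (N^2 * (c*V) * W * d^2) ≤ β/8 := by
    apply le_of_eq; field_simp; norm_num
  have c1 : c * V * W ≤ (c*W)^2 := by
    calc c * V * W ≤ c * W * W := by gcongr
          _ = 1 * (c * W^2) := by ring
          _ ≤ c * (c * W^2) := by gcongr
          _ = _ := by ring
  have c2 : (c*V)^2 * W ≤ (c*W)^2 := by
    calc _ = c^2 * V^2 * W := by ring
      _ ≤ c^2 * W * W := by gcongr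
      _ = _ := by ring
  have b2 : (4 * N^2 * (128 * S * d / β * (S*d * (c*V*d^2) * (16*W))) + 12 * N^3 * ((c*V*d^2)^2 * (16 * W)))
      / (N^2 * (c * W) * d^2 + 1024 * N * S * (c * W) * d^2 / β)^2 ≤ β/8 := by
    rw [div_le_iff₀ (by positivity)]
    have m1 := mul_le_mul_of_nonneg_left c1 (show 0 ≤ 8192 * N^2 * S^2 * d^4 / β by positivity)
    have m2 := mul_le_mul_of_nonneg_left c2 (show 0 ≤ 192 * N^3 * d^4 by positivity)
    have q : (N^2 * (c * W) * d^2 + 1024 * N * S * (c * W) * d^2 / β)^2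
       = N^4 * (c*W)^2 * d^4 + 2048 * N^3 * S * (c*W)^2 * d^4 / β + 1048576 * N^2 * S^2 * (c*W)^2 * d^4/ β^2 := by
      field_simp; ring
    have q2 : β/8 * (N^2 * (c * W) * d^2 + 1024 * N * S * (c * W) * d^2 / β)^2
       = β/8 * (N^4 * (c*W)^2 * d^4) + 256 * N^3 * S * (c*W)^2 * d^4 + 131072 * N^2 * S^2 * (c*W)^2 * d^4/ β := by
      rw [q]; field_simp; ring
    rw [q2]
    have q3 : N^3 * (c*W)^2 * d^4 ≤ N^3 * (c*W)^2 * d^4 * S := le_mul_of_one_le_right (by positivity) hS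
    have p1 : 0 ≤ β/8 * (N^4 * (c*W)^2 * d^4) := by positivity
    have p2 : 0 ≤ N^3 * (c*W)^2 * d^4 := by positivity
    have p3 : 0 ≤ N^2 * S^2 * (c*W)^2 * d^4 / β := by positivity
    have y1 : 4 * N^2 * (128 * S * d / β * (S*d * (c*V*d^2) * (16*W))) = 8192 * N^2 * S^2 * d^4 / β * (c * V * W) := by ring
    have y2 : 12 * N^3 * ((c*V*d^2)^2 * (16 * W)) = 192 * N^3 * d^4 * ((c*V)^2*W) := by ring
    have y3 : 8192 * N^2 * S^2 * d^4 / β * (c*W)^2 = 8192 * (N^2 * S^2 * (c*W)^2 * d^4 / β) := by ring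
    have y4 : 131072 * N^2 * S^2 * (c*W)^2 * d^4/ β = 131072 * (N^2 * S^2 * (c*W)^2 * d^4/ β) := by ring
    rw [y1, y2, y4]
    rw [y3] at m1
    linarith
  have b3 : N * ((c*V*d^2)^2 * (16*W)) / (N * (c * W) * d^2 + 64 * (c * W) * d^2 / β)^2 ≤ β/8 := by
    rw [div_le_iff₀ (by positivity)]
    have m2 := mul_le_mul_of_nonneg_left c2 (show 0 ≤ 16 * N * d^4 by positivity)
    have q2 : β/8 * (N * (c * W) * d^2 + 64 * (c * W) * d^2 / β)^2
       = β/8 * (N^2 * (c*W)^2 * d^4) + 16 * N * (c*W)^2 * d^4 + 512 * (c*W)^2 * d^4/ β := by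
      field_simp; ring
    rw [q2]
    have p1 : 0 ≤ β/8 * (N^2 * (c*W)^2 * d^4) := by positivity
    have p3 : 0 ≤ 512 * (c*W)^2 * d^4 / β := by positivity
    nlinarith
  have b4 : 4 * N^4 * ((c*V)^3*V*e^2*d^2) / (6 * N^2 * (c*V) * (c*W) * e * d / β)^2 ≤ β/8 := by
    rw [div_le_iff₀ (by positivity)]
    have q : β/8 * (6 * N^2 * (c*V) * (c*W) * e * d / β)^2 = 9/2 * (N^4 * (c*V)^2 * e^2 * d^2) * ((c*W)^2 / β) := by
      field_simp; norm_num
    rw [q]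
    have q2 : c * V^2 ≤ (c*W)^2 / β := by
      rw [le_div_iff₀ hβ]
      calc c * V^2 * β ≤ c * V^2 * 1 := by gcongr
        _ = 1 * (c * V^2) := by ring
        _ ≤ c * (c * W^2) := by gcongr
        _ = _ := by ring
    have m := mul_le_mul_of_nonneg_left q2 (show 0 ≤ (N^4 * (c*V)^2 * e^2 * d^2) by positivity)
    have p : 0 ≤ (N^4 * (c*V)^2 * e^2 * d^2) * (c * V^2) := by positivity
    have y : 4 * N^4 * ((c*V)^3*V*e^2*d^2) = 4 * ((N^4 * (c*V)^2 * e^2 * d^2) * (c * V^2)) := by ring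
    rw [y]; nlinarith
  calc _ ≤ ENNReal.ofReal (β/4) + (ENNReal.ofReal (β/8) + (ENNReal.ofReal (β/8) + (ENNReal.ofReal (β/8) + ENNReal.ofReal (β/8)))) := by
        gcongr
    _ = _ := by
        rw [← ENNReal.ofReal_add (by positivity) (by positivity), ← ENNReal.ofReal_add (by positivity) (by positivity),
          ← ENNReal.ofReal_add (by positivity) (by positivity), ← ENNReal.ofReal_add (by positivity) (by positivity)]
        congr 1; ring

end KerHyp
end AbstractU6

section PartB1

/-- additive character -/
def ech (u : ℝ) : ℂ := Complex.exp (2 * Real.pi * Complex.I * u)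

lemma ech_norm (u : ℝ) : ‖ech u‖ = 1 := by
  unfold ech
  have : (2 * Real.pi * Complex.I * u : ℂ) = ((2 * Real.pi * u : ℝ) : ℂ) * Complex.I := by push_cast; ring
  rw [this, Complex.norm_exp_ofReal_mul_I]

lemma ech_cont : Continuous ech := by unfold ech; fun_prop

lemma ech_conj (u : ℝ) : (starRingEnd ℂ) (ech u) = ech (-u) := by
  unfold ech
  rw [← Complex.exp_conj]
  congr 1
  simp only [map_mul, Complex.conj_ofReal, Complex.conj_I, Complex.conj_ofNat]
  push_cast; ring

lemma ech_add (u v : ℝ) : ech (u + v) = ech u * ech v := by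
  unfold ech
  rw [← Complex.exp_add]; congr 1; push_cast; ring

/-- Gaussian weight -/
def gau (ε s : ℝ) : ℝ := Real.exp (-(Real.pi * ε) * s^2)

lemma gau_int {ε : ℝ} (hε : 0 < ε) : Integrable (gau ε) :=
  integrable_exp_neg_mul_sq (by positivity)

lemma gau_pos (ε s : ℝ) : 0 < gau ε s := Real.exp_pos _

lemma gau_four {ε : ℝ} (hε : 0 < ε) (u : ℝ) :
    ∫ s, (gau ε s : ℂ) * ech (u * s) = ((ε⁻¹ ^ (1/2:ℝ) * Real.exp (-(Real.pi / ε) * u^2) : ℝ) : ℂ) := by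
  have hb : 0 < ((Real.pi * ε : ℝ) : ℂ).re := by simp; positivity
  have := fourierIntegral_gaussian hb ((2 * Real.pi * u : ℝ) : ℂ)
  have e : ∀ s : ℝ, (gau ε s : ℂ) * ech (u * s) = Complex.exp (Complex.I * ((2 * Real.pi * u : ℝ) : ℂ) * s) * Complex.exp (-((Real.pi * ε : ℝ) : ℂ) * s^2) := by
    intro s
    unfold gau ech
    push_cast
    rw [mul_comm]; congr 2; ring
  simp_rw [e]
  rw [this]
  have e1 : (Real.pi : ℂ) / ((Real.pi * ε : ℝ) : ℂ) = ((ε⁻¹ : ℝ) : ℂ) := by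
    push_cast
    have := Real.pi_ne_zero
    have h2 : (Real.pi : ℂ) ≠ 0 := by exact_mod_cast this
    field_simp
  rw [e1]
  have e2 : ((ε⁻¹ : ℝ) : ℂ) ^ (1/2:ℂ) = ((ε⁻¹ ^ (1/2:ℝ) : ℝ) : ℂ) := by
    rw [Complex.ofReal_cpow (by positivity)]; simp
  rw [e2]
  have e3 : -((2 * Real.pi * u : ℝ) : ℂ)^2 / (4 * ((Real.pi * ε : ℝ) : ℂ)) = ((-(Real.pi / ε) * u^2 : ℝ) : ℂ) := by
    rw [← Complex.ofReal_pow, ← Complex.ofReal_neg]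
    have : (4 : ℂ) = ((4:ℝ):ℂ) := by norm_cast
    rw [this, ← Complex.ofReal_mul, ← Complex.ofReal_div]
    congr 1
    have := Real.pi_ne_zero
    field_simp; ring
  rw [e3]; push_cast; rfl

/-- dual Gaussian kernel -/
def gker (ε u : ℝ) : ℝ := ε⁻¹ ^ (1/2:ℝ) * Real.exp (-(Real.pi / ε) * u^2)

lemma gker_nonneg {ε : ℝ} (hε : 0 < ε) (u : ℝ) : 0 ≤ gker ε u := by unfold gker; positivity

lemma gker_int {ε : ℝ} (hε : 0 < ε) : Integrable (gker ε) ∧ ∫ u, gker ε u = 1 := by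
  refine ⟨(integrable_exp_neg_mul_sq (by positivity)).const_mul _, ?_⟩
  unfold gker
  rw [integral_const_mul, integral_gaussian, Real.sqrt_eq_rpow, ← Real.mul_rpow (by positivity) (by positivity)]
  have : ε⁻¹ * (Real.pi / (Real.pi / ε)) = 1 := by
    have := Real.pi_ne_zero
    field_simp
  rw [this, Real.one_rpow]

lemma gker_lint {ε : ℝ} (hε : 0 < ε) : ∫⁻ u, ENNReal.ofReal (gker ε u) = 1 := by
  rw [← ofReal_integral_eq_lintegral_ofReal (gker_int hε).1 (Eventually.of_forall (gker_nonneg hε)), (gker_int hε).2]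
  simp

lemma gker_cont (ε : ℝ) : Continuous (gker ε) := by unfold gker; fun_prop

/-- Fourier integral -/
def fint (a : ℝ → ℂ) (s : ℝ) : ℂ := ∫ t, ech (t * s) * a t

lemma ech_mul_int {a : ℝ → ℂ} (ha : Integrable a) (s : ℝ) : Integrable (fun t => ech (t * s) * a t) := by
  refine ha.norm.mono' ?_ (Eventually.of_forall fun t => by rw [norm_mul, ech_norm, one_mul])
  exact (ech_cont.comp (by fun_prop : Continuous fun t : ℝ => t * s)).aestronglyMeasurable.mul ha.1

lemma fint_cont {a : ℝ → ℂ} (ha : Integrable a) : Continuous (fint a) := by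
  unfold fint
  refine continuous_of_dominated (bound := fun t => ‖a t‖) (fun s => (ech_mul_int ha s).1) (fun s => Eventually.of_forall fun t => by
    rw [norm_mul, ech_norm, one_mul]) ha.norm (Eventually.of_forall fun t => ?_)
  exact (ech_cont.comp (by fun_prop : Continuous fun s : ℝ => t * s)).mul continuous_const

lemma fint_sq {a : ℝ → ℂ} (ha : Integrable a) (s : ℝ) :
    ((‖fint a s‖^2 : ℝ) : ℂ) = ∫ p : ℝ × ℝ, ech ((p.1 - p.2) * s) * (a p.1 * (starRingEnd ℂ) (a p.2)) := by
  rw [Complex.ofReal_pow, ← Complex.mul_conj']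
  unfold fint
  rw [← integral_conj, Measure.volume_eq_prod, ← integral_prod_mul]
  congr 1
  ext p
  rw [map_mul, ech_conj, sub_mul, sub_eq_add_neg, ech_add]
  ring

lemma fint_gau {a : ℝ → ℂ} (ha : Integrable a) {ε : ℝ} (hε : 0 < ε) :
    ((∫ s, ‖fint a s‖^2 * gau ε s : ℝ) : ℂ) = ∫ p : ℝ × ℝ, (gker ε (p.1 - p.2) : ℂ) * (a p.1 * (starRingEnd ℂ) (a p.2)) := by
  rw [← integral_complex_ofReal]
  have e1 : ∀ s : ℝ, ((‖fint a s‖^2 * gau ε s : ℝ) : ℂ) = ∫ p : ℝ × ℝ, (gau ε s : ℂ) * ech ((p.1 - p.2) * s) * (a p.1 * (starRingEnd ℂ) (a p.2)) := by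
    intro s
    rw [Complex.ofReal_mul, fint_sq ha, mul_comm, ← integral_const_mul]
    congr 1; ext p; ring
  simp_rw [e1]
  have ip : Integrable (fun p : ℝ × ℝ => a p.1 * (starRingEnd ℂ) (a p.2)) := by
    rw [Measure.volume_eq_prod]
    have hs : Integrable (fun t => (starRingEnd ℂ) (a t)) := by
      refine ha.norm.mono' (Complex.continuous_conj.comp_aestronglyMeasurable ha.1) (Eventually.of_forall fun t => by simp)
    exact ha.mul_prod hs
  rw [integral_integral_swap]
  · congr 1
    ext p
    rw [integral_mul_const, gau_four hε]; rfl
  · have := (gau_int hε).ofReal (𝕜 := ℂ) |>.mul_prod ip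
    have h2 : Integrable (fun z : ℝ × (ℝ × ℝ) => ech ((z.2.1 - z.2.2) * z.1) * (((gau ε z.1 : ℝ) : ℂ) * (a z.2.1 * (starRingEnd ℂ) (a z.2.2)))) (volume.prod volume) := by
      refine this.norm.mono' ?_ (Eventually.of_forall fun t => by rw [norm_mul, ech_norm, one_mul]; rfl)
      exact (ech_cont.comp (by fun_prop : Continuous fun z : ℝ × (ℝ × ℝ) => (z.2.1 - z.2.2) * z.1)).aestronglyMeasurable.mul this.1
    convert h2 using 1
    ext z; simp only [Function.uncurry]; ring

set_option maxHeartbeats 800000 in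
lemma fint_gau_le {a : ℝ → ℂ} (ha : Integrable a) (ham : Measurable a) {ε : ℝ} (hε : 0 < ε) :
    ∫⁻ s, ‖fint a s‖ₑ^2 * ENNReal.ofReal (gau ε s) ≤ ∫⁻ t, ‖a t‖ₑ^2 := by
  have i1 : Integrable (fun s => ‖fint a s‖^2 * gau ε s) := by
    refine ((gau_int hε).const_mul ((∫ t, ‖a t‖)^2)).mono' ?_ (Eventually.of_forall fun s => ?_)
    · exact ((fint_cont ha).norm.pow 2).aestronglyMeasurable.mul (gau_int hε).1
    · rw [Real.norm_of_nonneg (mul_nonneg (sq_nonneg _) (gau_pos ε s).le)]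
      refine mul_le_mul_of_nonneg_right (pow_le_pow_left₀ (norm_nonneg _) ?_ 2) (gau_pos ε s).le
      refine (norm_integral_le_integral_norm _).trans (le_of_eq ?_)
      simp only [norm_mul, ech_norm, one_mul]
  have e1 : ∫⁻ s, ‖fint a s‖ₑ^2 * ENNReal.ofReal (gau ε s) = ENNReal.ofReal (∫ s, ‖fint a s‖^2 * gau ε s) := by
    rw [ofReal_integral_eq_lintegral_ofReal i1 (Eventually.of_forall fun s => mul_nonneg (sq_nonneg _) (gau_pos ε s).le)]
    congr 1; ext s
    rw [ENNReal.ofReal_mul (sq_nonneg _), ENNReal.ofReal_pow (norm_nonneg _), ofReal_norm]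
  rw [e1]
  have n0 : 0 ≤ ∫ s, ‖fint a s‖^2 * gau ε s := integral_nonneg fun s => mul_nonneg (sq_nonneg _) (gau_pos ε s).le
  have e2 : ENNReal.ofReal (∫ s, ‖fint a s‖^2 * gau ε s) = ‖∫ p : ℝ × ℝ, (gker ε (p.1 - p.2) : ℂ) * (a p.1 * (starRingEnd ℂ) (a p.2))‖ₑ := by
    rw [← fint_gau ha hε, ← ofReal_norm, Complex.norm_real, Real.norm_of_nonneg n0]
  rw [e2]
  refine (enorm_integral_le_lintegral_enorm _).trans ?_
  have mk : Measurable (fun p : ℝ × ℝ => ENNReal.ofReal (gker ε (p.1 - p.2))) :=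
    ((gker_cont ε).measurable.comp (measurable_fst.sub measurable_snd)).ennreal_ofReal
  have ma : Measurable (fun t => ‖a t‖ₑ^2) := ham.enorm.pow_const 2
  have key : ∀ x y : ℝ≥0∞, x * y ≤ x^2/2 + y^2/2 := by
    intro x y
    rcases eq_or_ne x ⊤ with rfl | hx
    · simp [ENNReal.top_div]
    rcases eq_or_ne y ⊤ with rfl | hy
    · simp [ENNReal.top_div]
    lift x to NNReal using hx
    lift y to NNReal using hy
    have : (x * y : NNReal) ≤ x^2/2 + y^2/2 := by
      rw [← NNReal.coe_le_coe]; push_cast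
      nlinarith [sq_nonneg ((x:ℝ) - y)]
    have h2 := ENNReal.coe_le_coe.2 this
    push_cast at h2
    simpa [ENNReal.coe_div] using h2
  have k1 : ∀ x, Measurable (fun y => ENNReal.ofReal (gker ε (x - y))) := fun x =>
    ((gker_cont ε).measurable.comp (measurable_id.const_sub x)).ennreal_ofReal
  have k2 : ∀ x, Measurable (fun y => ENNReal.ofReal (gker ε (y - x))) := fun x =>
    ((gker_cont ε).measurable.comp (measurable_id.sub_const x)).ennreal_ofReal
  have m1 : Measurable (fun p : ℝ × ℝ => ENNReal.ofReal (gker ε (p.1 - p.2)) * (‖a p.1‖ₑ^2/2)) :=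
    mk.mul ((ma.comp measurable_fst).div_const 2)
  have m2 : Measurable (fun p : ℝ × ℝ => ENNReal.ofReal (gker ε (p.1 - p.2)) * (‖a p.2‖ₑ^2/2)) :=
    mk.mul ((ma.comp measurable_snd).div_const 2)
  calc _ ≤ ∫⁻ p : ℝ × ℝ, (ENNReal.ofReal (gker ε (p.1 - p.2)) * (‖a p.1‖ₑ^2/2) + ENNReal.ofReal (gker ε (p.1 - p.2)) * (‖a p.2‖ₑ^2/2)) := by
        refine lintegral_mono fun p => ?_
        rw [enorm_mul, enorm_mul, ← mul_add, ← ofReal_norm, Complex.norm_real, Real.norm_of_nonneg (gker_nonneg hε _), RCLike.enorm_conj]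
        gcongr
        exact key _ _
    _ = (∫⁻ t, ‖a t‖ₑ^2/2) + ∫⁻ t, ‖a t‖ₑ^2/2 := by
        rw [lintegral_add_left m1]
        congr 1
        · rw [Measure.volume_eq_prod, lintegral_prod _ m1.aemeasurable]
          congr 1; ext x
          simp only
          rw [lintegral_mul_const (f := fun y => ENNReal.ofReal (gker ε (x - y))) _ (k1 x), lintegral_sub_left_eq_self (fun u => ENNReal.ofReal (gker ε u)) x, gker_lint hε, one_mul]
        · rw [Measure.volume_eq_prod, lintegral_prod_symm _ m2.aemeasurable]
          congr 1; ext x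
          simp only
          rw [lintegral_mul_const (f := fun y => ENNReal.ofReal (gker ε (y - x))) _ (k2 x), lintegral_sub_right_eq_self (fun u => ENNReal.ofReal (gker ε u)) x, gker_lint hε, one_mul]
    _ = _ := by
        rw [← lintegral_add_left (ma.div_const 2)]
        simp [ENNReal.add_halves]

lemma plancherel_le {a : ℝ → ℂ} (ha : Integrable a) (ham : Measurable a) :
    ∫⁻ s, ‖fint a s‖ₑ^2 ≤ ∫⁻ t, ‖a t‖ₑ^2 := by
  have hlim : ∀ s, Tendsto (fun n : ℕ => ‖fint a s‖ₑ^2 * ENNReal.ofReal (gau (1/((n:ℝ)+1)) s)) atTop (nhds (‖fint a s‖ₑ^2)) := by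
    intro s
    have h1 : Tendsto (fun n : ℕ => gau (1/((n:ℝ)+1)) s) atTop (nhds 1) := by
      have : Tendsto (fun n : ℕ => gau (1/((n:ℝ)+1)) s) atTop (nhds (gau 0 s)) := by
        have c : Continuous (fun ε => gau ε s) := by unfold gau; fun_prop
        exact (c.tendsto 0).comp tendsto_one_div_add_atTop_nhds_zero_nat
      simpa [gau] using this
    have h2 := ENNReal.tendsto_ofReal h1
    rw [ENNReal.ofReal_one] at h2
    have := ENNReal.Tendsto.const_mul h2 (a := ‖fint a s‖ₑ^2) (Or.inl one_ne_zero)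
    simpa using this
  calc _ = ∫⁻ s, liminf (fun n : ℕ => ‖fint a s‖ₑ^2 * ENNReal.ofReal (gau (1/((n:ℝ)+1)) s)) atTop := by
        congr 1; ext s; exact (hlim s).liminf_eq.symm
    _ ≤ liminf (fun n : ℕ => ∫⁻ s, ‖fint a s‖ₑ^2 * ENNReal.ofReal (gau (1/((n:ℝ)+1)) s)) atTop := by
        refine lintegral_liminf_le fun n => ?_
        have : Continuous (gau (1/((n:ℝ)+1))) := by unfold gau; fun_prop
        exact ((fint_cont ha).measurable.enorm.pow_const 2).mul this.measurable.ennreal_ofReal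
    _ ≤ _ := by
        refine liminf_le_of_le ⟨0, by simp⟩ fun b hb => ?_
        obtain ⟨n, hn⟩ := hb.exists
        exact hn.trans (fint_gau_le ha ham (by positivity))

end PartB1

section PartB2
variable {E T : Type*} [MeasurableSpace E] [MeasurableSpace T]

/-- Hypotheses on the random functions. -/
structure VHyp (μ : Measure E) (lam : Measure T) (v : E → T → ℂ) (r : E → ℝ) (kap V W : ℝ) : Prop where
  vm : Measurable (fun p : E × T => v p.1 p.2)
  rm : Measurable r
  r0 : ∀ y, 0 ≤ r y
  vr : ∀ y t, ‖v y t‖ ≤ r y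
  r4 : Integrable (fun y => r y ^ 4) μ
  r4W : ∫ y, r y ^ 4 ∂μ ≤ W
  vV : ∀ t, ∫ y, ‖v y t‖ ^ 2 ∂μ ≤ V
  kap0 : 0 < kap
  star : ∀ a : T → ℂ, Measurable a → MemLp a 2 lam →
    ∫ y, ‖∫ t, v y t * a t ∂lam‖ ^ 2 ∂μ ≤ kap * ∫ t, ‖a t‖ ^ 2 ∂lam

lemma cint_sq_center {X : Type*} [MeasurableSpace X] (μ : Measure X) [IsProbabilityMeasure μ] {f : X → ℂ}
    (hf : MemLp f 2 μ) : ∫ x, ‖f x - ∫ z, f z ∂μ‖^2 ∂μ ≤ ∫ x, ‖f x‖^2 ∂μ := by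
  have hr : MemLp (fun x => (f x).re) 2 μ := hf.re
  have hi : MemLp (fun x => (f x).im) 2 μ := hf.im
  have hI : Integrable f μ := hf.integrable (by norm_num)
  have e : ∀ z : ℂ, ‖z‖^2 = z.re^2 + z.im^2 := fun z => by
    rw [← Complex.normSq_eq_norm_sq, Complex.normSq_apply]; ring
  have er : (∫ z, f z ∂μ).re = ∫ z, (f z).re ∂μ := by
    have := integral_re (𝕜 := ℂ) hI; simpa using this.symm
  have ei : (∫ z, f z ∂μ).im = ∫ z, (f z).im ∂μ := by
    have := integral_im (𝕜 := ℂ) hI; simpa using this.symm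
  simp_rw [e, Complex.sub_re, Complex.sub_im, er, ei]
  have i1 : Integrable (fun x => ((f x).re - ∫ z, (f z).re ∂μ)^2) μ := (hr.sub (memLp_const _)).integrable_sq
  have i2 : Integrable (fun x => ((f x).im - ∫ z, (f z).im ∂μ)^2) μ := (hi.sub (memLp_const _)).integrable_sq
  rw [integral_add i1 i2,
    integral_add hr.integrable_sq hi.integrable_sq]
  exact add_le_add (int_sq_center μ hr) (int_sq_center μ hi)

namespace VHyp
variable {μ : Measure E} [IsProbabilityMeasure μ] {lam : Measure T} [IsFiniteMeasure lam]
  {v : E → T → ℂ} {r : E → ℝ} {kap V W : ℝ}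

/-- mean function -/
def mm (μ : Measure E) (v : E → T → ℂ) (t : T) : ℂ := ∫ y, v y t ∂μ
/-- centred -/
def vt (μ : Measure E) (v : E → T → ℂ) (y : E) (t : T) : ℂ := v y t - mm μ v t
/-- envelope -/
def rh (μ : Measure E) (r : E → ℝ) (y : E) : ℝ := r y + ∫ z, r z ∂μ

lemma rL4 (H : VHyp μ lam v r kap V W) : MemLp (fun y => r y ^ 2) 2 μ := by
  refine (memLp_two_iff_integrable_sq (H.rm.pow_const 2).aestronglyMeasurable).2 ?_
  convert H.r4 using 2; ring
lemma rI2 (H : VHyp μ lam v r kap V W) : Integrable (fun y => r y ^ 2) μ := H.rL4.integrable (by norm_num)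
lemma rL (H : VHyp μ lam v r kap V W) : MemLp r 2 μ :=
  (memLp_two_iff_integrable_sq H.rm.aestronglyMeasurable).2 H.rI2
lemma rI (H : VHyp μ lam v r kap V W) : Integrable r μ := H.rL.integrable (by norm_num)
lemma M0 (H : VHyp μ lam v r kap V W) : 0 ≤ ∫ z, r z ∂μ := integral_nonneg H.r0

lemma rhm (H : VHyp μ lam v r kap V W) : Measurable (rh μ r) := H.rm.add_const _
lemma rh0 (H : VHyp μ lam v r kap V W) (y : E) : 0 ≤ rh μ r y := add_nonneg (H.r0 y) H.M0
lemma rhL (H : VHyp μ lam v r kap V W) : MemLp (rh μ r) 2 μ := H.rL.add (memLp_const _)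
lemma rhI (H : VHyp μ lam v r kap V W) : Integrable (rh μ r) μ := H.rhL.integrable (by norm_num)

lemma jens {X : Type*} [MeasurableSpace X] (μ : Measure X) [IsProbabilityMeasure μ] {f : X → ℝ}
    (hf : MemLp f 2 μ) : (∫ x, f x ∂μ)^2 ≤ ∫ x, f x ^2 ∂μ := by
  have h := integral_nonneg (μ := μ) (f := fun x => (f x - ∫ z, f z ∂μ)^2) fun x => sq_nonneg _
  have hI : Integrable f μ := hf.integrable (by norm_num)
  set m := ∫ z, f z ∂μ with hm
  have e : ∀ x, (f x - m)^2 = f x ^2 - 2 * m * f x + m^2 := fun x => by ring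
  simp only [e] at h
  have i1 : Integrable (fun x => f x^2 - 2*m*f x) μ := hf.integrable_sq.sub (hI.const_mul (2*m))
  rw [integral_add i1 (integrable_const _),
    integral_sub hf.integrable_sq (hI.const_mul _), integral_const_mul, ← hm] at h
  simp at h
  nlinarith

lemma rh4 (H : VHyp μ lam v r kap V W) : Integrable (fun y => rh μ r y ^ 4) μ ∧
    ∫ y, rh μ r y ^ 4 ∂μ ≤ 16 * W := by
  have j1 := jens μ H.rL
  have j2 := jens μ H.rL4
  set M := ∫ z, r z ∂μ with hM
  have M4 : M^4 ≤ W := by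
    have : (M^2)^2 ≤ (∫ x, r x ^2 ∂μ)^2 := pow_le_pow_left₀ (sq_nonneg _) j1 2
    have e : ∫ x, (r x ^2)^2 ∂μ = ∫ x, r x^4 ∂μ := by congr 1; ext x; ring
    rw [e] at j2
    have e2 : (M^2)^2 = M^4 := by ring
    rw [e2] at this
    exact this.trans (j2.trans H.r4W)
  have ib : Integrable (fun y => 8 * r y ^ 4 + 8 * M^4) μ := (H.r4.const_mul 8).add (integrable_const _)
  have bd : ∀ y, rh μ r y ^4 ≤ 8 * r y ^ 4 + 8 * M^4 := fun y => by
    unfold rh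
    rw [← hM]
    nlinarith [sq_nonneg (r y ^2 - M^2), sq_nonneg (r y - M), sq_nonneg (r y + M), sq_nonneg ((r y - M)^2), sq_nonneg (r y * M), mul_nonneg (sq_nonneg (r y - M)) (sq_nonneg (r y + M)), mul_nonneg (sq_nonneg (r y - M)) (sq_nonneg (r y)), mul_nonneg (sq_nonneg (r y - M)) (sq_nonneg M), mul_nonneg (mul_nonneg (H.r0 y) H.M0) (sq_nonneg (r y - M))]
  have i4 : Integrable (fun y => rh μ r y ^ 4) μ := ib.mono' (H.rhm.pow_const 4).aestronglyMeasurable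
    (Eventually.of_forall fun y => by
      rw [Real.norm_of_nonneg (by have := H.rh0 y; positivity)]; exact bd y)
  refine ⟨i4, (integral_mono i4 ib bd).trans ?_⟩
  rw [integral_add (H.r4.const_mul 8) (integrable_const _), integral_const_mul]
  have := H.r4W
  simp
  linarith

lemma mmm (H : VHyp μ lam v r kap V W) : Measurable (mm μ v) :=
  (H.vm.stronglyMeasurable.integral_prod_left' (μ := μ)).measurable

lemma vtm (H : VHyp μ lam v r kap V W) : Measurable (fun p : E × T => vt μ v p.1 p.2) :=
  H.vm.sub (H.mmm.comp measurable_snd)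

lemma vy (H : VHyp μ lam v r kap V W) (y : E) : Measurable (fun t => v y t) := H.vm.comp measurable_prodMk_left
lemma vty (H : VHyp μ lam v r kap V W) (y : E) : Measurable (fun t => vt μ v y t) := H.vtm.comp measurable_prodMk_left
lemma vtt (H : VHyp μ lam v r kap V W) (t : T) : Measurable (fun y => vt μ v y t) := H.vtm.comp measurable_prodMk_right
lemma vvt (H : VHyp μ lam v r kap V W) (t : T) : Measurable (fun y => v y t) := H.vm.comp measurable_prodMk_right

lemma vI (H : VHyp μ lam v r kap V W) (t : T) : Integrable (fun y => v y t) μ :=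
  H.rI.mono' (H.vvt t).aestronglyMeasurable (Eventually.of_forall fun y => H.vr y t)
lemma vL (H : VHyp μ lam v r kap V W) (t : T) : MemLp (fun y => v y t) 2 μ :=
  H.rL.mono (H.vvt t).aestronglyMeasurable (Eventually.of_forall fun y => by
    rw [Real.norm_of_nonneg (H.r0 y)]; exact H.vr y t)

lemma mb (H : VHyp μ lam v r kap V W) (t : T) : ‖mm μ v t‖ ≤ ∫ z, r z ∂μ :=
  (norm_integral_le_integral_norm _).trans (integral_mono (H.vI t).norm H.rI fun y => H.vr y t)

lemma vtb (H : VHyp μ lam v r kap V W) (y : E) (t : T) : ‖vt μ v y t‖ ≤ rh μ r y :=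
  (norm_sub_le _ _).trans (add_le_add (H.vr y t) (H.mb t))

lemma vtV (H : VHyp μ lam v r kap V W) (t : T) : ∫ y, ‖vt μ v y t‖^2 ∂μ ≤ V :=
  (cint_sq_center μ (H.vL t)).trans (H.vV t)

lemma vt0 (H : VHyp μ lam v r kap V W) (t : T) : ∫ y, vt μ v y t ∂μ = 0 := by
  unfold vt
  rw [integral_sub (H.vI t) (integrable_const _)]; simp [mm]

/-- pairing -/
def pr (μ : Measure E) (lam : Measure T) (v : E → T → ℂ) (a : T → ℂ) (y : E) : ℂ := ∫ t, vt μ v y t * a t ∂lam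

lemma bdInt {b : T → ℂ} (hb : Measurable b) {C : ℝ} (hC : ∀ t, ‖b t‖ ≤ C) {a : T → ℂ} (ha : Integrable a lam) :
    Integrable (fun t => b t * a t) lam :=
  ha.bdd_mul hb.aestronglyMeasurable (Eventually.of_forall hC)

lemma vtI (H : VHyp μ lam v r kap V W) {a : T → ℂ} (ha : Integrable a lam) (y : E) :
    Integrable (fun t => vt μ v y t * a t) lam := bdInt (H.vty y) (H.vtb y) ha

lemma prI (H : VHyp μ lam v r kap V W) {a : T → ℂ} (ha : Integrable a lam) :
    Integrable (fun p : E × T => vt μ v p.1 p.2 * a p.2) (μ.prod lam) := by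
  refine (H.rhI.mul_prod ha.norm).mono' (H.vtm.aestronglyMeasurable.mul ha.1.comp_snd)
    (Eventually.of_forall fun p => ?_)
  rw [norm_mul]
  exact mul_le_mul_of_nonneg_right (H.vtb _ _) (norm_nonneg _)

lemma pr_meas (H : VHyp μ lam v r kap V W) {a : T → ℂ} (hm : Measurable a) : Measurable (pr μ lam v a) :=
  ((H.vtm.mul (hm.comp measurable_snd)).stronglyMeasurable.integral_prod_right' (ν := lam)).measurable

lemma pr_bd (H : VHyp μ lam v r kap V W) {a : T → ℂ} (ha : Integrable a lam) (y : E) :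
    ‖pr μ lam v a y‖ ≤ (∫ t, ‖a t‖ ∂lam) * rh μ r y := by
  refine (norm_integral_le_integral_norm _).trans ?_
  rw [mul_comm, ← integral_const_mul]
  refine integral_mono (H.vtI ha y).norm (ha.norm.const_mul _) fun t => ?_
  simp only [norm_mul]
  exact mul_le_mul_of_nonneg_right (H.vtb _ _) (norm_nonneg _)

lemma pr_L (H : VHyp μ lam v r kap V W) {a : T → ℂ} (hm : Measurable a) (ha : Integrable a lam) :
    MemLp (pr μ lam v a) 2 μ :=
  (H.rhL.const_mul (∫ t, ‖a t‖ ∂lam)).mono (H.pr_meas hm).aestronglyMeasurable (Eventually.of_forall fun y => by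
    have := H.pr_bd ha y
    exact this.trans (le_abs_self _))

lemma pr_0 (H : VHyp μ lam v r kap V W) {a : T → ℂ} (ha : Integrable a lam) :
    ∫ y, pr μ lam v a y ∂μ = 0 := by
  unfold pr
  rw [integral_integral_swap (H.prI ha)]
  simp [integral_mul_const, H.vt0]

lemma pr_star (H : VHyp μ lam v r kap V W) {a : T → ℂ} (hm : Measurable a) (ha : MemLp a 2 lam) :
    ∫ y, ‖pr μ lam v a y‖^2 ∂μ ≤ kap * ∫ t, ‖a t‖^2 ∂lam := by
  have aI : Integrable a lam := ha.integrable (by norm_num)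
  have i1 : ∀ y, Integrable (fun t => v y t * a t) lam := fun y => bdInt (H.vy y) (H.vr y) aI
  have i2 : Integrable (fun t => mm μ v t * a t) lam := bdInt H.mmm H.mb aI
  have iP : Integrable (fun p : E × T => v p.1 p.2 * a p.2) (μ.prod lam) := by
    refine (H.rI.mul_prod aI.norm).mono' (H.vm.aestronglyMeasurable.mul aI.1.comp_snd)
      (Eventually.of_forall fun p => ?_)
    rw [norm_mul]
    exact mul_le_mul_of_nonneg_right (H.vr _ _) (norm_nonneg _)
  set u : E → ℂ := fun y => ∫ t, v y t * a t ∂lam with hu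
  have um : Measurable u := ((H.vm.mul (hm.comp measurable_snd)).stronglyMeasurable.integral_prod_right' (ν := lam)).measurable
  have ub : ∀ y, ‖u y‖ ≤ (∫ t, ‖a t‖ ∂lam) * r y := fun y => by
    refine (norm_integral_le_integral_norm _).trans ?_
    rw [mul_comm, ← integral_const_mul]
    refine integral_mono (i1 y).norm (aI.norm.const_mul _) fun t => ?_
    simp only [norm_mul]
    exact mul_le_mul_of_nonneg_right (H.vr _ _) (norm_nonneg _)
  have uL : MemLp u 2 μ := (H.rL.const_mul (∫ t, ‖a t‖ ∂lam)).mono um.aestronglyMeasurable (Eventually.of_forall fun y => by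
    exact (ub y).trans (le_abs_self _))
  have e : ∀ y, pr μ lam v a y = u y - ∫ z, u z ∂μ := fun y => by
    have e1 : ∫ z, u z ∂μ = ∫ t, mm μ v t * a t ∂lam := by
      rw [hu, integral_integral_swap iP]; simp [integral_mul_const, mm]
    rw [e1]
    unfold pr vt
    simp_rw [sub_mul]
    rw [integral_sub (i1 y) i2]
  simp_rw [e]
  exact (cint_sq_center μ uL).trans (H.star a hm ha)

end VHyp
end PartB2

section PartB3
variable {E T : Type*} [MeasurableSpace E] [MeasurableSpace T]

namespace VHyp
variable {μ : Measure E} [IsProbabilityMeasure μ] {lam : Measure T} [IsFiniteMeasure lam]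
  {v : E → T → ℂ} {r : E → ℝ} {kap V W : ℝ}

lemma sq_le_abs_re (z : ℂ) : z.re^2 ≤ ‖z‖^2 := by
  rw [← sq_abs z.re]
  exact pow_le_pow_left₀ (abs_nonneg _) (Complex.abs_re_le_norm z) 2

/-- adjoint operator -/
def aop (μ : Measure E) (v : E → T → ℂ) (u : E → ℝ) (t : T) : ℂ :=
  ∫ y, (starRingEnd ℂ) (vt μ v y t) * (u y : ℂ) ∂μ

lemma rhu (H : VHyp μ lam v r kap V W) {u : E → ℝ} (hu : MemLp u 2 μ) :
    Integrable (fun y => rh μ r y * |u y|) μ := by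
  have := H.rhL.integrable_mul hu.abs
  exact this

lemma conj_meas : Measurable (starRingEnd ℂ : ℂ → ℂ) := Complex.continuous_conj.measurable

lemma aop_meas (H : VHyp μ lam v r kap V W) {u : E → ℝ} (hm : Measurable u) : Measurable (aop μ v u) := by
  have h1 : Measurable (fun p : E × T => (starRingEnd ℂ) (vt μ v p.1 p.2) * (u p.1 : ℂ)) :=
    (conj_meas.comp H.vtm).mul (Complex.measurable_ofReal.comp (hm.comp measurable_fst))
  exact (h1.stronglyMeasurable.integral_prod_left' (μ := μ)).measurable

lemma aop_bd (H : VHyp μ lam v r kap V W) {u : E → ℝ} (hm : Measurable u) (hu : MemLp u 2 μ) (t : T) :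
    ‖aop μ v u t‖ ≤ ∫ y, rh μ r y * |u y| ∂μ := by
  refine (norm_integral_le_of_norm_le (H.rhu hu) (Eventually.of_forall fun y => ?_))
  rw [norm_mul, RCLike.norm_conj, Complex.norm_real, Real.norm_eq_abs]
  exact mul_le_mul_of_nonneg_right (H.vtb _ _) (abs_nonneg _)

lemma bddL2 {a : T → ℂ} (hm : Measurable a) {C : ℝ} (h : ∀ t, ‖a t‖ ≤ C) : MemLp a 2 lam :=
  MemLp.of_bound hm.aestronglyMeasurable C (Eventually.of_forall h)

/-- swap identity -/
lemma pair_swap (H : VHyp μ lam v r kap V W) {u : E → ℝ} (hm : Measurable u) (hu : MemLp u 2 μ)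
    {a : T → ℂ} (am : Measurable a) (ha : Integrable a lam) :
    ∫ y, (u y : ℂ) * (starRingEnd ℂ) (pr μ lam v a y) ∂μ = ∫ t, aop μ v u t * (starRingEnd ℂ) (a t) ∂lam := by
  have iP : Integrable (fun p : E × T => (starRingEnd ℂ) (vt μ v p.1 p.2) * (u p.1 : ℂ) * (starRingEnd ℂ) (a p.2)) (μ.prod lam) := by
    have h1 : Measurable (fun p : E × T => (starRingEnd ℂ) (vt μ v p.1 p.2) * (u p.1 : ℂ) * (starRingEnd ℂ) (a p.2)) :=
      ((conj_meas.comp H.vtm).mul (Complex.measurable_ofReal.comp (hm.comp measurable_fst))).mul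
        (conj_meas.comp (am.comp measurable_snd))
    refine ((H.rhu hu).mul_prod ha.norm).mono' h1.aestronglyMeasurable (Eventually.of_forall fun p => ?_)
    simp only [norm_mul, RCLike.norm_conj, Complex.norm_real, Real.norm_eq_abs]
    exact mul_le_mul_of_nonneg_right (mul_le_mul_of_nonneg_right (H.vtb _ _) (abs_nonneg _)) (norm_nonneg _)
  have e1 : ∀ y, (u y : ℂ) * (starRingEnd ℂ) (pr μ lam v a y)
      = ∫ t, (starRingEnd ℂ) (vt μ v y t) * (u y : ℂ) * (starRingEnd ℂ) (a t) ∂lam := fun y => by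
    unfold pr
    rw [← integral_conj, ← integral_const_mul]
    congr 1; ext t; simp only [map_mul]; ring
  simp_rw [e1]
  rw [integral_integral_swap iP]
  congr 1; ext t
  rw [aop, ← integral_mul_const]

lemma aop_L2 (H : VHyp μ lam v r kap V W) {u : E → ℝ} (hm : Measurable u) (hu : MemLp u 2 μ) :
    ∫ t, ‖aop μ v u t‖^2 ∂lam ≤ kap * ∫ y, u y^2 ∂μ := by
  set A := aop μ v u with hA
  have Am : Measurable A := H.aop_meas hm
  have AL : MemLp A 2 lam := bddL2 Am (H.aop_bd hm hu)
  have AI : Integrable A lam := AL.integrable (by norm_num)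
  have sw := H.pair_swap hm hu Am AI
  have st := H.pr_star Am AL
  have pL := H.pr_L Am AI
  set X := ∫ t, ‖A t‖^2 ∂lam with hX
  have e : ∫ t, A t * (starRingEnd ℂ) (A t) ∂lam = (X : ℂ) := by
    rw [hX, ← integral_complex_ofReal]
    congr 1; ext t
    rw [Complex.mul_conj, Complex.normSq_eq_norm_sq]
  rw [← hA, e] at sw
  have k0 := H.kap0
  have i1 : Integrable (fun y => kap/2 * u y^2) μ := hu.integrable_sq.const_mul _
  have i2 : Integrable (fun y => 1/(2*kap) * ‖pr μ lam v A y‖^2) μ := by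
    have : Integrable (fun y => ‖pr μ lam v A y‖^2) μ := pL.norm.integrable_sq
    exact this.const_mul _
  have b : ‖∫ y, (u y : ℂ) * (starRingEnd ℂ) (pr μ lam v A y) ∂μ‖ ≤
      ∫ y, (kap/2 * u y^2 + 1/(2*kap) * ‖pr μ lam v A y‖^2) ∂μ := by
    refine norm_integral_le_of_norm_le (i1.add i2) (Eventually.of_forall fun y => ?_)
    rw [norm_mul, RCLike.norm_conj, Complex.norm_real, Real.norm_eq_abs, ← sq_abs (u y)]
    have := sq_nonneg (kap * |u y| - ‖pr μ lam v A y‖)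
    have h2 : kap/2 * |u y|^2 + 1/(2*kap) * ‖pr μ lam v A y‖^2 - |u y| * ‖pr μ lam v A y‖
      = (kap * |u y| - ‖pr μ lam v A y‖)^2/(2*kap) := by field_simp; ring
    have : 0 ≤ (kap * |u y| - ‖pr μ lam v A y‖)^2/(2*kap) := by positivity
    linarith
  rw [sw, integral_add i1 i2, integral_const_mul, integral_const_mul, Complex.norm_real] at b
  have b2 := (le_abs_self X).trans b
  have : 1/(2*kap) * ∫ y, ‖pr μ lam v A y‖^2 ∂μ ≤ 1/(2*kap) * (kap * X) :=
    mul_le_mul_of_nonneg_left st (by positivity)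
  have e3 : 1/(2*kap) * (kap * X) = X/2 := by field_simp
  rw [e3] at this
  linarith

/-- the kernel -/
def hh (μ : Measure E) (lam : Measure T) (v : E → T → ℂ) (om : T → ℝ) (x y : E) : ℝ :=
  (∫ t, vt μ v x t * (starRingEnd ℂ) (vt μ v y t) * (om t : ℂ) ∂lam).re

/-- weight hypotheses -/
structure WHyp (lam : Measure T) (om : T → ℝ) (e S d : ℝ) : Prop where
  m : Measurable om
  n0 : ∀ t, 0 ≤ om t
  le : ∀ᵐ t ∂lam, om t ≤ e
  i1 : ∫ t, om t ∂lam ≤ S * d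
  i2 : ∫ t, om t ^ 2 ∂lam ≤ d ^ 2

variable {om : T → ℝ} {e S d : ℝ}

lemma omL (w : WHyp lam om e S d) : MemLp om 2 lam :=
  MemLp.of_bound w.m.aestronglyMeasurable e (w.le.mono fun t h => by
    rw [Real.norm_of_nonneg (w.n0 t)]; exact h)
lemma omI (w : WHyp lam om e S d) : Integrable om lam := (omL w).integrable (by norm_num)

lemma hh_sym (x y : E) : hh μ lam v om x y = hh μ lam v om y x := by
  unfold hh
  rw [← Complex.conj_re, ← integral_conj]
  congr 2; ext t; simp only [map_mul, Complex.conj_conj, Complex.conj_ofReal]; ring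

/-- coefficient -/
def ax (μ : Measure E) (v : E → T → ℂ) (om : T → ℝ) (x : E) (t : T) : ℂ :=
  (starRingEnd ℂ) (vt μ v x t) * (om t : ℂ)

lemma hh_pr (x y : E) : hh μ lam v om x y = (pr μ lam v (ax μ v om x) y).re := by
  rw [hh_sym]; unfold hh pr ax
  congr 2; ext t; ring

lemma ax_m (H : VHyp μ lam v r kap V W) (w : WHyp lam om e S d) (x : E) : Measurable (ax μ v om x) :=
  (conj_meas.comp (H.vty x)).mul (Complex.measurable_ofReal.comp w.m)

lemma ax_n (w : WHyp lam om e S d) (x : E) (t : T) : ‖ax μ v om x t‖ = ‖vt μ v x t‖ * om t := by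
  unfold ax
  rw [norm_mul, RCLike.norm_conj, Complex.norm_real, Real.norm_of_nonneg (w.n0 t)]

lemma ax_L (H : VHyp μ lam v r kap V W) (w : WHyp lam om e S d) (x : E) : MemLp (ax μ v om x) 2 lam :=
  ((omL w).const_mul (rh μ r x)).mono (ax_m H w x).aestronglyMeasurable (Eventually.of_forall fun t => by
    rw [ax_n w, norm_mul, Real.norm_of_nonneg (H.rh0 x), Real.norm_of_nonneg (w.n0 t)]
    exact mul_le_mul_of_nonneg_right (H.vtb _ _) (w.n0 t))
lemma ax_I (H : VHyp μ lam v r kap V W) (w : WHyp lam om e S d) (x : E) : Integrable (ax μ v om x) lam :=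
  (ax_L H w x).integrable (by norm_num)

lemma hh_m (H : VHyp μ lam v r kap V W) (w : WHyp lam om e S d) :
    Measurable (fun p : E × E => hh μ lam v om p.1 p.2) := by
  have h1 : Measurable (fun q : (E × E) × T => vt μ v q.1.1 q.2 * (starRingEnd ℂ) (vt μ v q.1.2 q.2) * (om q.2 : ℂ)) := by
    have a1 : Measurable (fun q : (E × E) × T => (q.1.1, q.2)) := by fun_prop
    have a2 : Measurable (fun q : (E × E) × T => (q.1.2, q.2)) := by fun_prop
    exact ((H.vtm.comp a1).mul (conj_meas.comp (H.vtm.comp a2))).mul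
      (Complex.measurable_ofReal.comp (w.m.comp measurable_snd))
  exact Complex.measurable_re.comp (h1.stronglyMeasurable.integral_prod_right' (ν := lam)).measurable

lemma hh_bd (H : VHyp μ lam v r kap V W) (w : WHyp lam om e S d) (x y : E) :
    |hh μ lam v om x y| ≤ S * d * rh μ r x * rh μ r y := by
  rw [hh_pr]
  refine (Complex.abs_re_le_norm _).trans ((H.pr_bd (ax_I H w x) y).trans ?_)
  refine mul_le_mul_of_nonneg_right ?_ (H.rh0 y)
  calc ∫ t, ‖ax μ v om x t‖ ∂lam ≤ ∫ t, rh μ r x * om t ∂lam := by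
        refine integral_mono (ax_I H w x).norm ((omI w).const_mul _) fun t => ?_
        simp only [ax_n w]
        exact mul_le_mul_of_nonneg_right (H.vtb _ _) (w.n0 t)
    _ = rh μ r x * ∫ t, om t ∂lam := integral_const_mul _ _
    _ ≤ rh μ r x * (S * d) := mul_le_mul_of_nonneg_left w.i1 (H.rh0 x)
    _ = _ := by ring

lemma hh_L (H : VHyp μ lam v r kap V W) (w : WHyp lam om e S d) (x : E) :
    MemLp (fun y => hh μ lam v om x y) 2 μ := by
  simp_rw [hh_pr]
  exact (H.pr_L (ax_m H w x) (ax_I H w x)).re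

lemma hh_can (H : VHyp μ lam v r kap V W) (w : WHyp lam om e S d) (x : E) :
    ∫ y, hh μ lam v om x y ∂μ = 0 := by
  simp_rw [hh_pr]
  have hI := (H.pr_L (ax_m H w x) (ax_I H w x)).integrable (by norm_num)
  have := integral_re (𝕜 := ℂ) hI
  rw [H.pr_0 (ax_I H w x)] at this
  simpa using this

lemma re_sq_int {f : E → ℂ} (hf : MemLp f 2 μ) : ∫ y, (f y).re^2 ∂μ ≤ ∫ y, ‖f y‖^2 ∂μ := by
  refine integral_mono hf.re.integrable_sq hf.norm.integrable_sq fun y => sq_le_abs_re _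

lemma hh_eta0 (H : VHyp μ lam v r kap V W) (w : WHyp lam om e S d) (x : E) :
    ∫ y, hh μ lam v om x y^2 ∂μ ≤ kap * ∫ t, ‖vt μ v x t‖^2 * om t^2 ∂lam := by
  simp_rw [hh_pr]
  refine (re_sq_int (H.pr_L (ax_m H w x) (ax_I H w x))).trans
    ((H.pr_star (ax_m H w x) (ax_L H w x)).trans (le_of_eq ?_))
  simp_rw [ax_n w, mul_pow]

lemma om2I (w : WHyp lam om e S d) : Integrable (fun t => om t^2) lam := (omL w).integrable_sq

lemma vo_int (H : VHyp μ lam v r kap V W) (w : WHyp lam om e S d) :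
    Integrable (fun p : E × T => ‖vt μ v p.1 p.2‖^2 * om p.2^2) (μ.prod lam) := by
  have i : Integrable (fun y => rh μ r y^2) μ := H.rhL.integrable_sq
  have hm : Measurable (fun p : E × T => ‖vt μ v p.1 p.2‖^2 * om p.2^2) :=
    (H.vtm.norm.pow_const 2).mul ((w.m.comp measurable_snd).pow_const 2)
  refine (i.mul_prod (om2I w)).mono' hm.aestronglyMeasurable (Eventually.of_forall fun p => ?_)
  rw [Real.norm_of_nonneg (by positivity)]
  exact mul_le_mul_of_nonneg_right (pow_le_pow_left₀ (norm_nonneg _) (H.vtb _ _) 2) (sq_nonneg _)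

lemma hh_eta (H : VHyp μ lam v r kap V W) (w : WHyp lam om e S d) (x : E) :
    ∫ y, hh μ lam v om x y^2 ∂μ ≤ kap * d^2 * rh μ r x^2 := by
  refine (hh_eta0 H w x).trans ?_
  rw [mul_assoc]
  refine mul_le_mul_of_nonneg_left ?_ H.kap0.le
  calc ∫ t, ‖vt μ v x t‖^2 * om t^2 ∂lam ≤ ∫ t, rh μ r x^2 * om t^2 ∂lam := by
        refine integral_mono_of_nonneg (Eventually.of_forall fun t => by positivity) ((om2I w).const_mul _)
          (Eventually.of_forall fun t => ?_)
        exact mul_le_mul_of_nonneg_right (pow_le_pow_left₀ (norm_nonneg _) (H.vtb _ _) 2) (sq_nonneg _)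
    _ = rh μ r x^2 * ∫ t, om t^2 ∂lam := integral_const_mul _ _
    _ ≤ rh μ r x^2 * d^2 := mul_le_mul_of_nonneg_left w.i2 (sq_nonneg _)
    _ = _ := by ring

lemma hh_s2 (H : VHyp μ lam v r kap V W) (w : WHyp lam om e S d) (hV : 0 ≤ V) :
    ∫ x, ∫ y, hh μ lam v om x y^2 ∂μ ∂μ ≤ kap * V * d^2 := by
  have vo := vo_int H w
  calc ∫ x, ∫ y, hh μ lam v om x y^2 ∂μ ∂μ
      ≤ ∫ x, kap * ∫ t, ‖vt μ v x t‖^2 * om t^2 ∂lam ∂μ :=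
        integral_mono_of_nonneg (Eventually.of_forall fun x => integral_nonneg fun y => sq_nonneg _)
          (vo.integral_prod_left.const_mul _) (Eventually.of_forall fun x => hh_eta0 H w x)
    _ = kap * ∫ t, ∫ x, ‖vt μ v x t‖^2 * om t^2 ∂μ ∂lam := by
        rw [integral_const_mul, integral_integral_swap vo]
    _ ≤ kap * ∫ t, V * om t^2 ∂lam := by
        refine mul_le_mul_of_nonneg_left ?_ H.kap0.le
        refine integral_mono_of_nonneg (Eventually.of_forall fun t => integral_nonneg fun x => by positivity)
          ((om2I w).const_mul _) (Eventually.of_forall fun t => ?_)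
        simp only [integral_mul_const]
        exact mul_le_mul_of_nonneg_right (H.vtV t) (sq_nonneg _)
    _ = kap * (V * ∫ t, om t^2 ∂lam) := by rw [integral_const_mul]
    _ ≤ kap * (V * d^2) := mul_le_mul_of_nonneg_left (mul_le_mul_of_nonneg_left w.i2 hV) H.kap0.le
    _ = _ := by ring

/-- composition -/
def HH (μ : Measure E) (lam : Measure T) (v : E → T → ℂ) (om : T → ℝ) (x x' : E) : ℝ :=
  ∫ y, hh μ lam v om x y * hh μ lam v om x' y ∂μ

lemma hh_x (H : VHyp μ lam v r kap V W) (w : WHyp lam om e S d) (x : E) : Measurable (fun y => hh μ lam v om x y) :=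
  Measurable.comp (g := fun p : E × E => hh μ lam v om p.1 p.2) (f := fun y => (x, y)) (hh_m H w) measurable_prodMk_left

lemma HH_pr (H : VHyp μ lam v r kap V W) (w : WHyp lam om e S d) (x x' : E) :
    HH μ lam v om x x' = (pr μ lam v (fun t => aop μ v (hh μ lam v om x) t * (om t : ℂ)) x').re := by
  have sw := H.pair_swap (hh_x H w x) (hh_L H w x) (ax_m H w x') (ax_I H w x')
  have i : Integrable (fun y => (hh μ lam v om x y : ℂ) * (starRingEnd ℂ) (pr μ lam v (ax μ v om x') y)) μ := by
    have l1 : MemLp (fun y => (hh μ lam v om x y : ℂ)) 2 μ := (hh_L H w x).ofReal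
    have l2 : MemLp (fun y => (starRingEnd ℂ) (pr μ lam v (ax μ v om x') y)) 2 μ := (H.pr_L (ax_m H w x') (ax_I H w x')).star
    exact l1.integrable_mul l2
  have e1 : HH μ lam v om x x' = (∫ y, (hh μ lam v om x y : ℂ) * (starRingEnd ℂ) (pr μ lam v (ax μ v om x') y) ∂μ).re := by
    have := integral_re (𝕜 := ℂ) i
    rw [show (∫ y, (hh μ lam v om x y : ℂ) * (starRingEnd ℂ) (pr μ lam v (ax μ v om x') y) ∂μ).re = RCLike.re (∫ y, (hh μ lam v om x y : ℂ) * (starRingEnd ℂ) (pr μ lam v (ax μ v om x') y) ∂μ) from rfl, ← this]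
    unfold HH
    congr 1; ext y
    rw [hh_pr x' y]; simp
  rw [e1, sw]
  unfold pr ax
  congr 2; ext t
  simp; ring

lemma HH_m (H : VHyp μ lam v r kap V W) (w : WHyp lam om e S d) :
    Measurable (fun p : E × E => HH μ lam v om p.1 p.2) := by
  have h1 : Measurable (fun q : (E × E) × E => hh μ lam v om q.1.1 q.2 * hh μ lam v om q.1.2 q.2) := by
    have a1 : Measurable (fun q : (E × E) × E => (q.1.1, q.2)) := by fun_prop
    have a2 : Measurable (fun q : (E × E) × E => (q.1.2, q.2)) := by fun_prop
    have b1 : Measurable (fun q : (E × E) × E => hh μ lam v om q.1.1 q.2) :=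
      Measurable.comp (g := fun p : E × E => hh μ lam v om p.1 p.2) (f := fun q : (E × E) × E => (q.1.1, q.2)) (hh_m H w) a1
    have b2 : Measurable (fun q : (E × E) × E => hh μ lam v om q.1.2 q.2) :=
      Measurable.comp (g := fun p : E × E => hh μ lam v om p.1 p.2) (f := fun q : (E × E) × E => (q.1.2, q.2)) (hh_m H w) a2
    exact b1.mul b2
  exact (h1.stronglyMeasurable.integral_prod_right' (ν := μ)).measurable

lemma HH_x (H : VHyp μ lam v r kap V W) (w : WHyp lam om e S d) (he : 0 ≤ e) (x : E) :
    ∫ x', HH μ lam v om x x'^2 ∂μ ≤ kap^2 * e^2 * ∫ y, hh μ lam v om x y^2 ∂μ := by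
  set A := aop μ v (hh μ lam v om x) with hA
  have Am : Measurable A := H.aop_meas (hh_x H w x)
  have Ab := H.aop_bd (hh_x H w x) (hh_L H w x)
  rw [← hA] at Ab
  have AL : MemLp A 2 lam := bddL2 Am Ab
  have A2 : Integrable (fun t => ‖A t‖^2) lam := AL.norm.integrable_sq
  have bm : Measurable (fun t => A t * (om t : ℂ)) := Am.mul (Complex.measurable_ofReal.comp w.m)
  have nb : ∀ t, ‖A t * (om t : ℂ)‖ = ‖A t‖ * om t := fun t => by
    rw [norm_mul, Complex.norm_real, Real.norm_of_nonneg (w.n0 t)]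
  have bL : MemLp (fun t => A t * (om t : ℂ)) 2 lam := by
    refine (AL.norm.const_mul e).mono bm.aestronglyMeasurable (w.le.mono fun t ht => ?_)
    rw [nb, norm_mul, Real.norm_of_nonneg he, norm_norm, mul_comm]
    exact mul_le_mul_of_nonneg_right ht (norm_nonneg _)
  have bI : Integrable (fun t => A t * (om t : ℂ)) lam := bL.integrable (by norm_num)
  simp_rw [HH_pr H w]
  rw [← hA]
  refine (re_sq_int (H.pr_L bm bI)).trans ((H.pr_star bm bL).trans ?_)
  have k0 := H.kap0
  have h1 : ∫ t, ‖A t * (om t : ℂ)‖^2 ∂lam ≤ e^2 * ∫ t, ‖A t‖^2 ∂lam := by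
    rw [← integral_const_mul]
    refine integral_mono_ae bL.norm.integrable_sq (A2.const_mul _) (w.le.mono fun t ht => ?_)
    simp only [nb, mul_pow]
    rw [mul_comm]
    exact mul_le_mul_of_nonneg_right (pow_le_pow_left₀ (w.n0 t) ht 2) (sq_nonneg _)
  calc _ ≤ kap * (e^2 * (kap * ∫ y, hh μ lam v om x y^2 ∂μ)) :=
        mul_le_mul_of_nonneg_left (h1.trans (mul_le_mul_of_nonneg_left
          (H.aop_L2 (hh_x H w x) (hh_L H w x)) (sq_nonneg _))) k0.le
    _ = _ := by ring

lemma hh_b2 (H : VHyp μ lam v r kap V W) (w : WHyp lam om e S d) (he : 0 ≤ e) (hV : 0 ≤ V) (hSd : 0 ≤ S * d) :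
    ∫ p, HH μ lam v om p.1 p.2^2 ∂(μ.prod μ) ≤ kap^2 * e^2 * (kap * V * d^2) := by
  have rI : Integrable (fun y => rh μ r y^2) μ := H.rhL.integrable_sq
  have bd : ∀ x x', |HH μ lam v om x x'| ≤ (S*d)^2 * (∫ y, rh μ r y^2 ∂μ) * rh μ r x * rh μ r x' := fun x x' => by
    have i : Integrable (fun y => (S*d)^2 * rh μ r x * rh μ r x' * rh μ r y^2) μ := rI.const_mul _
    unfold HH
    rw [← Real.norm_eq_abs]
    refine (norm_integral_le_of_norm_le i (Eventually.of_forall fun y => ?_)).trans (le_of_eq ?_)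
    · rw [norm_mul, Real.norm_eq_abs, Real.norm_eq_abs]
      refine (mul_le_mul (hh_bd H w x y) (hh_bd H w x' y) (abs_nonneg _) ?_).trans (le_of_eq (by ring))
      have := H.rh0 x; have := H.rh0 y; positivity
    · rw [integral_const_mul]; ring
  have iHH : Integrable (fun p : E × E => HH μ lam v om p.1 p.2^2) (μ.prod μ) := by
    refine ((rI.mul_prod rI).const_mul (((S*d)^2 * (∫ y, rh μ r y^2 ∂μ))^2)).mono' ((HH_m H w).pow_const 2).aestronglyMeasurable
      (Eventually.of_forall fun p => ?_)
    rw [Real.norm_of_nonneg (sq_nonneg _), ← sq_abs]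
    refine (pow_le_pow_left₀ (abs_nonneg _) (bd p.1 p.2) 2).trans (le_of_eq (by ring))
  rw [integral_prod _ iHH]
  have ih : Integrable (fun x => ∫ y, hh μ lam v om x y^2 ∂μ) μ := by
    have h1 : Measurable (fun p : E × E => hh μ lam v om p.1 p.2^2) := (hh_m H w).pow_const 2
    refine (rI.const_mul (kap*d^2)).mono' (h1.stronglyMeasurable.integral_prod_right' (ν := μ)).aestronglyMeasurable
      (Eventually.of_forall fun x => ?_)
    rw [Real.norm_of_nonneg (integral_nonneg fun y => sq_nonneg _)]
    exact hh_eta H w x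
  refine (integral_mono_of_nonneg (Eventually.of_forall fun x => integral_nonneg fun y => sq_nonneg _)
    (ih.const_mul _) (Eventually.of_forall fun x => HH_x H w he x)).trans ?_
  rw [integral_const_mul]
  exact mul_le_mul_of_nonneg_left (hh_s2 H w hV) (by positivity)

/-- assemble -/
lemma toKer {c : ℝ} (H : VHyp μ lam v r (c*V) V W) (w : WHyp lam om e S d) (he : 0 ≤ e) (hV : 0 ≤ V)
    (hS : 0 ≤ S) (hd : 0 ≤ d) :
    KerHyp μ (hh μ lam v om) (rh μ r) (S*d) (c*V*d^2) (16*W) (c*V*V*d^2) ((c*V)^3*V*e^2*d^2) where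
  hm := hh_m H w
  sym := fun x y => hh_sym x y
  ρm := H.rhm
  ρ0 := H.rh0
  ρ4 := H.rh4.1
  ρR := H.rh4.2
  B0 := mul_nonneg hS hd
  a0 := mul_nonneg H.kap0.le (sq_nonneg _)
  bd := hh_bd H w
  can := hh_can H w
  ηb := hh_eta H w
  hs2 := hh_s2 H w hV
  hb2 := by
    have := hh_b2 H w he hV (mul_nonneg hS hd)
    unfold HH at this
    exact this.trans (le_of_eq (by ring))

/-- linear part -/
def ps (μ : Measure E) (lam : Measure T) (v : E → T → ℂ) (om : T → ℝ) (q : T → ℂ) (y : E) : ℝ :=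
  (∫ t, vt μ v y t * (starRingEnd ℂ) (q t) * (om t : ℂ) ∂lam).re

lemma ps_all (H : VHyp μ lam v r kap V W) (w : WHyp lam om e S d) (he : 0 ≤ e) {q : T → ℂ} (qm : Measurable q)
    {C : ℝ} (hq : ∀ t, ‖q t‖ ≤ C) :
    Measurable (ps μ lam v om q) ∧ MemLp (ps μ lam v om q) 2 μ ∧ ∫ y, ps μ lam v om q y ∂μ = 0 ∧
    ∫ y, ps μ lam v om q y^2 ∂μ ≤ kap * e * ∫ t, ‖q t‖^2 * om t ∂lam := by
  set b : T → ℂ := fun t => (starRingEnd ℂ) (q t) * (om t : ℂ) with hb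
  have bm : Measurable b := (conj_meas.comp qm).mul (Complex.measurable_ofReal.comp w.m)
  have nb : ∀ t, ‖b t‖ = ‖q t‖ * om t := fun t => by
    rw [hb]; simp only [norm_mul, RCLike.norm_conj, Complex.norm_real, Real.norm_of_nonneg (w.n0 t)]
  have bL : MemLp b 2 lam := by
    refine ((omL w).const_mul C).mono bm.aestronglyMeasurable (Eventually.of_forall fun t => ?_)
    have C0 : 0 ≤ C := (norm_nonneg _).trans (hq t)
    rw [nb, norm_mul, Real.norm_of_nonneg C0, Real.norm_of_nonneg (w.n0 t)]
    exact mul_le_mul_of_nonneg_right (hq t) (w.n0 t)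
  have bI : Integrable b lam := bL.integrable (by norm_num)
  have eq : ps μ lam v om q = fun y => (pr μ lam v b y).re := by
    ext y; unfold ps pr; congr 2; ext t; rw [hb]; ring
  have pL := H.pr_L bm bI
  rw [eq]
  refine ⟨Complex.measurable_re.comp (H.pr_meas bm), pL.re, ?_, ?_⟩
  · have := integral_re (𝕜 := ℂ) (pL.integrable (by norm_num))
    rw [H.pr_0 bI] at this
    simpa using this
  · refine (re_sq_int pL).trans ((H.pr_star bm bL).trans ?_)
    rw [mul_assoc]
    refine mul_le_mul_of_nonneg_left ?_ H.kap0.le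
    rw [← integral_const_mul]
    have i2 : Integrable (fun t => e * (‖q t‖^2 * om t)) lam := by
      refine Integrable.const_mul ?_ e
      refine ((omI w).const_mul (C^2)).mono' ((qm.norm.pow_const 2).mul w.m).aestronglyMeasurable (Eventually.of_forall fun t => ?_)
      have := w.n0 t
      rw [Real.norm_of_nonneg (by positivity)]
      exact mul_le_mul_of_nonneg_right (pow_le_pow_left₀ (norm_nonneg _) (hq t) 2) this
    refine integral_mono_ae bL.norm.integrable_sq i2 (w.le.mono fun t ht => ?_)
    simp only [nb]
    have := w.n0 t
    calc (‖q t‖ * om t)^2 = om t * (‖q t‖^2 * om t) := by ring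
      _ ≤ _ := mul_le_mul_of_nonneg_right ht (by positivity)

end VHyp
end PartB3

section PartB4

/-- measure with density -/
def dm (f : ℝ → ℝ) : Measure ℝ := (volume : Measure ℝ).withDensity (fun y => ENNReal.ofReal (f y))

lemma IsDensity.int {f : ℝ → ℝ} (h : IsDensity f) : Integrable f := by
  refine (integrableOn_iff_integrable_of_support_subset (s := Ioi 0) ?_).1 h.2.2.1
  intro x hx
  by_contra hx'
  exact hx (h.2.1 x (not_lt.1 hx'))

lemma int_Ioi {X : Type*} [NormedAddCommGroup X] [NormedSpace ℝ X] {f : ℝ → X} (h : ∀ x ≤ 0, f x = 0) :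
    ∫ x in Ioi (0:ℝ), f x = ∫ x, f x :=
  setIntegral_eq_integral_of_forall_compl_eq_zero fun x hx => h x (not_lt.1 hx)

lemma dm_prob {f : ℝ → ℝ} (h : IsDensity f) : IsProbabilityMeasure (dm f) := by
  constructor
  rw [dm, withDensity_apply _ MeasurableSet.univ, Measure.restrict_univ,
    ← ofReal_integral_eq_lintegral_ofReal h.int (Eventually.of_forall h.1), ← int_Ioi h.2.1, h.2.2.2]
  simp

lemma dm_pos {f : ℝ → ℝ} (h : ∀ x ≤ 0, f x = 0) : ∀ᵐ x ∂(dm f), 0 < x := by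
  rw [ae_iff]
  have : {a : ℝ | ¬ 0 < a} = Iic 0 := by ext; simp
  rw [this, dm, withDensity_apply _ measurableSet_Iic]
  refine setLIntegral_eq_zero measurableSet_Iic fun x hx => ?_
  simp [h x hx]

lemma dm_lint {f : ℝ → ℝ} (hf : AEMeasurable f) {G : ℝ → ℝ≥0∞} (hG : Measurable G) :
    ∫⁻ x, G x ∂(dm f) = ∫⁻ x, ENNReal.ofReal (f x) * G x := by
  rw [dm, lintegral_withDensity_eq_lintegral_mul₀ hf.ennreal_ofReal hG.aemeasurable]
  rfl

lemma dm_int {X : Type*} [NormedAddCommGroup X] [NormedSpace ℝ X] {f : ℝ → ℝ} (hf : AEMeasurable f) (h0 : ∀ x, 0 ≤ f x) (F : ℝ → X) :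
    ∫ x, F x ∂(dm f) = ∫ x, f x • F x := by
  rw [dm, integral_withDensity_eq_integral_toReal_smul₀ hf.ennreal_ofReal (Eventually.of_forall fun x => by simp)]
  simp [ENNReal.toReal_ofReal (h0 _)]

lemma dm_integrable {X : Type*} [NormedAddCommGroup X] [NormedSpace ℝ X] {f : ℝ → ℝ} (hf : AEMeasurable f) (h0 : ∀ x, 0 ≤ f x) (F : ℝ → X) :
    Integrable F (dm f) ↔ Integrable (fun x => f x • F x) := by
  rw [dm, integrable_withDensity_iff_integrable_smul₀' hf.ennreal_ofReal (Eventually.of_forall fun x => by simp)]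
  simp [ENNReal.toReal_ofReal (h0 _)]

/-- nullity transfer under `x ↦ y / x` -/
lemma ae_div {p : ℝ → Prop} (hp : ∀ᵐ u, p u) {y : ℝ} (hy : y ≠ 0) : ∀ᵐ x ∂(volume.restrict (Ioi (0:ℝ))), p (y / x) := by
  rw [ae_restrict_iff' measurableSet_Ioi, ae_iff]
  have hN : volume {u | ¬ p u} = 0 := hp
  have hs : volume ((fun z => y / z) '' ({u | ¬ p u} ∩ {0}ᶜ)) = 0 := by
    refine MeasureTheory.addHaar_image_eq_zero_of_differentiableOn_of_addHaar_eq_zero volume ?_ (measure_mono_null inter_subset_left hN)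
    intro z hz
    have : z ≠ 0 := hz.2
    exact (((differentiableAt_const y).div differentiableAt_id this)).differentiableWithinAt
  refine measure_mono_null ?_ hs
  intro x hx
  simp only [Classical.not_imp, Set.mem_ofPred_eq] at hx
  have hx0 : x ≠ 0 := ne_of_gt hx.1
  refine ⟨y / x, ⟨hx.2, ?_⟩, ?_⟩
  · exact div_ne_zero hy hx0
  · field_simp

lemma mconv_congr {f f' φ φ' : ℝ → ℝ} (h1 : f =ᵐ[volume] f') (h2 : φ =ᵐ[volume] φ') {y : ℝ} (hy : y ≠ 0) :
    mconv f φ y = mconv f' φ' y := by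
  unfold mconv
  refine integral_congr_ae ?_
  filter_upwards [ae_restrict_of_ae h1, ae_div h2 hy] with x hx hx2
  rw [hx, hx2]

lemma mconv_meas0 {f φ : ℝ → ℝ} (hf : Measurable f) (hφ : Measurable φ) : Measurable (mconv f φ) := by
  have : Measurable (fun q : ℝ × ℝ => f q.2 * φ (q.1 / q.2) / q.2) := by fun_prop
  exact (this.stronglyMeasurable.integral_prod_right' (ν := volume.restrict (Ioi 0))).measurable

lemma ne0_ae : ∀ᵐ y : ℝ, y ≠ 0 := by
  rw [ae_iff]; simp

lemma mconv_aem {f φ : ℝ → ℝ} (hf : AEMeasurable f) (hφ : AEMeasurable φ) : AEMeasurable (mconv f φ) :=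
  ⟨_, mconv_meas0 hf.measurable_mk hφ.measurable_mk, ne0_ae.mono fun _ hy => mconv_congr hf.ae_eq_mk hφ.ae_eq_mk hy⟩

lemma mconv_nonneg {f φ : ℝ → ℝ} (hf : ∀ x, 0 ≤ f x) (hφ : ∀ x, 0 ≤ φ x) (y : ℝ) : 0 ≤ mconv f φ y :=
  setIntegral_nonneg measurableSet_Ioi fun x hx => div_nonneg (mul_nonneg (hf _) (hφ _)) (le_of_lt hx)

lemma mconv_zero {f φ : ℝ → ℝ} (hφ : ∀ x ≤ 0, φ x = 0) (y : ℝ) (hy : y ≤ 0) : mconv f φ y = 0 := by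
  unfold mconv
  rw [setIntegral_congr_fun measurableSet_Ioi (g := fun _ => 0)]
  · simp
  · intro x hx
    have : y / x ≤ 0 := div_nonpos_of_nonpos_of_nonneg hy (le_of_lt hx)
    simp [hφ _ this]

/-- scaling -/
lemma lint_scale (H : ℝ → ℝ≥0∞) {x : ℝ} (hx : 0 < x) :
    ∫⁻ y, ENNReal.ofReal (x⁻¹) * H (y / x) = ∫⁻ u, H u := by
  have hx0 : x⁻¹ ≠ 0 := inv_ne_zero hx.ne'
  have h1 : ∫⁻ y, H (y / x) = ENNReal.ofReal x * ∫⁻ u, H u := by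
    have e := Real.map_volume_mul_right hx0
    have e2 : ∫⁻ y, H (y * x⁻¹) = ∫⁻ u, H u ∂(Measure.map (· * x⁻¹) volume) := by
      rw [show (fun y : ℝ => y * x⁻¹) = (MeasurableEquiv.mulRight₀ x⁻¹ hx0) from rfl, lintegral_map_equiv]
      rfl
    simp_rw [div_eq_mul_inv]
    rw [e2, e, lintegral_smul_measure]
    simp [abs_of_pos hx]
  rw [lintegral_const_mul' _ _ ENNReal.ofReal_ne_top, h1, ← mul_assoc, ← ENNReal.ofReal_mul (by positivity),
    inv_mul_cancel₀ hx.ne']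
  simp

/-- the lower-integral version of the density -/
def lconv (f φ : ℝ → ℝ) (y : ℝ) : ℝ≥0∞ := ∫⁻ x in Ioi (0:ℝ), ENNReal.ofReal (f x * φ (y / x) / x)

lemma lconv_meas {f φ : ℝ → ℝ} (hf : Measurable f) (hφ : Measurable φ) : Measurable (lconv f φ) := by
  have : Measurable (fun q : ℝ × ℝ => ENNReal.ofReal (f q.2 * φ (q.1 / q.2) / q.2)) := by fun_prop
  exact this.lintegral_prod_right' (ν := volume.restrict (Ioi 0))

lemma lconv_lint {f φ : ℝ → ℝ} (hf : Measurable f) (hφ : Measurable φ) (f0 : ∀ x, 0 ≤ f x)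
    (fz : ∀ x ≤ 0, f x = 0) {G : ℝ → ℝ≥0∞} (hG : Measurable G) :
    ∫⁻ y, lconv f φ y * G y = ∫⁻ x, ENNReal.ofReal (f x) * ∫⁻ u, ENNReal.ofReal (φ u) * G (x * u) := by
  have h1 : ∀ y, lconv f φ y * G y = ∫⁻ x in Ioi (0:ℝ), ENNReal.ofReal (f x * φ (y / x) / x) * G y := fun y => by
    rw [lconv, lintegral_mul_const]
    fun_prop
  simp_rw [h1]
  rw [lintegral_lintegral_swap]
  · have h2 : ∀ x ∈ Ioi (0:ℝ), ∫⁻ y, ENNReal.ofReal (f x * φ (y / x) / x) * G y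
        = ENNReal.ofReal (f x) * ∫⁻ u, ENNReal.ofReal (φ u) * G (x * u) := fun x hx => by
      have hx : 0 < x := hx
      rw [← lint_scale (fun u => ENNReal.ofReal (φ u) * G (x * u)) hx, ← lintegral_const_mul' _ _ ENNReal.ofReal_ne_top]
      congr 1; ext y
      have e1 : x * (y / x) = y := by field_simp
      rw [e1, ← mul_assoc, ← mul_assoc]
      congr 1
      rw [mul_div_assoc, ENNReal.ofReal_mul (f0 x), div_eq_mul_inv, mul_comm (φ _), ENNReal.ofReal_mul (by positivity), mul_assoc]
    rw [setLIntegral_congr_fun measurableSet_Ioi h2, ← lintegral_indicator measurableSet_Ioi]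
    congr 1; ext x
    by_cases hx : x ∈ Ioi (0:ℝ)
    · simp [hx]
    · simp [hx, fz x (not_lt.1 hx)]
  · have : Measurable (fun q : ℝ × ℝ => ENNReal.ofReal (f q.2 * φ (q.1 / q.2) / q.2) * G q.1) := by fun_prop
    exact this.aemeasurable

lemma dens_mk {f : ℝ → ℝ} (h : IsDensity f) : ∃ f', Measurable f' ∧ f =ᵐ[volume] f' ∧ IsDensity f' := by
  obtain ⟨f1, hm, he⟩ := h.int.aemeasurable
  refine ⟨fun x => if 0 < x then max (f1 x) 0 else 0, ?_, ?_, ?_⟩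
  · exact Measurable.ite measurableSet_Ioi (hm.max measurable_const) measurable_const
  · filter_upwards [he] with x hx
    by_cases h0 : 0 < x
    · simp [h0, ← hx, h.1 x]
    · simp [h0, h.2.1 x (not_lt.1 h0)]
  · have e : f =ᵐ[volume] (fun x => if 0 < x then max (f1 x) 0 else 0) := by
      filter_upwards [he] with x hx
      by_cases h0 : 0 < x
      · simp [h0, ← hx, h.1 x]
      · simp [h0, h.2.1 x (not_lt.1 h0)]
    refine ⟨fun x => by dsimp only; split_ifs <;> simp, fun x hx => by simp [not_lt.2 hx], h.2.2.1.congr (ae_restrict_of_ae e), ?_⟩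
    rw [← integral_congr_ae (ae_restrict_of_ae e)]; exact h.2.2.2

lemma dm_congr {f f' : ℝ → ℝ} (h : f =ᵐ[volume] f') : dm f = dm f' :=
  withDensity_congr_ae (h.mono fun x hx => by simp [hx])

lemma dm_mconv {f φ : ℝ → ℝ} (hf : IsDensity f) (hφ : IsDensity φ) :
    dm (mconv f φ) = ((dm f).prod (dm φ)).map (fun p => p.1 * p.2) := by
  obtain ⟨f', fm, fe, fd⟩ := dens_mk hf
  obtain ⟨φ', φm, φe, φd⟩ := dens_mk hφ
  have e1 : dm (mconv f φ) = dm (mconv f' φ') := dm_congr (ne0_ae.mono fun y hy => mconv_congr fe φe hy)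
  rw [e1, dm_congr fe, dm_congr φe]
  have := dm_prob fd
  have := dm_prob φd
  have key : ∀ G : ℝ → ℝ≥0∞, Measurable G → ∫⁻ y, lconv f' φ' y * G y
      = ∫⁻ y, G y ∂(((dm f').prod (dm φ')).map (fun p => p.1 * p.2)) := fun G hG => by
    rw [lconv_lint fm φm fd.1 fd.2.1 hG, lintegral_map hG (by fun_prop), lintegral_prod _ (by fun_prop),
      dm_lint fm.aemeasurable]
    · congr 1; ext x; congr 1
      rw [dm_lint φm.aemeasurable (by fun_prop)]
    · have : Measurable (fun q : ℝ × ℝ => G (q.1 * q.2)) := by fun_prop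
      exact this.lintegral_prod_right'
  have hfin : ∀ᵐ y, lconv f' φ' y < ∞ := by
    refine ae_lt_top (lconv_meas fm φm) ?_
    have := key (fun _ => 1) measurable_const
    simp only [mul_one] at this
    rw [this]; simp
  have hae : ∀ᵐ y, ENNReal.ofReal (mconv f' φ' y) = lconv f' φ' y := by
    filter_upwards [hfin] with y hy
    have : mconv f' φ' y = (lconv f' φ' y).toReal := by
      unfold mconv lconv
      refine integral_eq_lintegral_of_nonneg_ae ?_ ?_
      · filter_upwards [ae_restrict_mem measurableSet_Ioi] with x hx
        exact div_nonneg (mul_nonneg (fd.1 _) (φd.1 _)) (le_of_lt hx)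
      · have : Measurable (fun x => f' x * φ' (y / x) / x) := by fun_prop
        exact this.aestronglyMeasurable
    rw [this, ENNReal.ofReal_toReal hy.ne]
  refine Measure.ext_of_lintegral _ fun G hG => ?_
  rw [← key G hG, dm_lint (mconv_meas0 fm φm).aemeasurable hG]
  exact lintegral_congr_ae (hae.mono fun y hy => by simp only [hy])

end PartB4

section PartB5

/-- power on the half line -/
def ra (a y : ℝ) : ℝ := if 0 < y then y ^ a else 0
/-- complex power on the half line -/
def vv (c y t : ℝ) : ℂ := if 0 < y then cpw c t y else 0

lemma cpw_eq {c t y : ℝ} (hy : 0 < y) : cpw c t y = ((y ^ (c - 1) : ℝ) : ℂ) * ech (t * Real.log y) := by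
  have h0 : (y : ℂ) ≠ 0 := by exact_mod_cast hy.ne'
  unfold cpw ech
  rw [Complex.cpow_def_of_ne_zero h0, Real.rpow_def_of_pos hy, ← Complex.ofReal_log hy.le, Complex.ofReal_exp, ← Complex.exp_add]
  congr 1
  push_cast
  ring

lemma vv_eq (c y t : ℝ) : vv c y t = ((ra (c-1) y : ℝ) : ℂ) * ech (t * Real.log y) := by
  unfold vv ra
  split_ifs with h
  · exact cpw_eq h
  · simp

lemma ra_nonneg (a y : ℝ) : 0 ≤ ra a y := by
  unfold ra; split_ifs with h
  · exact Real.rpow_nonneg h.le _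
  · exact le_rfl

lemma ra_pos (a : ℝ) {y : ℝ} (h : 0 < y) : 0 < ra a y := by
  simp [ra, h, Real.rpow_pos_of_pos h]

lemma ra_meas (a : ℝ) : Measurable (ra a) :=
  Measurable.ite measurableSet_Ioi (by fun_prop) measurable_const

lemma vv_norm (c y t : ℝ) : ‖vv c y t‖ = ra (c-1) y := by
  rw [vv_eq, norm_mul, ech_norm, mul_one, Complex.norm_real, Real.norm_of_nonneg (ra_nonneg _ _)]

lemma vv_meas (c : ℝ) : Measurable (fun p : ℝ × ℝ => vv c p.1 p.2) := by
  simp_rw [vv_eq]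
  refine (Complex.measurable_ofReal.comp ((ra_meas _).comp measurable_fst)).mul (ech_cont.measurable.comp ?_)
  fun_prop

lemma ra_mul (a : ℝ) {x y : ℝ} (hx : 0 < x) (hy : 0 < y) : ra a (x*y) = ra a x * ra a y := by
  simp [ra, hx, hy, Real.mul_rpow hx.le hy.le]

lemma vv_mul (c t : ℝ) {x y : ℝ} (hx : 0 < x) (hy : 0 < y) : vv c (x*y) t = vv c x t * vv c y t := by
  rw [vv_eq, vv_eq, vv_eq, ra_mul _ hx hy, Real.log_mul hx.ne' hy.ne', mul_add, ech_add]
  push_cast; ring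

lemma vv_conj (c y t : ℝ) : (starRingEnd ℂ) (vv c y t) = vv c y (-t) := by
  rw [vv_eq, vv_eq, map_mul, Complex.conj_ofReal, ech_conj]
  congr 2; ring

lemma ra_pow (a y : ℝ) (m : ℕ) (hm : m ≠ 0) : ra a y ^ m = ra (m * a) y := by
  unfold ra
  split_ifs with h
  · rw [mul_comm, Real.rpow_mul h.le, Real.rpow_natCast]
  · simp [hm]

lemma mellin_dm {f : ℝ → ℝ} (hf : AEMeasurable f) (h0 : ∀ x, 0 ≤ f x) (hz : ∀ x ≤ 0, f x = 0) (c t : ℝ) :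
    mellinT c f t = ∫ y, vv c y t ∂(dm f) := by
  rw [dm_int hf h0, ← int_Ioi (fun x hx => by simp [hz x hx]), mellinT]
  refine setIntegral_congr_fun measurableSet_Ioi fun x hx => ?_
  have hx : 0 < x := hx
  simp [vv, hx, mul_comm]

lemma wnorm_dm {f : ℝ → ℝ} (hf : AEMeasurable f) (h0 : ∀ x, 0 ≤ f x) (hz : ∀ x ≤ 0, f x = 0) (a : ℝ) :
    wnorm1 a f = ∫ y, ra a y ∂(dm f) := by
  rw [dm_int hf h0, ← int_Ioi (fun x hx => by simp [hz x hx]), wnorm1]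
  refine setIntegral_congr_fun measurableSet_Ioi fun x hx => ?_
  have hx : 0 < x := hx
  simp [ra, hx, abs_of_nonneg (h0 x)]

lemma memW_dm {f : ℝ → ℝ} (hf : AEMeasurable f) (h0 : ∀ x, 0 ≤ f x) (hz : ∀ x ≤ 0, f x = 0) {a : ℝ}
    (h : MemW1 a f) : Integrable (ra a) (dm f) := by
  rw [dm_integrable hf h0]
  refine (integrableOn_iff_integrable_of_support_subset (s := Ioi 0) ?_).1 ?_
  · intro x hx
    by_contra hx'
    exact hx (by simp [hz x (not_lt.1 hx')])
  · refine IntegrableOn.congr_fun h (fun x hx => ?_) measurableSet_Ioi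
    have hx : 0 < x := hx
    simp [ra, hx, abs_of_nonneg (h0 x)]

/-- interpolation -/
lemma ra_interp {μ : Measure ℝ} [IsFiniteMeasure μ] {a : ℝ} (h : Integrable (ra (4*a)) μ) : Integrable (ra (2*a)) μ := by
  refine ((integrable_const (1:ℝ)).add h).mono' (ra_meas _).aestronglyMeasurable (Eventually.of_forall fun y => ?_)
  rw [Real.norm_of_nonneg (ra_nonneg _ _)]
  have e : ra (4*a) y = ra (2*a) y^2 := by rw [ra_pow _ _ _ (by norm_num)]; congr 1; push_cast; ring
  simp only [Pi.add_apply, e]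
  nlinarith [sq_nonneg (ra (2*a) y - 1), ra_nonneg (2*a) y]

lemma prod_pos {f φ : ℝ → ℝ} (hf : IsDensity f) (hφ : IsDensity φ) :
    ∀ᵐ p ∂((dm f).prod (dm φ)), 0 < p.1 ∧ 0 < p.2 := by
  have := dm_prob hf
  have := dm_prob hφ
  filter_upwards [Measure.quasiMeasurePreserving_fst.ae (dm_pos hf.2.1),
    Measure.quasiMeasurePreserving_snd.ae (dm_pos hφ.2.1)] with p h1 h2
  exact ⟨h1, h2⟩

lemma ra_mconv {f φ : ℝ → ℝ} (hf : IsDensity f) (hφ : IsDensity φ) {a : ℝ}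
    (h1 : Integrable (ra a) (dm f)) (h2 : Integrable (ra a) (dm φ)) :
    Integrable (ra a) (dm (mconv f φ)) ∧
    ∫ y, ra a y ∂(dm (mconv f φ)) = (∫ y, ra a y ∂(dm f)) * ∫ y, ra a y ∂(dm φ) := by
  have := dm_prob hf
  have := dm_prob hφ
  have hm : Measurable (fun p : ℝ × ℝ => p.1 * p.2) := by fun_prop
  rw [dm_mconv hf hφ]
  have e : ∀ᵐ p ∂((dm f).prod (dm φ)), ra a p.1 * ra a p.2 = ra a (p.1 * p.2) :=
    (prod_pos hf hφ).mono fun p hp => (ra_mul a hp.1 hp.2).symm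
  constructor
  · rw [integrable_map_measure (ra_meas a).aestronglyMeasurable hm.aemeasurable]
    exact (h1.mul_prod h2).congr e
  · rw [integral_map hm.aemeasurable (ra_meas a).aestronglyMeasurable, ← integral_congr_ae e, integral_prod_mul]

lemma vv_mconv {f φ : ℝ → ℝ} (hf : IsDensity f) (hφ : IsDensity φ) (c t : ℝ) :
    ∫ y, vv c y t ∂(dm (mconv f φ)) = (∫ y, vv c y t ∂(dm f)) * ∫ y, vv c y t ∂(dm φ) := by
  have := dm_prob hf
  have := dm_prob hφ
  have hm : Measurable (fun p : ℝ × ℝ => p.1 * p.2) := by fun_prop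
  have vm : Measurable (fun y => vv c y t) := (vv_meas c).comp measurable_prodMk_right
  rw [dm_mconv hf hφ]
  have e : ∀ᵐ p ∂((dm f).prod (dm φ)), vv c p.1 t * vv c p.2 t = vv c (p.1 * p.2) t :=
    (prod_pos hf hφ).mono fun p hp => (vv_mul c t hp.1 hp.2).symm
  rw [integral_map hm.aemeasurable vm.aestronglyMeasurable, ← integral_congr_ae e, integral_prod_mul (fun x => vv c x t) (fun y => vv c y t)]

lemma mellin_mconv {f φ : ℝ → ℝ} (hf : IsDensity f) (hφ : IsDensity φ) (c t : ℝ) :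
    mellinT c (mconv f φ) t = mellinT c f t * mellinT c φ t := by
  rw [mellin_dm hf.int.aemeasurable hf.1 hf.2.1, mellin_dm hφ.int.aemeasurable hφ.1 hφ.2.1,
    mellin_dm (mconv_aem hf.int.aemeasurable hφ.int.aemeasurable) (mconv_nonneg hf.1 hφ.1) (mconv_zero hφ.2.1),
    vv_mconv hf hφ]

lemma dm_mconv_prob {f φ : ℝ → ℝ} (hf : IsDensity f) (hφ : IsDensity φ) : IsProbabilityMeasure (dm (mconv f φ)) := by
  have := dm_prob hf
  have := dm_prob hφ
  rw [dm_mconv hf hφ]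
  exact Measure.isProbabilityMeasure_map (by fun_prop)

/-- substitution -/
lemma scale_half (c : ℝ) (G : ℝ → ℝ≥0∞) {x : ℝ} (hx : 0 < x) :
    ∫⁻ u, ENNReal.ofReal (ra (1-2*c) u) * G (x*u) = ENNReal.ofReal (ra (2*(c-1)) x) * ∫⁻ y, ENNReal.ofReal (ra (1-2*c) y) * G y := by
  rw [← lint_scale _ hx, ← lintegral_const_mul' _ _ ENNReal.ofReal_ne_top]
  congr 1; ext y
  have e1 : x * (y / x) = y := by field_simp
  rw [e1, ← mul_assoc, ← mul_assoc, ← ENNReal.ofReal_mul (by positivity), ← ENNReal.ofReal_mul (ra_nonneg _ _)]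
  congr 2
  unfold ra
  by_cases hy : 0 < y
  · have : 0 < y / x := by positivity
    simp only [this, hy, hx, if_true]
    rw [Real.div_rpow hy.le hx.le, show 2*(c-1) = -(1-2*c) + (-1) by ring, Real.rpow_add hx, Real.rpow_neg hx.le, Real.rpow_neg_one]
    ring
  · have : ¬ 0 < y / x := by
      rw [not_lt] at *; exact div_nonpos_of_nonpos_of_nonneg hy hx.le
    simp [this, hy]

lemma lint_bound {f φ : ℝ → ℝ} (hf : IsDensity f) (hφ : IsDensity φ) {c : ℝ}
    (h1 : Integrable (ra (2*(c-1))) (dm f)) {G : ℝ → ℝ≥0∞} (hG : Measurable G) :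
    ∫⁻ y, G y ∂(dm (mconv f φ)) ≤ wnormInf (2*c-1) φ * (ENNReal.ofReal (wnorm1 (2*(c-1)) f) * ∫⁻ y, ENNReal.ofReal (ra (1-2*c) y) * G y) := by
  have := dm_prob hf
  have := dm_prob hφ
  set N := wnormInf (2*c-1) φ with hN
  set J := ∫⁻ y, ENNReal.ofReal (ra (1-2*c) y) * G y with hJ
  rw [dm_mconv hf hφ, lintegral_map hG (by fun_prop), lintegral_prod _ (by fun_prop)]
  have raM : ∀ a, Measurable (fun x => ENNReal.ofReal (ra a x)) := fun a => (ra_meas a).ennreal_ofReal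
  have bφ : ∀ᵐ u, ENNReal.ofReal (φ u) ≤ N * ENNReal.ofReal (ra (1-2*c) u) := by
    have h := ENNReal.ae_le_essSup (μ := volume.restrict (Ioi (0:ℝ))) (fun x => ENNReal.ofReal (|φ x| * x ^ (2*c-1)))
    rw [ae_restrict_iff' measurableSet_Ioi] at h
    filter_upwards [h] with u hu
    by_cases h0 : 0 < u
    · have h2 := hu h0
      have e : φ u = (|φ u| * u^(2*c-1)) * ra (1-2*c) u := by
        simp only [ra, h0, if_true, abs_of_nonneg (hφ.1 u)]
        rw [mul_assoc, ← Real.rpow_add h0]; simp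
      rw [e, ENNReal.ofReal_mul (mul_nonneg (abs_nonneg _) (Real.rpow_nonneg h0.le _))]
      exact mul_le_mul_left h2 _
    · simp [hφ.2.1 u (not_lt.1 h0)]
  have inner : ∀ x, 0 < x → ∫⁻ u, G (x*u) ∂(dm φ) ≤ ENNReal.ofReal (ra (2*(c-1)) x) * (N * J) := fun x hx => by
    rw [dm_lint hφ.int.aemeasurable (by fun_prop)]
    calc ∫⁻ u, ENNReal.ofReal (φ u) * G (x*u) ≤ ∫⁻ u, N * (ENNReal.ofReal (ra (1-2*c) u) * G (x*u)) := by
          refine lintegral_mono_ae (bφ.mono fun u hu => ?_)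
          rw [← mul_assoc]
          exact mul_le_mul_left hu _
      _ = N * ∫⁻ u, ENNReal.ofReal (ra (1-2*c) u) * G (x*u) := lintegral_const_mul _ ((raM _).mul (by fun_prop))
      _ = _ := by rw [scale_half c G hx]; ring
  calc ∫⁻ x, ∫⁻ u, G (x*u) ∂(dm φ) ∂(dm f) ≤ ∫⁻ x, ENNReal.ofReal (ra (2*(c-1)) x) * (N * J) ∂(dm f) :=
        lintegral_mono_ae ((dm_pos hf.2.1).mono fun x hx => inner x hx)
    _ = (∫⁻ x, ENNReal.ofReal (ra (2*(c-1)) x) ∂(dm f)) * (N * J) := lintegral_mul_const _ (raM _)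
    _ = _ := by
        rw [← ofReal_integral_eq_lintegral_ofReal h1 (Eventually.of_forall fun x => ra_nonneg _ x),
          ← wnorm_dm hf.int.aemeasurable hf.1 hf.2.1]
        ring

/-- logarithmic substitution -/
lemma exp_sub (H : ℝ → ℝ≥0∞) : ∫⁻ y in Ioi (0:ℝ), H y = ∫⁻ s, ENNReal.ofReal (Real.exp s) * H (Real.exp s) := by
  have h := lintegral_image_eq_lintegral_abs_deriv_mul (s := univ) MeasurableSet.univ
    (f := Real.exp) (f' := Real.exp) (fun x _ => (Real.hasDerivAt_exp x).hasDerivWithinAt) Real.exp_injective.injOn H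
  rw [image_univ, Real.range_exp, Measure.restrict_univ] at h
  simpa [abs_of_pos (Real.exp_pos _)] using h

lemma J_le (c : ℝ) {b : ℝ → ℂ} (hb : Integrable b) (bm : Measurable b) :
    ∫⁻ y, ENNReal.ofReal (ra (1-2*c) y) * ‖∫ t, vv c y t * b t‖ₑ^2 ≤ ∫⁻ t, ‖b t‖ₑ^2 := by
  have e0 : ∫⁻ y, ENNReal.ofReal (ra (1-2*c) y) * ‖∫ t, vv c y t * b t‖ₑ^2
     = ∫⁻ y in Ioi (0:ℝ), ENNReal.ofReal (ra (1-2*c) y) * ‖∫ t, vv c y t * b t‖ₑ^2 := by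
    rw [← lintegral_indicator measurableSet_Ioi]
    congr 1; ext y
    by_cases hy : y ∈ Ioi (0:ℝ)
    · simp [hy]
    · have : ¬ 0 < y := hy
      simp [this, ra]
  rw [e0, exp_sub]
  refine le_trans (le_of_eq ?_) (plancherel_le hb bm)
  congr 1; ext s
  have e1 : ∫ t, vv c (Real.exp s) t * b t = ((ra (c-1) (Real.exp s) : ℝ) : ℂ) * fint b s := by
    unfold fint
    rw [← integral_const_mul]
    congr 1; ext t
    rw [vv_eq, Real.log_exp]; ring
  have e2 : ‖((ra (c-1) (Real.exp s) : ℝ) : ℂ)‖ₑ = ENNReal.ofReal (ra (c-1) (Real.exp s)) := by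
    rw [← ofReal_norm_eq_enorm, Complex.norm_real, Real.norm_of_nonneg (ra_nonneg _ _)]
  rw [e1, enorm_mul, mul_pow, e2, ← ENNReal.ofReal_pow (ra_nonneg _ _), ← mul_assoc, ← mul_assoc,
    ← ENNReal.ofReal_mul (Real.exp_pos s).le, ← ENNReal.ofReal_mul (mul_nonneg (Real.exp_pos s).le (ra_nonneg _ _))]
  have : Real.exp s * ra (1-2*c) (Real.exp s) * ra (c-1) (Real.exp s)^2 = 1 := by
    simp only [ra, Real.exp_pos, if_true, ← Real.exp_mul]
    rw [← Real.exp_nat_mul, ← Real.exp_add, ← Real.exp_add]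
    have : s + s*(1-2*c) + (2:ℕ)*(s*(c-1)) = 0 := by push_cast; ring
    rw [this, Real.exp_zero]
  rw [this]; simp

end PartB5

section PartB6

lemma cphi_one (c : ℝ) (φ : ℝ → ℝ) : 1 ≤ cphi c φ := le_max_right _ _
lemma Vc_one (c : ℝ) (f φ : ℝ → ℝ) : 1 ≤ Vc c f φ := le_max_right _ _

lemma dmg_wnorm {f φ : ℝ → ℝ} (hf : IsDensity f) (hφ : IsDensity φ) (a : ℝ) :
    wnorm1 a (mconv f φ) = ∫ y, ra a y ∂(dm (mconv f φ)) :=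
  wnorm_dm (mconv_aem hf.int.aemeasurable hφ.int.aemeasurable) (mconv_nonneg hf.1 hφ.1) (mconv_zero hφ.2.1) a

lemma memW_dens {f : ℝ → ℝ} (hf : IsDensity f) {a : ℝ} (h : MemW1 a f) : Integrable (ra a) (dm f) :=
  memW_dm hf.int.aemeasurable hf.1 hf.2.1 h

lemma memW_two {f : ℝ → ℝ} (hf : IsDensity f) {a : ℝ} (h : MemW1 (4*a) f) : Integrable (ra (2*a)) (dm f) :=
  have := dm_prob hf
  ra_interp (memW_dens hf h)

lemma ra4 (c y : ℝ) : ra (c-1) y^4 = ra (4*(c-1)) y := by rw [ra_pow _ _ _ (by norm_num)]; norm_num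
lemma ra2 (c y : ℝ) : ra (c-1) y^2 = ra (2*(c-1)) y := by rw [ra_pow _ _ _ (by norm_num)]; norm_num

lemma V_sq_le {c : ℝ} {f φ : ℝ → ℝ} (hf : IsDensity f) (hφ : IsDensity φ)
    (hf4 : MemW1 (4 * (c - 1)) f) (hφ4 : MemW1 (4 * (c - 1)) φ) : Vc c f φ^2 ≤ V2c c f φ := by
  have := dm_mconv_prob hf hφ
  have i4 := (ra_mconv hf hφ (memW_dens hf hf4) (memW_dens hφ hφ4)).1
  have e : ∀ y, ra (2*(c-1)) y^2 = ra (4*(c-1)) y := fun y => by rw [ra_pow _ _ _ (by norm_num)]; congr 1; push_cast; ring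
  have l2 : MemLp (ra (2*(c-1))) 2 (dm (mconv f φ)) := by
    refine (memLp_two_iff_integrable_sq (ra_meas _).aestronglyMeasurable).2 ?_
    simp_rw [e]; exact i4
  have j := VHyp.jens _ l2
  simp_rw [e] at j
  rw [← dmg_wnorm hf hφ, ← dmg_wnorm hf hφ] at j
  unfold Vc V2c
  rcases le_total (wnorm1 (2 * (c - 1)) (mconv f φ)) 1 with h | h
  · rw [max_eq_right h]; norm_num
  · rw [max_eq_left h]; exact j.trans (le_max_left _ _)

lemma kap_ge {c : ℝ} {f φ : ℝ → ℝ} (hf : IsDensity f) (hφ : IsDensity φ)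
    (hf4 : MemW1 (4 * (c - 1)) f) (hφ4 : MemW1 (4 * (c - 1)) φ) :
    wnormInfR (2*c-1) φ * wnorm1 (2*(c-1)) f ≤ cphi c φ * Vc c f φ := by
  have := dm_prob hφ
  have i2 := memW_two hφ hφ4
  have m := (ra_mconv hf hφ (memW_two hf hf4) i2).2
  rw [← dmg_wnorm hf hφ, ← wnorm_dm hf.int.aemeasurable hf.1 hf.2.1, ← wnorm_dm hφ.int.aemeasurable hφ.1 hφ.2.1] at m
  have pos : 0 < wnorm1 (2*(c-1)) φ := by
    rw [wnorm_dm hφ.int.aemeasurable hφ.1 hφ.2.1, integral_pos_iff_support_of_nonneg (ra_nonneg _) i2]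
    refine pos_iff_ne_zero.2 fun h0 => ?_
    have h1 : ∀ᵐ x ∂(dm φ), False := by
      filter_upwards [dm_pos hφ.2.1, measure_eq_zero_iff_ae_notMem.1 h0] with x hx hx2
      exact hx2 (ra_pos _ hx).ne'
    exact h1.exists.elim fun _ h => h
  have w0 : 0 ≤ wnorm1 (2*(c-1)) f := by
    rw [wnorm_dm hf.int.aemeasurable hf.1 hf.2.1]; exact integral_nonneg (ra_nonneg _)
  calc wnormInfR (2*c-1) φ * wnorm1 (2*(c-1)) f
      = (wnormInfR (2*c-1) φ / wnorm1 (2*(c-1)) φ) * (wnorm1 (2*(c-1)) f * wnorm1 (2*(c-1)) φ) := by field_simp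
    _ ≤ cphi c φ * Vc c f φ := by
        rw [← m]
        refine mul_le_mul (le_max_left _ _) (le_max_left _ _) ?_ (zero_le_one.trans (cphi_one _ _))
        rw [m]; positivity

lemma toV {c : ℝ} {f φ : ℝ → ℝ} (hf : IsDensity f) (hφ : IsDensity φ)
    (hf4 : MemW1 (4 * (c - 1)) f) (hφ4 : MemW1 (4 * (c - 1)) φ) (hφinf : wnormInf (2 * c - 1) φ ≠ ⊤) (K : ℝ) :
    VHyp (dm (mconv f φ)) (volume.restrict (Icc (-K) K)) (vv c) (ra (c-1)) (cphi c φ * Vc c f φ) (Vc c f φ) (V2c c f φ) where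
  vm := vv_meas c
  rm := ra_meas _
  r0 := ra_nonneg _
  vr := fun y t => (vv_norm c y t).le
  r4 := by
    simp_rw [ra4]
    exact (ra_mconv hf hφ (memW_dens hf hf4) (memW_dens hφ hφ4)).1
  r4W := by
    simp_rw [ra4]
    rw [← dmg_wnorm hf hφ]; exact le_max_left _ _
  vV := fun t => by
    simp_rw [vv_norm, ra2]
    rw [← dmg_wnorm hf hφ]; exact le_max_left _ _
  kap0 := mul_pos (zero_lt_one.trans_le (cphi_one _ _)) (zero_lt_one.trans_le (Vc_one _ _ _))
  star := fun a am aL => by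
    set I := Icc (-K) K with hI
    have mI : MeasurableSet I := measurableSet_Icc
    have aI : Integrable a (volume.restrict I) := aL.integrable (by norm_num)
    set b := I.indicator a with hb
    have bm : Measurable b := am.indicator mI
    have bI : Integrable b := (integrable_indicator_iff mI).2 aI
    have e1 : ∀ y, ∫ t in I, vv c y t * a t = ∫ t, vv c y t * b t := fun y => by
      rw [← integral_indicator mI]
      congr 1; ext t
      by_cases ht : t ∈ I <;> simp [hb, ht]
    have e2 : ∫⁻ t, ‖b t‖ₑ^2 = ENNReal.ofReal (∫ t in I, ‖a t‖^2) := by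
      rw [ofReal_integral_eq_lintegral_ofReal aL.norm.integrable_sq (Eventually.of_forall fun t => sq_nonneg _),
        ← lintegral_indicator mI]
      congr 1; ext t
      by_cases ht : t ∈ I
      · simp [hb, ht, ENNReal.ofReal_pow]
      · simp [hb, ht]
    have Gm : Measurable (fun y => ∫ t, vv c y t * b t) := by
      have : Measurable (fun p : ℝ × ℝ => vv c p.1 p.2 * b p.2) := (vv_meas c).mul (bm.comp measurable_snd)
      exact (this.stronglyMeasurable.integral_prod_right' (ν := volume)).measurable
    simp_rw [e1]
    have hb1 := lint_bound hf hφ (c := c) (memW_two hf hf4) (G := fun y => ‖∫ t, vv c y t * b t‖ₑ^2) (Gm.enorm.pow_const 2)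
    have k0 : 0 ≤ cphi c φ * Vc c f φ := mul_nonneg (zero_le_one.trans (cphi_one _ _)) (zero_le_one.trans (Vc_one _ _ _))
    rw [integral_eq_lintegral_of_nonneg_ae (Eventually.of_forall fun y => sq_nonneg _) (Gm.norm.pow_const 2).aestronglyMeasurable]
    refine ENNReal.toReal_le_of_le_ofReal (mul_nonneg k0 (integral_nonneg fun t => sq_nonneg _)) ?_
    have e3 : ∀ z : ℂ, ENNReal.ofReal (‖z‖^2) = ‖z‖ₑ^2 := fun z => by
      rw [ENNReal.ofReal_pow (norm_nonneg _), ofReal_norm]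
    simp_rw [e3]
    refine hb1.trans ?_
    have hJ := J_le c bI bm
    rw [e2] at hJ
    have hN : wnormInf (2*c-1) φ = ENNReal.ofReal (wnormInfR (2*c-1) φ) := (ENNReal.ofReal_toReal hφinf).symm
    have w0 : 0 ≤ wnormInfR (2*c-1) φ := ENNReal.toReal_nonneg
    rw [hN, ← mul_assoc, ← ENNReal.ofReal_mul w0, ENNReal.ofReal_mul k0]
    exact mul_le_mul' (ENNReal.ofReal_le_ofReal (kap_ge hf hφ hf4 hφ4)) hJ

/-- weights -/
lemma mellin_meas {φ : ℝ → ℝ} (hφ : IsDensity φ) (c : ℝ) : Measurable (mellinT c φ) := by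
  have := dm_prob hφ
  have e : mellinT c φ = fun t => ∫ y, vv c y t ∂(dm φ) := by
    ext t; exact mellin_dm hφ.int.aemeasurable hφ.1 hφ.2.1 c t
  rw [e]
  exact ((vv_meas c).stronglyMeasurable.integral_prod_left' (μ := dm φ)).measurable

lemma mellin_bdd {f : ℝ → ℝ} (hf : IsDensity f) {c : ℝ} (h : MemW1 (c-1) f) (t : ℝ) : ‖mellinT c f t‖ ≤ wnorm1 (c-1) f := by
  rw [mellin_dm hf.int.aemeasurable hf.1 hf.2.1, wnorm_dm hf.int.aemeasurable hf.1 hf.2.1]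
  exact norm_integral_le_of_norm_le (memW_dens hf h) (Eventually.of_forall fun y => (vv_norm _ _ _).le)

lemma wgt_meas {w φ : ℝ → ℝ} (hw : Measurable w) (hφ : IsDensity φ) (c : ℝ) : Measurable (wgt c w φ) :=
  (hw.pow_const 2).div ((mellin_meas hφ c).norm.pow_const 2)

lemma wgt_nonneg (c : ℝ) (w φ : ℝ → ℝ) (t : ℝ) : 0 ≤ wgt c w φ t := by unfold wgt; positivity

lemma wgt_le {c K : ℝ} {w φ : ℝ → ℝ} (hw : ∀ t, 0 ≤ w t) (hfin : winf c K w φ ≠ ⊤) :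
    ∀ᵐ t ∂(volume.restrict (Icc (-K) K)), wgt c w φ t ≤ Real.sqrt (Δinf c K w φ) := by
  rw [ae_restrict_iff' measurableSet_Icc]
  have h := ENNReal.ae_le_essSup (μ := (volume : Measure ℝ)) (fun t => ENNReal.ofReal ((Icc (-K) K).indicator (fun t => w t / ‖mellinT c φ t‖) t))
  filter_upwards [h] with t ht hI
  simp only [hI, indicator_of_mem] at ht
  have h2 := (ENNReal.ofReal_le_iff_le_toReal hfin).1 ht
  have e : Δinf c K w φ = ((winf c K w φ).toReal^2)^2 := by unfold Δinf; ring
  rw [e, Real.sqrt_sq (sq_nonneg _), wgt, ← div_pow]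
  exact pow_le_pow_left₀ (div_nonneg (hw t) (norm_nonneg _)) h2 2

lemma wgt_sq (c K : ℝ) (w φ : ℝ → ℝ) : ∫ t in Icc (-K) K, wgt c w φ t^2 = Δ4 c K w φ := by
  unfold Δ4 wgt
  congr 1; ext t
  rw [div_pow]; ring

lemma Δ4_nonneg (c K : ℝ) (w φ : ℝ → ℝ) : 0 ≤ Δ4 c K w φ := integral_nonneg fun t => by positivity

lemma toW {c K : ℝ} {w φ : ℝ → ℝ} (hK : 0 < K) (hwm : Measurable w) (hw : ∀ t, 0 ≤ w t) (hφ : IsDensity φ) (hfin : winf c K w φ ≠ ⊤)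
    (hd : 0 < Real.sqrt (Δ4 c K w φ)) :
    VHyp.WHyp (volume.restrict (Icc (-K) K)) (wgt c w φ) (Real.sqrt (Δinf c K w φ)) (Real.sqrt (2*K)) (Real.sqrt (Δ4 c K w φ)) where
  m := wgt_meas hwm hφ c
  n0 := wgt_nonneg c w φ
  le := wgt_le hw hfin
  i1 := by
    set d := Real.sqrt (Δ4 c K w φ) with hdd
    set S := Real.sqrt (2*K) with hS
    have S0 : 0 < S := Real.sqrt_pos.2 (by linarith)
    have S2 : S^2 = 2*K := Real.sq_sqrt (by linarith)
    have d2 : d^2 = Δ4 c K w φ := Real.sq_sqrt (Δ4_nonneg _ _ _ _)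
    have L2 : MemLp (wgt c w φ) 2 (volume.restrict (Icc (-K) K)) :=
      MemLp.of_bound (wgt_meas hwm hφ c).aestronglyMeasurable _ ((wgt_le hw hfin).mono fun t h => by
        rw [Real.norm_of_nonneg (wgt_nonneg _ _ _ t)]; exact h)
    have i1 : Integrable (wgt c w φ) (volume.restrict (Icc (-K) K)) := L2.integrable (by norm_num)
    have i2 : Integrable (fun t => S/(2*d) * wgt c w φ t^2) (volume.restrict (Icc (-K) K)) := L2.integrable_sq.const_mul _
    have i3 : Integrable (fun _ : ℝ => d/(2*S)) (volume.restrict (Icc (-K) K)) := integrable_const _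
    have b := integral_mono i1 (i3.add i2) (fun t => by
      have h1 : d/(2*S) + S/(2*d) * wgt c w φ t^2 - wgt c w φ t = (d - S * wgt c w φ t)^2/(2*S*d) := by field_simp; ring
      have h2 : 0 ≤ (d - S * wgt c w φ t)^2/(2*S*d) := by positivity
      simp only [Pi.add_apply]
      linarith)
    have e : ∫ t in Icc (-K) K, (d/(2*S) + S/(2*d) * wgt c w φ t^2) = S * d := by
      rw [integral_add i3 i2, integral_const_mul, wgt_sq, ← d2]
      simp
      rw [max_eq_left (by linarith)]
      have : K + K = S^2 := by rw [S2]; ring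
      rw [this]; field_simp; ring
    exact b.trans (le_of_eq e)
  i2 := by
    rw [wgt_sq, Real.sq_sqrt (Δ4_nonneg _ _ _ _)]

end PartB6
section PartC1

variable {E T : Type*} [MeasurableSpace E] [MeasurableSpace T]
variable {lam : Measure T} [IsFiniteMeasure lam] {om : T → ℝ}

/-- weighted real inner product -/
def ip (lam : Measure T) (om : T → ℝ) (a b : T → ℂ) : ℝ :=
  (∫ t, a t * (starRingEnd ℂ) (b t) * (om t : ℂ) ∂lam).re

/-- bounded measurable -/
def BM (a : T → ℂ) : Prop := Measurable a ∧ ∃ C : ℝ, ∀ t, ‖a t‖ ≤ C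

lemma BM.add {a b : T → ℂ} (ha : BM a) (hb : BM b) : BM (fun t => a t + b t) := by
  obtain ⟨am, C, hC⟩ := ha
  obtain ⟨bm, D, hD⟩ := hb
  exact ⟨am.add bm, C + D, fun t => (norm_add_le _ _).trans (add_le_add (hC t) (hD t))⟩

lemma BM.sub {a b : T → ℂ} (ha : BM a) (hb : BM b) : BM (fun t => a t - b t) := by
  obtain ⟨am, C, hC⟩ := ha
  obtain ⟨bm, D, hD⟩ := hb
  exact ⟨am.sub bm, C + D, fun t => (norm_sub_le _ _).trans (add_le_add (hC t) (hD t))⟩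

lemma ip_int (ho : Integrable om lam) {a b : T → ℂ} (ha : BM a) (hb : BM b) :
    Integrable (fun t => a t * (starRingEnd ℂ) (b t) * (om t : ℂ)) lam := by
  obtain ⟨am, C, hC⟩ := ha
  obtain ⟨bm, D, hD⟩ := hb
  have h1 : Integrable (fun t => (starRingEnd ℂ) (b t) * (om t : ℂ)) lam :=
    VHyp.bdInt (VHyp.conj_meas.comp bm) (C := D) (fun t => by simpa using hD t) ho.ofReal
  have h2 := VHyp.bdInt am hC h1
  exact h2.congr (Eventually.of_forall fun t => by simp only [mul_assoc])

lemma ip_sym (a b : T → ℂ) : ip lam om a b = ip lam om b a := by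
  unfold ip
  rw [← Complex.conj_re, ← integral_conj]
  congr 2; ext t; simp only [map_mul, Complex.conj_conj, Complex.conj_ofReal]; ring

lemma ip_add (ho : Integrable om lam) {a b q : T → ℂ} (ha : BM a) (hb : BM b) (hq : BM q) :
    ip lam om (fun t => a t + b t) q = ip lam om a q + ip lam om b q := by
  unfold ip
  rw [← Complex.add_re, ← integral_add (ip_int ho ha hq) (ip_int ho hb hq)]
  congr 2; ext t; ring

lemma ip_sub (ho : Integrable om lam) {a b q : T → ℂ} (ha : BM a) (hb : BM b) (hq : BM q) :
    ip lam om (fun t => a t - b t) q = ip lam om a q - ip lam om b q := by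
  unfold ip
  rw [← Complex.sub_re, ← integral_sub (ip_int ho ha hq) (ip_int ho hb hq)]
  congr 2; ext t; ring

lemma ip_self (a : T → ℂ) : ip lam om a a = ∫ t, ‖a t‖^2 * om t ∂lam := by
  unfold ip
  have e : ∀ t, a t * (starRingEnd ℂ) (a t) * (om t : ℂ) = ((‖a t‖^2 * om t : ℝ) : ℂ) := fun t => by
    rw [Complex.mul_conj, Complex.normSq_eq_norm_sq]; push_cast; ring
  simp_rw [e]
  rw [integral_complex_ofReal, Complex.ofReal_re]

lemma off_sum {n : ℕ} (F : Fin n → Fin n → ℝ) :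
    (∑ j, ∑ l, if j ≠ l then F j l else 0) = ∑ j, ∑ l, F j l - ∑ j, F j j := by
  rw [← Finset.sum_sub_distrib]
  refine Finset.sum_congr rfl fun j _ => ?_
  have : ∀ l, (if j ≠ l then F j l else 0) = F j l - (if j = l then F j l else 0) := fun l => by
    by_cases h : j = l <;> simp [h]
  simp_rw [this]
  rw [Finset.sum_sub_distrib]
  simp

variable {μ : Measure E} [IsProbabilityMeasure μ] {v : E → T → ℂ} {r : E → ℝ} {kap V W e S d : ℝ}

lemma decomp (H : VHyp μ lam v r kap V W) (w : VHyp.WHyp lam om e S d) {m0 : T → ℂ} (h0 : BM m0)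
    {n : ℕ} (hn : 2 ≤ n) (y : Fin n → E) :
    ((n:ℝ) * ((n:ℝ) - 1))⁻¹ * (∑ j, ∑ l, if j ≠ l then ip lam om (v (y j)) (v (y l)) else 0)
      - 2 * ((n:ℝ)⁻¹ * ∑ j, ip lam om (v (y j)) m0) + ip lam om m0 m0
    = ((n:ℝ) * ((n:ℝ) - 1))⁻¹ * (2 * acc (fun m y x => ∑ j : Fin m, VHyp.hh μ lam v om (y j) x) n y)
      + 2 * ((n:ℝ)⁻¹ * ∑ j, VHyp.ps μ lam v om (fun t => VHyp.mm μ v t - m0 t) (y j))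
      + ip lam om (fun t => VHyp.mm μ v t - m0 t) (fun t => VHyp.mm μ v t - m0 t) := by
  have ho := VHyp.omI w
  set m := VHyp.mm μ v with hm
  have bm : BM m := ⟨H.mmm, _, H.mb⟩
  have bt : ∀ x, BM (fun t => VHyp.vt μ v x t) := fun x => ⟨H.vty x, _, H.vtb x⟩
  have bd : BM (fun t => m t - m0 t) := bm.sub h0
  have ev : ∀ x, v x = fun t => VHyp.vt μ v x t + m t := fun x => by ext t; simp [VHyp.vt, hm]
  have eh : ∀ x z, VHyp.hh μ lam v om x z = ip lam om (fun t => VHyp.vt μ v x t) (fun t => VHyp.vt μ v z t) := fun x z => rfl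
  have ep : ∀ q x, VHyp.ps μ lam v om q x = ip lam om (fun t => VHyp.vt μ v x t) q := fun q x => rfl
  have e1 : ∀ x z, ip lam om (v x) (v z) = VHyp.hh μ lam v om x z + VHyp.ps μ lam v om m x
      + VHyp.ps μ lam v om m z + ip lam om m m := fun x z => by
    have bz := (bt z).add bm
    rw [ev x, ev z, ip_add ho (bt x) bm bz, ip_sym _ (fun t => VHyp.vt μ v z t + m t), ip_add ho (bt z) bm (bt x),
      ip_sym m (fun t => VHyp.vt μ v z t + m t), ip_add ho (bt z) bm bm, eh, ep, ep,
      ip_sym (fun t => VHyp.vt μ v z t) (fun t => VHyp.vt μ v x t), ip_sym m (fun t => VHyp.vt μ v x t)]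
    ring
  have e2 : ∀ x, ip lam om (v x) m0 = VHyp.ps μ lam v om m0 x + ip lam om m m0 := fun x => by
    rw [ev x, ip_add ho (bt x) bm h0, ep]
  have e3 : ∀ x, VHyp.ps μ lam v om (fun t => m t - m0 t) x = VHyp.ps μ lam v om m x - VHyp.ps μ lam v om m0 x := fun x => by
    rw [ep, ip_sym, ip_sub ho bm h0 (bt x), ep, ep, ip_sym m, ip_sym m0]
  have e4 : ip lam om (fun t => m t - m0 t) (fun t => m t - m0 t) = ip lam om m m - 2 * ip lam om m m0 + ip lam om m0 m0 := by
    rw [ip_sub ho bm h0 bd, ip_sym m, ip_sym m0, ip_sub ho bm h0 bm, ip_sub ho bm h0 h0, ip_sym m0 m]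
    ring
  have sa := sum_sum_eq_acc (VHyp.hh μ lam v om) (fun x z => VHyp.hh_sym x z) n y
  rw [e4, off_sum]
  simp_rw [e1, e2, e3]
  simp only [Finset.sum_add_distrib, Finset.sum_sub_distrib, Finset.sum_const, Finset.card_univ, Fintype.card_fin, nsmul_eq_mul, ← Finset.mul_sum]
  rw [sa]
  have n0 : (n:ℝ) ≠ 0 := by positivity
  have n1 : (n:ℝ) - 1 ≠ 0 := by
    have : (2:ℝ) ≤ n := by exact_mod_cast hn
    linarith
  field_simp
  ring

/-- scalar conclusion -/
lemma scal {q κ e β τ N G x U : ℝ} (hβ : 0 < β) (hN : 0 < N) (hκ : 0 ≤ κ) (he : 0 ≤ e) (hq : 0 ≤ q)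
    (hx : |x| ≤ 2 * Real.sqrt (κ * e * q / (N * β)))
    (hs : 2 * τ + 2 * G + 16 * (κ * e / (N * β)) ≤ q) (hlt : U + 2 * x + q < τ) : U ≤ - G := by
  set s := Real.sqrt (κ * e * q / (N * β)) with hsd
  have s2 : s^2 = q * (κ * e / (N * β)) := by rw [hsd, Real.sq_sqrt (by positivity)]; ring
  set a := κ * e / (N * β) with ha
  have a0 : 0 ≤ a := by rw [ha]; positivity
  have s0 : 0 ≤ s := Real.sqrt_nonneg _
  have h1 : 4 * s ≤ q / 2 + 8 * a := by
    refine abs_le_of_sq_le_sq' ?_ (by positivity) |>.2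
    nlinarith [sq_nonneg (q/2 - 8 * a)]
  have := (abs_le.1 hx).1
  linarith
end PartC1
section PartC2

lemma mellin_sub {c : ℝ} {f f₀ : ℝ → ℝ} (hf : regD c f) (hf₀ : regD c f₀) (t : ℝ) :
    mellinT c (fun x => f x - f₀ x) t = mellinT c f t - mellinT c f₀ t := by
  have key : ∀ {h : ℝ → ℝ}, regD c h → IntegrableOn (fun x => cpw c t x * (h x : ℂ)) (Ioi 0) := fun {h} hh => by
    have m1 : AEStronglyMeasurable (fun x : ℝ => cpw c t x) (volume.restrict (Ioi 0)) := by
      have vm : Measurable (fun y => vv c y t) := (vv_meas c).comp measurable_prodMk_right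
      refine vm.aestronglyMeasurable.congr ?_
      filter_upwards [ae_restrict_mem measurableSet_Ioi] with x hx
      have hx : 0 < x := hx
      simp [vv, hx]
    have m2 : AEStronglyMeasurable (fun x : ℝ => (h x : ℂ)) (volume.restrict (Ioi 0)) :=
      Complex.continuous_ofReal.comp_aestronglyMeasurable hh.1.2.2.1.aestronglyMeasurable
    refine Integrable.mono' hh.2.1 (m1.mul m2) ?_
    filter_upwards [ae_restrict_mem measurableSet_Ioi] with x hx
    have hx : 0 < x := hx
    have e : cpw c t x = vv c x t := by simp [vv, hx]
    have e2 : ra (c-1) x = x^(c-1) := by simp [ra, hx]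
    rw [norm_mul, e, vv_norm, e2, Complex.norm_real, Real.norm_eq_abs, mul_comm]
  unfold mellinT
  rw [← integral_sub (key hf) (key hf₀)]
  congr 1; ext x; push_cast; ring

lemma qk2_ip {c K : ℝ} {w φ h : ℝ → ℝ} (hM : ∀ t, mellinT c φ t ≠ 0) {m : ℝ → ℂ}
    (hm : ∀ t, m t = mellinT c h t * mellinT c φ t) :
    qk2 c K w h = ip (volume.restrict (Icc (-K) K)) (wgt c w φ) m m := by
  rw [ip_self]
  unfold qk2 wgt
  congr 1; ext t
  have : ‖mellinT c φ t‖ ≠ 0 := norm_ne_zero_iff.2 (hM t)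
  rw [hm, norm_mul]
  field_simp

lemma qhat_eq {Ω : Type*} [MeasurableSpace Ω] {c K : ℝ} {w φ f₀ : ℝ → ℝ} (hM : ∀ t, mellinT c φ t ≠ 0)
    (hφ : IsDensity φ) (hf₀ : IsDensity f₀) {n : ℕ} (Y : Fin n → Ω → ℝ) (ω : Ω) (hp : ∀ j, 0 < Y j ω) :
    qhat c K w φ f₀ Y ω =
    ((n:ℝ) * ((n:ℝ) - 1))⁻¹ * (∑ j, ∑ l, if j ≠ l then ip (volume.restrict (Icc (-K) K)) (wgt c w φ) (vv c (Y j ω)) (vv c (Y l ω)) else 0)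
      - 2 * ((n:ℝ)⁻¹ * ∑ j, ip (volume.restrict (Icc (-K) K)) (wgt c w φ) (vv c (Y j ω)) (mellinT c (mconv f₀ φ)))
      + ip (volume.restrict (Icc (-K) K)) (wgt c w φ) (mellinT c (mconv f₀ φ)) (mellinT c (mconv f₀ φ)) := by
  unfold qhat
  rw [qk2_ip hM (mellin_mconv hf₀ hφ c)]
  congr 1
  have ev : ∀ j t, cpw c t (Y j ω) = vv c (Y j ω) t := fun j t => by simp [vv, hp j]
  have e1 : ((n : ℂ) * ((n : ℂ) - 1))⁻¹ = ((((n:ℝ) * ((n:ℝ) - 1))⁻¹ : ℝ) : ℂ) := by push_cast; ring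
  have e2 : (n : ℂ)⁻¹ = (((n:ℝ)⁻¹ : ℝ) : ℂ) := by push_cast; ring
  have e3 : (2:ℂ) = ((2:ℝ) : ℂ) := by norm_num
  unfold That Shat
  simp_rw [ev, ← vv_conj]
  rw [e1, e2, e3, Complex.sub_re, Complex.re_ofReal_mul, Complex.re_ofReal_mul, Complex.re_ofReal_mul, Complex.re_sum, Complex.re_sum]
  simp_rw [Complex.re_sum, apply_ite Complex.re, Complex.zero_re]
  rfl

lemma mconv_BM {c : ℝ} {f φ : ℝ → ℝ} (hf : regD c f) (hφ : regD c φ) : BM (mellinT c (mconv f φ)) := by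
  have e : mellinT c (mconv f φ) = fun t => mellinT c f t * mellinT c φ t := by
    ext t; exact mellin_mconv hf.1 hφ.1 c t
  rw [e]
  refine ⟨(mellin_meas hf.1 c).mul (mellin_meas hφ.1 c), wnorm1 (c-1) f * wnorm1 (c-1) φ, fun t => ?_⟩
  rw [norm_mul]
  have a := mellin_bdd hf.1 hf.2.1 t
  exact mul_le_mul a (mellin_bdd hφ.1 hφ.2.1 t) (norm_nonneg _) ((norm_nonneg _).trans a)

lemma mm_eq {c : ℝ} {f φ : ℝ → ℝ} (hf : IsDensity f) (hφ : IsDensity φ) :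
    VHyp.mm (dm (mconv f φ)) (vv c) = mellinT c (mconv f φ) := by
  ext t
  rw [mellin_dm (mconv_aem hf.int.aemeasurable hφ.int.aemeasurable) (mconv_nonneg hf.1 hφ.1) (mconv_zero hφ.2.1)]
  rfl

/-- degenerate weights -/
lemma d_zero {c K : ℝ} {w φ h : ℝ → ℝ} (hM : ∀ t, mellinT c φ t ≠ 0) (hwm : Measurable w) (hw : ∀ t, 0 ≤ w t)
    (hφ : IsDensity φ) (hfin : winf c K w φ ≠ ⊤) (h0 : Δ4 c K w φ = 0) : qk2 c K w h = 0 := by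
  have L2 : MemLp (wgt c w φ) 2 (volume.restrict (Icc (-K) K)) :=
      MemLp.of_bound (wgt_meas hwm hφ c).aestronglyMeasurable _ ((wgt_le hw hfin).mono fun t h => by
        rw [Real.norm_of_nonneg (wgt_nonneg _ _ _ t)]; exact h)
  rw [← wgt_sq, integral_eq_zero_iff_of_nonneg (fun t => sq_nonneg _) L2.integrable_sq] at h0
  unfold qk2
  refine integral_eq_zero_of_ae ?_
  filter_upwards [h0] with t ht
  have h1 : wgt c w φ t = 0 := by simpa using ht
  have : ‖mellinT c φ t‖ ^ 2 ≠ 0 := pow_ne_zero _ (norm_ne_zero_iff.2 (hM t))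
  unfold wgt at h1
  rw [div_eq_zero_iff] at h1
  rcases h1 with h1 | h1
  · simp [h1]
  · exact absurd h1 this

lemma e_pos {c K : ℝ} {w φ : ℝ → ℝ} (hw : ∀ t, 0 ≤ w t)
    (hfin : winf c K w φ ≠ ⊤) (hd : 0 < Real.sqrt (Δ4 c K w φ)) : 0 < Real.sqrt (Δinf c K w φ) := by
  refine lt_of_le_of_ne (Real.sqrt_nonneg _) fun h => ?_
  have hle := wgt_le hw hfin
  rw [← h] at hle
  have : Δ4 c K w φ = 0 := by
    rw [← wgt_sq]
    refine integral_eq_zero_of_ae ?_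
    filter_upwards [hle] with t ht
    simp [le_antisymm ht (wgt_nonneg c w φ t)]
  rw [this] at hd
  simp at hd

end PartC2
/-- Proposition 3.2: bound for the quantile of the test statistic `q̂_k²`
under the alternative: if the density `f` of `X` satisfies the separation condition for some
critical value `τ > 0`, then `P(q̂_k² < τ) ≤ β`. -/
theorem quantile_bound_alternative
    {Ω : Type*} [MeasurableSpace Ω] (P : Measure Ω) [IsProbabilityMeasure P]
    (c : ℝ) (w φ f₀ : ℝ → ℝ)
    (hw : IsSymmDensity w) (hφ : regD c φ) (hf₀ : regD c f₀)
    (hMφ : ∀ t, mellinT c φ t ≠ 0)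
    (hwinf : ∀ k : ℝ, 0 < k → winf c k w φ ≠ ⊤)
    (hφinf : wnormInf (2 * c - 1) φ ≠ ⊤)
    (hφ4 : MemW1 (4 * (c - 1)) φ)
    (hf₀4 : MemW1 (4 * (c - 1)) f₀)
    (β : ℝ) (hβ : β ∈ Ioo (0 : ℝ) 1)
    (n : ℕ) (hn : 2 ≤ n) (k : ℕ) (hk : 1 ≤ k)
    (f : ℝ → ℝ) (hf : regD c f) (hf4 : MemW1 (4 * (c - 1)) f)
    (τ : ℝ) (hτ : 0 < τ)
    (hsep : 2 * τ
        + 2 * (18 * cphi c φ * V2c c f φ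
            + 138986 * (Lq (β / 4) / β) * (Real.sqrt (2 * (k : ℝ)) / (n : ℝ)))
          * Real.sqrt (Lq (β / 4)) * Real.sqrt (Δ4 c (k : ℝ) w φ) / (n : ℝ)
        + 112 * cphi c φ * Vc c f φ * (Lq (β / 4) / β)
            * Real.sqrt (Δinf c (k : ℝ) w φ) / (n : ℝ)
        ≤ qk2 c (k : ℝ) w (fun x => f x - f₀ x))
    (Y : Fin n → Ω → ℝ) (hY : IID P Y (mconv f φ)) :
    P {ω | qhat c (k : ℝ) w φ f₀ Y ω < τ} ≤ ENNReal.ofReal β := by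
  obtain ⟨β0, β1⟩ := hβ
  obtain ⟨hwm, hw0, -, -, -⟩ := hw
  have K0 : (0:ℝ) < k := by exact_mod_cast hk
  have K1 : (1:ℝ) ≤ k := by exact_mod_cast hk
  have N2 : (2:ℝ) ≤ n := by exact_mod_cast hn
  have N0 : (0:ℝ) < n := by linarith
  have hfin := hwinf k K0
  set κ := cphi c φ * Vc c f φ with hκ
  have c1 := cphi_one c φ
  have V1 := Vc_one c f φ
  have W1 := V_sq_le hf.1 hφ.1 hf4 hφ4
  set L := Lq (β/4) with hL
  have eL : L = 1 + Real.log (4/β) := by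
    rw [hL, Lq, show 4/β = (β/4)⁻¹ by rw [inv_div], Real.log_inv]; ring
  have lg : 0 ≤ Real.log (4/β) := Real.log_nonneg (by rw [le_div_iff₀ β0]; linarith)
  have L1 : 1 ≤ L := by linarith
  set l := Real.sqrt L with hl
  have l2 : l^2 = L := Real.sq_sqrt (by linarith)
  have l1 : 1 ≤ l := Real.one_le_sqrt.2 L1
  set S := Real.sqrt (2 * (k:ℝ)) with hS
  have S1 : 1 ≤ S := Real.one_le_sqrt.2 (by linarith)
  set d := Real.sqrt (Δ4 c k w φ) with hd
  set e := Real.sqrt (Δinf c k w φ) with he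
  set q := qk2 c k w (fun x => f x - f₀ x) with hq
  have W0 : 0 < V2c c f φ := lt_of_lt_of_le (by positivity) W1
  have V0 : 0 < Vc c f φ := by linarith
  have cp : 0 < cphi c φ := by linarith
  have d0' : 0 ≤ d := Real.sqrt_nonneg _
  have e0' : 0 ≤ e := Real.sqrt_nonneg _
  have q0 : 0 < q := by
    refine lt_of_lt_of_le ?_ hsep
    positivity
  have d0 : 0 < d := by
    refine Real.sqrt_pos.2 (lt_of_le_of_ne (Δ4_nonneg _ _ _ _) fun h => ?_)
    exact q0.ne' (d_zero hMφ hwm hw0 hφ.1 hfin h.symm)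
  have e0 : 0 < e := e_pos hw0 hfin d0
  have κ0 : 0 < κ := mul_pos cp V0
  set μ := dm (mconv f φ) with hμ
  have : IsProbabilityMeasure μ := dm_mconv_prob hf.1 hφ.1
  set lam := (volume : Measure ℝ).restrict (Icc (-(k:ℝ)) k) with hlam
  have H := toV (c := c) hf.1 hφ.1 hf4 hφ4 hφinf (k:ℝ)
  have Wh := toW (c := c) K0 hwm hw0 hφ.1 hfin d0
  have Kr := VHyp.toKer H Wh e0.le V0.le (by linarith) d0.le
  have U := KerHyp.U_final (l := l) (β := β) n Kr hn c1 V1 W1 S1 d0 e0 β0 β1 l1 (by rw [l2]; linarith)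
  set G := 18 * (cphi c φ * V2c c f φ) * l * d / n + 138986 * (l^3 / β) * (S / n) * d / n
          + 48 * (cphi c φ * Vc c f φ) * (l^2/β) * e / n with hG
  have hs : 2 * τ + 2 * G + 16 * (κ * e / (n * β)) ≤ q := by
    refine le_trans ?_ hsep
    have h3 : l^3 = L * l := by rw [← l2]; ring
    have h4 : κ * e / (n * β) ≤ κ * L * e / (n * β) := by
      gcongr
      exact le_mul_of_one_le_right κ0.le L1
    rw [hG, h3, l2]
    have e1 : 2 * τ + 2 * (18 * cphi c φ * V2c c f φ + 138986 * (L / β) * (S / n)) * l * d / n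
        + 112 * cphi c φ * Vc c f φ * (L / β) * e / n =
        2 * τ + 2 * (18 * (cphi c φ * V2c c f φ) * l * d / n + 138986 * (L * l / β) * (S / n) * d / n
          + 48 * (cphi c φ * Vc c f φ) * (L/β) * e / n) + 16 * (κ * L * e / (n * β)) := by
      rw [hκ]; field_simp; ring
    rw [e1]
    linarith
  have bm0 := mconv_BM hf₀ hφ
  have bm := mconv_BM hf hφ
  set m0 := mellinT c (mconv f₀ φ) with hm0
  have emm := mm_eq (c := c) hf.1 hφ.1
  set D : ℝ → ℂ := fun t => VHyp.mm μ (vv c) t - m0 t with hD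
  have bD : BM D := by rw [hD, hμ, emm]; exact bm.sub bm0
  have eq : q = ip lam (wgt c w φ) D D := by
    refine qk2_ip hMφ fun t => ?_
    rw [mellin_sub hf hf₀, hD, hμ, emm, hm0]
    simp only [mellin_mconv hf.1 hφ.1, mellin_mconv hf₀.1 hφ.1]
    ring
  obtain ⟨Dm, C, hC⟩ := bD
  obtain ⟨pm, pL, p0, p2⟩ := VHyp.ps_all H Wh e0.le Dm hC
  set ψ := VHyp.ps μ lam (vv c) (wgt c w φ) D with hψ
  rw [← ip_self, ← eq] at p2
  obtain ⟨sL, s2⟩ := sum_iid μ ψ pm pL p0 n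
  set s := Real.sqrt (κ * e * q / (n * β)) with hsd
  have s0 : 0 < s := Real.sqrt_pos.2 (by positivity)
  have ss : s^2 = κ * e * q / (n * β) := Real.sq_sqrt (by positivity)
  have Ch := cheb (t := n * (2 * s)) (K := n * (κ * e * q)) sL (by positivity)
    (by rw [s2]; exact mul_le_mul_of_nonneg_left p2 N0.le)
  have eC : n * (κ * e * q) / (n * (2 * s))^2 = β / 4 := by
    rw [mul_pow, mul_pow, ss]; field_simp; norm_num
  rw [eC] at Ch
  -- transfer
  have Ym : ∀ j, AEMeasurable (Y j) P := fun j => (hY.2 j).1.aemeasurable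
  have law : P.map (fun ω j => Y j ω) = nuP μ n := by
    rw [(ProbabilityTheory.iIndepFun_iff_map_fun_eq_pi_map Ym).1 hY.1]
    congr 1; ext1 j; exact (hY.2 j).2
  have pos : ∀ᵐ ω ∂P, ∀ j, 0 < Y j ω := by
    rw [ae_all_iff]
    intro j
    have h1 := dm_pos (mconv_zero (f := f) hφ.1.2.1)
    have h2 : P.map (Y j) = dm (mconv f φ) := (hY.2 j).2
    rw [← h2] at h1
    exact ae_of_ae_map (Ym j) h1
  set A : Set (Fin n → ℝ) := {y | acc (fun m y x => ∑ j : Fin m, VHyp.hh μ lam (vv c) (wgt c w φ) (y j) x) n y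
      ≤ -((n:ℝ) * (n-1) / 2 * G)} with hA
  set B : Set (Fin n → ℝ) := {y | n * (2 * s) < |∑ j, ψ (y j)|} with hB
  have sub : ∀ᵐ ω ∂P, ω ∈ {ω | qhat c (k : ℝ) w φ f₀ Y ω < τ} → ω ∈ (fun ω j => Y j ω) ⁻¹' (A ∪ B) := by
    filter_upwards [pos] with ω hp hlt
    by_contra hno
    simp only [mem_preimage, mem_union, not_or] at hno
    obtain ⟨nA, nB⟩ := hno
    have hlt : qhat c (k : ℝ) w φ f₀ Y ω < τ := hlt
    have nB : |∑ j, ψ (Y j ω)| ≤ n * (2 * s) := not_lt.1 nB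
    apply nA
    rw [qhat_eq hMφ hφ.1 hf₀.1 Y ω hp, decomp H Wh bm0 hn] at hlt
    have hx : |(n:ℝ)⁻¹ * ∑ j, ψ (Y j ω)| ≤ 2 * s := by
      rw [abs_mul, abs_of_pos (inv_pos.2 N0), inv_mul_le_iff₀ N0]; exact nB
    have fin := scal β0 N0 κ0.le e0.le q0.le hx hs (by rw [eq]; exact hlt)
    change acc _ n _ ≤ _
    have n1 : 0 < (n:ℝ) * (n - 1) := mul_pos N0 (by linarith)
    rw [inv_mul_le_iff₀ n1] at fin
    linarith
  calc P {ω | qhat c (k : ℝ) w φ f₀ Y ω < τ} ≤ P ((fun ω j => Y j ω) ⁻¹' (A ∪ B)) := measure_mono_ae sub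
    _ ≤ P.map (fun ω j => Y j ω) (A ∪ B) := Measure.le_map_apply (aemeasurable_pi_lambda _ Ym) _
    _ = nuP μ n (A ∪ B) := by rw [law]
    _ ≤ nuP μ n A + nuP μ n B := measure_union_le _ _
    _ ≤ ENNReal.ofReal (3 * β / 4) + ENNReal.ofReal (β / 4) := add_le_add U Ch
    _ = ENNReal.ofReal β := by
        rw [← ENNReal.ofReal_add (by positivity) (by positivity)]; congr 1; ring

end MultErr
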